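/- Let n ≥ 2 be an integer. Let (E_j) be a sequence of Lebesgue-measurable subsets of ℝⁿ with 0 < vol(E_j) < ∞ satisfying lim_{j→∞} H^{n−1}(frontier(E_j)) / vol(E_j)^{(n−1)/n} = c_n. Then there exists a sequence of closed balls W_j ⊆ ℝⁿ (of suitable centers and radii) such that vol(E_j Δ W_j) / vol(E_j) → 0 as j → ∞, where Δ denotes the symmetric difference of sets. -/

import Mathlib

namespace Iso
open MeasureTheory Filter Set Metric
open scoped ENNReal NNReal Topology

abbrev V (n : ℕ) := EuclideanSpace ℝ (Fin n)

theorem exists_split (d : ℕ) (θ : V (d+1)) (hθ : ‖θ‖ = 1) :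
    ∃ L : (ℝ × V d) ≃L[ℝ] V (d+1), (∀ t y, ‖L (t,y)‖^2 = t^2+‖y‖^2) ∧
      MeasurePreserving L volume volume ∧ L (1,0) = θ ∧ (∀ t y, inner ℝ θ (L (t,y)) = t) := by
  have hfr : Module.finrank ℝ (WithLp 2 (ℝ × V d)) = d+1 := by
    rw [LinearEquiv.finrank_eq (WithLp.linearEquiv 2 ℝ (ℝ × V d))]
    simp [add_comm]
  let e0 : WithLp 2 (ℝ × V d) ≃ₗᵢ[ℝ] V (d+1) :=
    ((stdOrthonormalBasis ℝ (WithLp 2 (ℝ × V d))).reindex (finCongr hfr)).repr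
  let v : V (d+1) := e0 (WithLp.toLp 2 (1, 0))
  have hv : ‖v‖ = ‖θ‖ := by
    rw [hθ, LinearIsometryEquiv.norm_map]
    simp [WithLp.prod_norm_eq_of_L2]
  let e : WithLp 2 (ℝ × V d) ≃ₗᵢ[ℝ] V (d+1) := e0.trans (Submodule.reflection (ℝ ∙ (v - θ))ᗮ)
  have he1 : e (WithLp.toLp 2 (1, 0)) = θ := Submodule.reflection_sub hv
  let L : (ℝ × V d) ≃L[ℝ] V (d+1) :=
    (WithLp.prodContinuousLinearEquiv 2 ℝ ℝ (V d)).symm.trans e.toContinuousLinearEquiv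
  have hL : ∀ x, L x = e (WithLp.toLp 2 x) := fun x => rfl
  refine ⟨L, ?_, ?_, he1, ?_⟩
  · intro t y
    rw [hL, LinearIsometryEquiv.norm_map, WithLp.prod_norm_sq_eq_of_L2]
    simp
  · exact e.measurePreserving.comp (WithLp.volume_preserving_toLp ℝ (V d))
  · intro t y
    rw [hL, ← he1, LinearIsometryEquiv.inner_map_map]
    simp

end Iso

namespace Iso
open MeasureTheory Filter Set Metric
open scoped ENNReal NNReal Topology

section param
variable {d : ℕ} {g : ℝ × V d → ℝ}

theorem slice_cont (hg : Continuous g) (hc : HasCompactSupport g) :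
    Continuous (fun t => ∫ y, g (t, y)) := by
  have hs : IsCompact (Prod.snd '' tsupport g) := hc.isCompact.image continuous_snd
  have := continuous_parametric_integral_of_continuous (μ := (volume : Measure (V d)))
    (f := fun t y => g (t,y)) (by simpa [Function.uncurry_def] using hg) hs
  convert this using 2 with t
  symm
  apply setIntegral_eq_integral_of_forall_compl_eq_zero
  intro y hy
  by_contra h
  exact hy ⟨(t,y), subset_tsupport _ h, rfl⟩

theorem slice_supp (hc : HasCompactSupport g) :
    HasCompactSupport (fun t => ∫ y, g (t, y)) := by
  refine HasCompactSupport.intro (hc.isCompact.image continuous_fst) ?_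
  intro t ht
  have : ∀ y, g (t,y) = 0 := by
    intro y
    by_contra h
    exact ht ⟨(t,y), subset_tsupport _ h, rfl⟩
  simp [this]

theorem line_supp (hc : HasCompactSupport g) (y : V d) : HasCompactSupport (fun t => g (t,y)) := by
  refine HasCompactSupport.intro (hc.isCompact.image continuous_fst) ?_
  intro t ht
  by_contra h
  exact ht ⟨(t,y), subset_tsupport _ h, rfl⟩

theorem fib_supp (hc : HasCompactSupport g) (t : ℝ) : HasCompactSupport (fun y => g (t,y)) := by
  refine HasCompactSupport.intro (hc.isCompact.image continuous_snd) ?_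
  intro y hy
  by_contra h
  exact hy ⟨(t,y), subset_tsupport _ h, rfl⟩
end param

section split
variable {d : ℕ} {L : (ℝ × V d) ≃L[ℝ] V (d+1)}

theorem supp_L {X : Type*} [Zero X] {u : V (d+1) → X} (hc : HasCompactSupport u) :
    HasCompactSupport (fun p => u (L p)) :=
  hc.comp_homeomorph L.toHomeomorph

theorem mp_integral (hmp : MeasurePreserving L volume volume) (f : V (d+1) → ℝ) :
    ∫ x, f x = ∫ p : ℝ × V d, f (L p) :=
  (hmp.integral_comp L.toHomeomorph.measurableEmbedding f).symm

theorem fderiv_slice {u : V (d+1) → ℝ} (hu : ContDiff ℝ 1 u) (t : ℝ) (y : V d) :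
    fderiv ℝ (fun y => u (L (t,y))) y =
      (fderiv ℝ u (L (t,y))).comp ((L : (ℝ × V d) →L[ℝ] V (d+1)).comp
        (ContinuousLinearMap.inr ℝ ℝ (V d))) := by
  have h1 : HasFDerivAt u (fderiv ℝ u (L (t,y))) (L (t,y)) :=
    (hu.differentiable (by norm_num) _).hasFDerivAt
  have h2 : HasFDerivAt (fun y : V d => (t, y)) (ContinuousLinearMap.inr ℝ ℝ (V d)) y :=
    hasFDerivAt_prodMk_right t y
  have h3 : HasFDerivAt (fun y : V d => L (t, y))
    ((L : (ℝ × V d) →L[ℝ] V (d+1)).comp (ContinuousLinearMap.inr ℝ ℝ (V d))) y :=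
    (L : (ℝ × V d) →L[ℝ] V (d+1)).hasFDerivAt.comp y h2
  exact (h1.comp y h3).fderiv

theorem deriv_slice {u : V (d+1) → ℝ} (hu : ContDiff ℝ 1 u) (t : ℝ) (y : V d) :
    HasDerivAt (fun t => u (L (t,y))) (fderiv ℝ u (L (t,y)) (L (1,0))) t := by
  have h1 : HasFDerivAt u (fderiv ℝ u (L (t,y))) (L (t,y)) :=
    (hu.differentiable (by norm_num) _).hasFDerivAt
  have h2 : HasDerivAt (fun t : ℝ => (t, y)) ((1:ℝ), (0 : V d)) t :=
    (hasDerivAt_id t).prodMk (hasDerivAt_const t y)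
  have h3 : HasDerivAt (fun t : ℝ => L (t, y)) (L (1,0)) t :=
    (L : (ℝ × V d) →L[ℝ] V (d+1)).hasFDerivAt.comp_hasDerivAt t h2
  exact h1.comp_hasDerivAt t h3

theorem norm_bound (hn : ∀ t y, ‖L (t,y)‖^2 = t^2+‖y‖^2) (l : V (d+1) →L[ℝ] ℝ) (g : ℝ)
    (hg : |g| ≤ 1) :
    -(g * l (L (1,0))) + √(1-g^2) * ‖l.comp ((L : (ℝ × V d) →L[ℝ] V (d+1)).comp
        (ContinuousLinearMap.inr ℝ ℝ (V d)))‖ ≤ ‖l‖ := by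
  have hg2 : 0 ≤ 1 - g^2 := by
    have := sq_le_one_iff_abs_le_one g |>.2 hg
    linarith
  set β := l.comp ((L : (ℝ × V d) →L[ℝ] V (d+1)).comp (ContinuousLinearMap.inr ℝ ℝ (V d))) with hβ
  have key : ∀ z : V d, ‖z‖ ≤ 1 → -(g * l (L (1,0))) + √(1-g^2) * β z ≤ ‖l‖ := by
    intro z hz
    have h1 : -(g * l (L (1,0))) + √(1-g^2) * β z = l (L (-g, √(1-g^2) • z)) := by
      have : ((-g, √(1-g^2) • z) : ℝ × V d) = (-g) • ((1:ℝ), (0:V d)) + √(1-g^2) • ((0:ℝ), z) := by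
        ext <;> simp
      rw [this, map_add, map_add, map_smul, map_smul, map_smul, map_smul]
      simp [hβ]
    rw [h1]
    have h2 : ‖L (-g, √(1-g^2) • z)‖ ≤ 1 := by
      rw [← sq_le_one_iff₀ (norm_nonneg _), hn, norm_smul, mul_pow, Real.norm_eq_abs, sq_abs,
        Real.sq_sqrt hg2]
      nlinarith [norm_nonneg z, pow_le_one₀ (norm_nonneg z) hz (n := 2)]
    calc _ ≤ ‖l (L (-g, √(1-g^2) • z))‖ := le_abs_self _
      _ ≤ ‖l‖ * ‖L (-g, √(1-g^2) • z)‖ := l.le_opNorm _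
      _ ≤ ‖l‖ * 1 := by gcongr
      _ = _ := mul_one _
  rcases (Real.sqrt_nonneg (1-g^2)).eq_or_lt with h0 | h0
  · have := key 0 (by simp)
    rw [← h0] at this ⊢
    simpa using this
  · have : ‖β‖ ≤ (‖l‖ + g * l (L (1,0))) / √(1-g^2) := by
      have hb0 : 0 ≤ (‖l‖ + g * l (L (1,0))) / √(1-g^2) := by
        have := key 0 (by simp)
        apply div_nonneg _ h0.le
        simp at this
        linarith
      refine ContinuousLinearMap.opNorm_le_of_unit_norm hb0 ?_
      intro z hz
      rw [le_div_iff₀ h0, Real.norm_eq_abs]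
      rcases abs_cases (β z) with ⟨h, -⟩ | ⟨h, -⟩
      · have := key z hz.le
        rw [h]; linarith
      · have := key (-z) (by simpa using hz.le)
        rw [map_neg] at this
        rw [h]; linarith
    rw [le_div_iff₀ h0] at this
    linarith

/-- the slice gradient integral -/
noncomputable def sN (L : (ℝ × V d) ≃L[ℝ] V (d+1)) (u : V (d+1) → ℝ) (t : ℝ) : ℝ :=
  ∫ y, ‖fderiv ℝ (fun y => u (L (t,y))) y‖
noncomputable def sA (L : (ℝ × V d) ≃L[ℝ] V (d+1)) (u : V (d+1) → ℝ) (t : ℝ) : ℝ :=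
  ∫ y, u (L (t,y))

theorem sA_cont {u : V (d+1) → ℝ} (hu : Continuous u) (hc : HasCompactSupport u) :
    Continuous (sA L u) :=
  slice_cont (g := fun p => u (L p)) (hu.comp L.continuous) (supp_L hc)
theorem sA_supp {u : V (d+1) → ℝ} (hc : HasCompactSupport u) :
    HasCompactSupport (sA L u) :=
  slice_supp (g := fun p => u (L p)) (supp_L hc)

theorem sA_integral (hmp : MeasurePreserving L volume volume) {u : V (d+1) → ℝ}
    (hu : Continuous u) (hc : HasCompactSupport u) : ∫ t, sA L u t = ∫ x, u x := by
  rw [mp_integral hmp]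
  symm
  exact integral_prod (fun p => u (L p))
    (Continuous.integrable_of_hasCompactSupport (hu.comp L.continuous) (supp_L hc))

theorem sN_eq {u : V (d+1) → ℝ} (hu : ContDiff ℝ 1 u) :
    sN L u = fun t => ∫ y, ‖(fderiv ℝ u (L (t,y))).comp ((L : (ℝ × V d) →L[ℝ] V (d+1)).comp
        (ContinuousLinearMap.inr ℝ ℝ (V d)))‖ := by
  ext t
  simp only [sN, fderiv_slice hu]

theorem gN_cont {u : V (d+1) → ℝ} (hu : ContDiff ℝ 1 u) : Continuous
    (fun p => ‖(fderiv ℝ u (L p)).comp ((L : (ℝ × V d) →L[ℝ] V (d+1)).comp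
        (ContinuousLinearMap.inr ℝ ℝ (V d)))‖) := by
  have := hu.continuous_fderiv (by norm_num)
  exact ((this.comp L.continuous).clm_comp continuous_const).norm

theorem gN_supp {u : V (d+1) → ℝ} (hc : HasCompactSupport u) : HasCompactSupport
    (fun p => ‖(fderiv ℝ u (L p)).comp ((L : (ℝ × V d) →L[ℝ] V (d+1)).comp
        (ContinuousLinearMap.inr ℝ ℝ (V d)))‖) := by
  refine (supp_L (L := L) (u := fderiv ℝ u) (hc.fderiv ℝ)).mono' ?_
  apply subset_trans _ (subset_tsupport _)
  intro p hp h
  apply hp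
  simp only at h
  simp [h]

theorem sN_cont {u : V (d+1) → ℝ} (hu : ContDiff ℝ 1 u) (hc : HasCompactSupport u) :
    Continuous (sN L u) := by
  rw [sN_eq hu]
  have h := slice_cont (gN_cont (L := L) hu) (gN_supp (L := L) hc)
  exact h
theorem sN_supp {u : V (d+1) → ℝ} (hu : ContDiff ℝ 1 u) (hc : HasCompactSupport u) :
    HasCompactSupport (sN L u) := by
  rw [sN_eq hu]
  have h := slice_supp (gN_supp (L := L) hc)
  exact h

theorem slice_ineq (hn : ∀ t y, ‖L (t,y)‖^2 = t^2+‖y‖^2) (hmp : MeasurePreserving L volume volume)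
    {u : V (d+1) → ℝ} (hu : ContDiff ℝ 1 u) (hc : HasCompactSupport u)
    {G : ℝ → ℝ} (hG : ContDiff ℝ 1 G) (hG1 : ∀ t, |G t| ≤ 1) :
    ∫ t, (deriv G t * sA L u t + √(1 - G t ^ 2) * sN L u t) ≤ ∫ x, ‖fderiv ℝ u x‖ := by
  have hGc : Continuous G := hG.continuous
  have hG'c : Continuous (deriv G) := hG.continuous_deriv (by norm_num)
  have hfc := hu.continuous_fderiv (by norm_num)
  have huc := hu.continuous
  let g1 : ℝ × V d → ℝ := fun p => G p.1 * fderiv ℝ u (L p) (L (1,0))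
  let g1' : ℝ × V d → ℝ := fun p => deriv G p.1 * u (L p)
  let g2 : ℝ × V d → ℝ := fun p => √(1 - G p.1 ^ 2) *
    ‖(fderiv ℝ u (L p)).comp ((L : (ℝ × V d) →L[ℝ] V (d+1)).comp (ContinuousLinearMap.inr ℝ ℝ (V d)))‖
  have c1 : Continuous g1 := (hGc.comp continuous_fst).mul
    ((hfc.comp L.continuous).clm_apply continuous_const)
  have c1' : Continuous g1' := (hG'c.comp continuous_fst).mul (huc.comp L.continuous)
  have c2 : Continuous g2 := (by fun_prop : Continuous fun p : ℝ × V d => √(1 - G p.1 ^ 2)).mul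
    (gN_cont hu)
  have sL : HasCompactSupport (fun p => u (L p)) := supp_L (L := L) (u := u) hc
  have sL1 : HasCompactSupport (fun p => fderiv ℝ u (L p) (L (1,0))) :=
    supp_L (L := L) (u := fun x => fderiv ℝ u x (L (1,0))) (hc.fderiv_apply ℝ (L (1,0)))
  have sL2 : HasCompactSupport (fun p => fderiv ℝ u (L p)) :=
    supp_L (L := L) (u := fderiv ℝ u) (hc.fderiv ℝ)
  have s1 : HasCompactSupport g1 := HasCompactSupport.mul_left sL1
  have s1' : HasCompactSupport g1' := HasCompactSupport.mul_left sL
  have s2 : HasCompactSupport g2 := HasCompactSupport.mul_left (gN_supp hc)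
  have i1 := c1.integrable_of_hasCompactSupport s1 (μ := volume)
  have i1' := c1'.integrable_of_hasCompactSupport s1' (μ := volume)
  have i2 := c2.integrable_of_hasCompactSupport s2 (μ := volume)
  have e1 : ∫ p, g1 p = - ∫ p, g1' p := by
    have : ∫ p, g1 p = ∫ y, ∫ t, g1 (t,y) := integral_prod_symm g1 i1
    rw [this]
    have : ∫ p, g1' p = ∫ y, ∫ t, g1' (t,y) := integral_prod_symm g1' i1'
    rw [this, ← integral_neg]
    congr 1
    ext y
    refine integral_mul_deriv_eq_deriv_mul_of_integrable (u := G) (v := fun t => u (L (t,y)))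
      (u' := deriv G) (v' := fun t => fderiv ℝ u (L (t,y)) (L (1,0))) ?_ ?_ ?_ ?_ ?_
    · intro x _
      exact (hG.differentiable (by norm_num) x).hasDerivAt
    · intro x _
      exact deriv_slice hu x y
    · exact Continuous.integrable_of_hasCompactSupport (c1.comp (by fun_prop : Continuous fun t : ℝ => (t,y)))
        (line_supp s1 y)
    · exact Continuous.integrable_of_hasCompactSupport (c1'.comp (by fun_prop : Continuous fun t : ℝ => (t,y)))
        (line_supp s1' y)
    · have hcu : Continuous fun t : ℝ => u (L (t,y)) :=
        huc.comp (L.continuous.comp (by fun_prop : Continuous fun t : ℝ => (t,y)))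
      exact Continuous.integrable_of_hasCompactSupport (hGc.mul hcu)
        (HasCompactSupport.mul_left (line_supp (g := fun p => u (L p)) sL y))
  have e2 : ∫ t, (deriv G t * sA L u t + √(1 - G t ^ 2) * sN L u t) = ∫ p, (-g1 p + g2 p) := by
    have i1n : Integrable (fun p => -g1 p) volume := i1.neg
    rw [integral_add i1n i2, integral_neg, e1, neg_neg]
    have f1 : ∫ p, g1' p = ∫ t, ∫ y, g1' (t,y) := integral_prod g1' i1'
    have f2 : ∫ p, g2 p = ∫ t, ∫ y, g2 (t,y) := integral_prod g2 i2
    rw [f1, f2, ← integral_add]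
    · congr 1
      ext t
      simp only [g1', g2, integral_const_mul, sN_eq hu, sA]
    · exact (slice_cont c1' s1').integrable_of_hasCompactSupport (slice_supp s1')
    · exact (slice_cont c2 s2).integrable_of_hasCompactSupport (slice_supp s2)
  rw [e2, mp_integral hmp]
  refine integral_mono (i1.neg.add i2) ?_ ?_
  · have hcu : Continuous (fun p => ‖fderiv ℝ u (L p)‖) := (hfc.comp L.continuous).norm
    exact hcu.integrable_of_hasCompactSupport sL2.norm
  · intro p
    exact norm_bound hn _ _ (hG1 _)
end split
end Iso

namespace Iso
open MeasureTheory Filter Set Metric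
open scoped ENNReal NNReal Topology

noncomputable def om (d : ℕ) : ℝ := (volume (ball (0 : V d) 1)).toReal

theorem om_pos (d : ℕ) : 0 < om d :=
  ENNReal.toReal_pos (measure_ball_pos _ _ one_pos).ne' measure_ball_lt_top.ne

theorem vol_ball {d : ℕ} (hd : 1 ≤ d) (x : V d) {r : ℝ} (hr : 0 ≤ r) :
    volume (ball x r) = ENNReal.ofReal (om d * r ^ d) := by
  have : Nonempty (Fin d) := ⟨⟨0, hd⟩⟩
  rw [Measure.addHaar_ball _ _ hr, mul_comm, ENNReal.ofReal_mul (om_pos d).le, om,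
    ENNReal.ofReal_toReal measure_ball_lt_top.ne]
  simp

noncomputable def bb (d : ℕ) (s : ℝ) : ℝ := om d * √(1 - s^2) ^ d

theorem bb_cont (d : ℕ) : Continuous (bb d) := by unfold bb; fun_prop
theorem bb_nonneg (d : ℕ) (s : ℝ) : 0 ≤ bb d s := by
  unfold bb; have := om_pos d; positivity
theorem bb_pos (d : ℕ) {s : ℝ} (hs : |s| < 1) : 0 < bb d s := by
  unfold bb
  have := om_pos d
  have h2 : 0 < 1 - s^2 := by
    have := (sq_lt_one_iff_abs_lt_one s).2 hs
    linarith
  have := Real.sqrt_pos.2 h2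
  positivity
theorem bb_zero {d : ℕ} (hd : 1 ≤ d) {s : ℝ} (hs : 1 ≤ |s|) : bb d s = 0 := by
  unfold bb
  have h2 : 1 - s^2 ≤ 0 := by
    have := (one_le_sq_iff_one_le_abs s).2 hs
    linarith
  rw [Real.sqrt_eq_zero_of_nonpos h2, zero_pow (by omega), mul_zero]
theorem bb_even (d : ℕ) (s : ℝ) : bb d (-s) = bb d s := by simp [bb]

theorem bb_anti (d : ℕ) {s t : ℝ} (h : |s| ≤ |t|) : bb d t ≤ bb d s := by
  unfold bb
  have := sq_le_sq.2 h
  have := om_pos d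
  gcongr

theorem exists_unit (d : ℕ) : ∃ θ : V (d+1), ‖θ‖ = 1 := ⟨EuclideanSpace.single 0 1, by simp⟩

theorem bb_integral {d : ℕ} (hd : 1 ≤ d) : ∫ s in (-1)..1, bb d s = om (d+1) := by
  obtain ⟨θ, hθ⟩ := exists_unit d
  obtain ⟨L, hn, hmp, -, -⟩ := exists_split d θ hθ
  have h1 : volume (ball (0 : V (d+1)) 1) = ∫⁻ t, ENNReal.ofReal (bb d t) := by
    rw [← hmp.measure_preimage measurableSet_ball.nullMeasurableSet]
    have := Measure.prod_apply (μ := (volume : Measure ℝ)) (ν := (volume : Measure (V d)))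
      (s := L ⁻¹' ball (0 : V (d+1)) 1) (L.continuous.measurable measurableSet_ball)
    refine this.trans ?_
    congr 1
    ext t
    rw [bb, ← vol_ball hd 0 (Real.sqrt_nonneg _)]
    congr 1
    ext y
    simp only [mem_preimage, mem_ball_zero_iff]
    rw [Real.lt_sqrt (norm_nonneg _), ← sq_lt_one_iff₀ (norm_nonneg _), hn]
    constructor <;> intro h <;> linarith
  have h2 : ∫ t, bb d t = om (d+1) := by
    rw [integral_eq_lintegral_of_nonneg_ae (Eventually.of_forall (bb_nonneg d))
      (bb_cont d).aestronglyMeasurable, ← h1, om]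
  rw [← h2, intervalIntegral.integral_of_le (by norm_num)]
  apply setIntegral_eq_integral_of_forall_compl_eq_zero
  intro s hs
  apply bb_zero hd
  by_contra h
  push Not at h
  rw [abs_lt] at h
  exact hs ⟨h.1, h.2.le⟩

noncomputable def BB (d : ℕ) (s : ℝ) : ℝ := ∫ x in (-1)..s, bb d x

theorem BB_deriv (d : ℕ) (s : ℝ) : HasDerivAt (BB d) (bb d s) s :=
  intervalIntegral.integral_hasDerivAt_right ((bb_cont d).intervalIntegrable _ _)
    ((bb_cont d).stronglyMeasurableAtFilter _ _) (bb_cont d).continuousAt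

theorem BB_cont (d : ℕ) : Continuous (BB d) :=
  continuous_iff_continuousAt.2 fun s => (BB_deriv d s).continuousAt

theorem BB_strict (d : ℕ) : StrictMonoOn (BB d) (Icc (-1) 1) := by
  apply strictMonoOn_of_deriv_pos (convex_Icc _ _) (BB_cont d).continuousOn
  intro x hx
  rw [interior_Icc] at hx
  rw [(BB_deriv d x).deriv]
  exact bb_pos d (abs_lt.2 hx)

theorem BB_mono (d : ℕ) : Monotone (BB d) :=
  monotone_of_deriv_nonneg (fun x => (BB_deriv d x).differentiableAt)
    (fun x => by rw [(BB_deriv d x).deriv]; exact bb_nonneg d x)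

theorem BB_neg (d : ℕ) : BB d (-1) = 0 := by simp [BB]
theorem BB_one {d : ℕ} (hd : 1 ≤ d) : BB d 1 = om (d+1) := bb_integral hd

theorem BB_mem {d : ℕ} (hd : 1 ≤ d) {s : ℝ} (hs : s ∈ Ioo (-1:ℝ) 1) :
    BB d s ∈ Ioo 0 (om (d+1)) := by
  constructor
  · rw [← BB_neg d]
    exact BB_strict d ⟨le_rfl, by norm_num⟩ ⟨hs.1.le, hs.2.le⟩ hs.1
  · rw [← BB_one hd]
    exact BB_strict d ⟨hs.1.le, hs.2.le⟩ ⟨by norm_num, le_rfl⟩ hs.2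

theorem exists_Phi {d : ℕ} (hd : 1 ≤ d) : ∃ Φ : ℝ → ℝ, ∀ m ∈ Ioo 0 (om (d+1)),
    Φ m ∈ Ioo (-1:ℝ) 1 ∧ BB d (Φ m) = m ∧ HasDerivAt Φ (bb d (Φ m))⁻¹ m := by
  have h1 : ∀ m ∈ Ioo 0 (om (d+1)), ∃ s ∈ Ioo (-1:ℝ) 1, BB d s = m := by
    intro m hm
    have := intermediate_value_Ioo (by norm_num : (-1:ℝ) ≤ 1) (BB_cont d).continuousOn
    rw [BB_neg, BB_one hd] at this
    exact this hm
  choose! Φ hΦ using h1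
  have hmono : StrictMonoOn Φ (Ioo 0 (om (d+1))) := by
    intro x hx y hy hxy
    by_contra h
    push Not at h
    have := BB_mono d h
    rw [(hΦ x hx).2, (hΦ y hy).2] at this
    linarith
  have himg : Φ '' Ioo 0 (om (d+1)) = Ioo (-1) 1 := by
    ext s
    constructor
    · rintro ⟨m, hm, rfl⟩
      exact (hΦ m hm).1
    · intro hs
      have hm := BB_mem hd hs
      refine ⟨BB d s, hm, ?_⟩
      have h2 := hΦ _ hm
      exact (BB_strict d).injOn (Ioo_subset_Icc_self h2.1) (Ioo_subset_Icc_self hs) h2.2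
  refine ⟨Φ, fun m hm => ⟨(hΦ m hm).1, (hΦ m hm).2, ?_⟩⟩
  have hnhds : Ioo 0 (om (d+1)) ∈ 𝓝 m := isOpen_Ioo.mem_nhds hm
  apply HasDerivAt.of_local_left_inverse (f := BB d)
  · apply hmono.continuousAt_of_image_mem_nhds hnhds
    rw [himg]
    exact isOpen_Ioo.mem_nhds (hΦ m hm).1
  · exact BB_deriv d _
  · exact (bb_pos d (abs_lt.2 (hΦ m hm).1)).ne'
  · filter_upwards [hnhds] with y hy using (hΦ y hy).2

theorem cdf_deriv {A : ℝ → ℝ} (hA : Continuous A) (hi : Integrable A) (t : ℝ) :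
    HasDerivAt (fun t => ∫ x in Iic t, A x) (A t) t := by
  have h1 : (fun t => ∫ x in Iic t, A x) = fun t => (∫ x in Iic 0, A x) + ∫ x in (0:ℝ)..t, A x := by
    ext t
    rw [← intervalIntegral.integral_Iic_sub_Iic hi.integrableOn hi.integrableOn]
    ring
  rw [h1]
  exact (intervalIntegral.integral_hasDerivAt_right (hA.intervalIntegrable _ _)
    (hA.stronglyMeasurableAtFilter _ _) hA.continuousAt).const_add _

theorem exists_transport {d : ℕ} (hd : 1 ≤ d) {A : ℝ → ℝ} (hA : Continuous A) (hi : Integrable A)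
    (h0 : ∀ t, 0 ≤ A t) (hM : 0 < ∫ t, A t) {δ : ℝ} (hδ : δ ∈ Ioo (0:ℝ) 1) :
    ∃ G : ℝ → ℝ, ContDiff ℝ 1 G ∧ (∀ t, |G t| < 1) ∧ Monotone G ∧
      (∀ t, BB d (G t) = om (d+1) * (δ / 2 + (1-δ) * ((∫ x in Iic t, A x) / ∫ x, A x))) ∧
      ∀ t, deriv G t = A t / ((∫ x, A x) / ((1-δ) * om (d+1)) * bb d (G t)) := by
  obtain ⟨Φ, hΦ⟩ := exists_Phi hd
  set M := ∫ t, A t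
  have hom := om_pos (d+1)
  let m : ℝ → ℝ := fun t => om (d+1) * (δ / 2 + (1-δ) * ((∫ x in Iic t, A x) / M))
  have hF0 : ∀ t, 0 ≤ ∫ x in Iic t, A x := fun t => integral_nonneg h0
  have hF1 : ∀ t, ∫ x in Iic t, A x ≤ M := fun t =>
    setIntegral_le_integral hi (Eventually.of_forall h0)
  have hm : ∀ t, m t ∈ Ioo 0 (om (d+1)) := by
    intro t
    have h1 : 0 ≤ (∫ x in Iic t, A x) / M := div_nonneg (hF0 t) hM.le
    have h2 : (∫ x in Iic t, A x) / M ≤ 1 := (div_le_one hM).2 (hF1 t)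
    have h3 := hδ.1
    have h4 := hδ.2
    have h5 : 0 ≤ (1-δ) * ((∫ x in Iic t, A x) / M) := mul_nonneg (by linarith) h1
    have h6 : (1-δ) * ((∫ x in Iic t, A x) / M) ≤ 1 - δ := mul_le_of_le_one_right (by linarith) h2
    constructor
    · exact mul_pos hom (by linarith)
    · exact mul_lt_of_lt_one_right hom (by linarith)
  have hGd : ∀ t, HasDerivAt (fun t => Φ (m t)) (A t / (M / ((1-δ) * om (d+1)) * bb d (Φ (m t)))) t := by
    intro t
    have h1 : HasDerivAt m (om (d+1) * ((1-δ) * (A t / M))) t :=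
      ((((cdf_deriv hA hi t).div_const M).const_mul (1-δ)).const_add (δ/2)).const_mul (om (d+1))
    have h2 := (hΦ _ (hm t)).2.2.comp t h1
    have hb := (bb_pos d (abs_lt.2 (hΦ _ (hm t)).1)).ne'
    have h4 : 1 - δ ≠ 0 := by have := hδ.2; linarith
    have h5 : A t / (M / ((1 - δ) * om (d + 1)) * bb d (Φ (m t))) =
        (bb d (Φ (m t)))⁻¹ * (om (d + 1) * ((1 - δ) * (A t / M))) := by
      field_simp
    rw [h5]
    exact h2
  have hGc : Continuous (fun t => Φ (m t)) :=
    continuous_iff_continuousAt.2 fun t => (hGd t).continuousAt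
  have hder : deriv (fun t => Φ (m t)) = fun t => A t / (M / ((1-δ) * om (d+1)) * bb d (Φ (m t))) := by
    ext t; exact (hGd t).deriv
  have hK : 0 < M / ((1-δ) * om (d+1)) := div_pos hM (mul_pos (by have := hδ.2; linarith) hom)
  refine ⟨fun t => Φ (m t), ?_, fun t => abs_lt.2 (hΦ _ (hm t)).1, ?_, fun t => (hΦ _ (hm t)).2.1, ?_⟩
  · rw [contDiff_one_iff_deriv]
    refine ⟨fun t => (hGd t).differentiableAt, ?_⟩
    rw [hder]
    refine hA.div (continuous_const.mul ((bb_cont d).comp hGc)) ?_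
    intro t
    exact (mul_pos hK (bb_pos d (abs_lt.2 (hΦ _ (hm t)).1))).ne'
  · apply monotone_of_deriv_nonneg (fun t => (hGd t).differentiableAt)
    intro t
    rw [hder]
    exact div_nonneg (h0 t) (mul_nonneg hK.le (bb_nonneg _ _))
  · intro t
    rw [hder]

/-- the AM-GM deficit -/
theorem phi_lower {d : ℕ} (hd : 1 ≤ d) {ρ : ℝ} (hρ : 0 < ρ) :
    (d + 1) + (√ρ - 1)^2 ≤ ρ + d * ρ ^ (-(1/(d:ℝ))) := by
  have hd' : (0:ℝ) < d := by exact_mod_cast hd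
  have h1 : 1 - Real.log ρ / d ≤ ρ ^ (-(1/(d:ℝ))) := by
    rw [Real.rpow_def_of_pos hρ]
    have := Real.add_one_le_exp (Real.log ρ * -(1/(d:ℝ)))
    have h : Real.log ρ * -(1/(d:ℝ)) = - (Real.log ρ / d) := by ring
    rw [h] at this ⊢
    linarith
  have h2 : d - Real.log ρ ≤ d * ρ ^ (-(1/(d:ℝ))) := by
    calc _ = d * (1 - Real.log ρ / d) := by field_simp
      _ ≤ _ := by gcongr
  have h3 : Real.log ρ ≤ 2 * (√ρ - 1) := by
    have := Real.log_le_sub_one_of_pos (Real.sqrt_pos.2 hρ)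
    rw [Real.log_sqrt hρ.le] at this
    linarith
  have h4 := Real.sq_sqrt hρ.le
  nlinarith

theorem pw {d : ℕ} (hd : 1 ≤ d) {A a N K g : ℝ} (hA : 0 < A) (ha : 0 < a) (hK : 0 < K)
    (hg : |g| < 1) (hN : d * om d ^ (1/(d:ℝ)) * A ≤ a ^ (1/(d:ℝ)) * N) :
    K ^ (-(1/((d:ℝ)+1))) * A * (d + 1 + (√(a / bb d g * K ^ (-((d:ℝ)/(d+1)))) - 1)^2) ≤
      A / (K * bb d g) * a + √(1 - g^2) * N := by
  have hd' : (0:ℝ) < d := by exact_mod_cast hd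
  have hb := bb_pos d hg
  set b := bb d g with hbdef
  set ρ := a / b * K ^ (-((d:ℝ)/(d+1))) with hρdef
  have hρ : 0 < ρ := by positivity
  have h1 : K ^ (-(1/((d:ℝ)+1))) * ρ = a / (K * b) := by
    have : K ^ (-(1/((d:ℝ)+1))) * K ^ (-((d:ℝ)/(d+1))) = K⁻¹ := by
      rw [← Real.rpow_add hK, ← Real.rpow_neg_one]
      congr 1
      field_simp
      ring
    calc _ = a / b * (K ^ (-(1/((d:ℝ)+1))) * K ^ (-((d:ℝ)/(d+1)))) := by rw [hρdef]; ring
      _ = _ := by rw [this]; field_simp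
  have h2 : K ^ (-(1/((d:ℝ)+1))) * ρ ^ (-(1/(d:ℝ))) = (b/a) ^ (1/(d:ℝ)) := by
    rw [hρdef, Real.mul_rpow (by positivity) (by positivity), ← Real.rpow_mul hK.le]
    have e1 : -((d:ℝ)/(d+1)) * -(1/(d:ℝ)) = 1/((d:ℝ)+1) := by field_simp
    have e2 : (a/b) ^ (-(1/(d:ℝ))) = (b/a) ^ (1/(d:ℝ)) := by
      rw [Real.rpow_neg (by positivity), ← Real.inv_rpow (by positivity), inv_div]
    rw [e1, e2, mul_comm, mul_assoc, ← Real.rpow_add hK]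
    simp
  have h3 : d * A * (b/a) ^ (1/(d:ℝ)) ≤ √(1 - g^2) * N := by
    have e1 : b ^ (1/(d:ℝ)) = om d ^ (1/(d:ℝ)) * √(1-g^2) := by
      rw [hbdef, bb, Real.mul_rpow (om_pos d).le (by positivity), one_div,
        Real.pow_rpow_inv_natCast (Real.sqrt_nonneg _) (by omega)]
    rw [Real.div_rpow hb.le ha.le, e1]
    have : 0 < a ^ (1/(d:ℝ)) := by positivity
    rw [mul_div_assoc', div_le_iff₀ this]
    calc _ = √(1-g^2) * (d * om d ^ (1/(d:ℝ)) * A) := by ring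
      _ ≤ √(1-g^2) * (a ^ (1/(d:ℝ)) * N) := by gcongr
      _ = _ := by ring
  have h4 := phi_lower hd hρ
  calc _ ≤ K ^ (-(1/((d:ℝ)+1))) * A * (ρ + d * ρ ^ (-(1/(d:ℝ)))) := by gcongr
    _ = A * (K ^ (-(1/((d:ℝ)+1))) * ρ) + d * A * (K ^ (-(1/((d:ℝ)+1))) * ρ ^ (-(1/(d:ℝ)))) := by ring
    _ = A / (K * b) * a + d * A * (b/a) ^ (1/(d:ℝ)) := by rw [h1, h2]; field_simp
    _ ≤ _ := by gcongr
end Iso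

namespace Iso
open MeasureTheory Filter Set Metric
open scoped ENNReal NNReal Topology

def SobP (d : ℕ) : Prop := ∀ w : V d → ℝ, ContDiff ℝ 1 w → HasCompactSupport w → (∀ x, 0 ≤ w x) →
  d * om d ^ (1/(d:ℝ)) * ∫ x, w x ^ (1 + 1/(d:ℝ)) ≤ (∫ x, w x) ^ (1/(d:ℝ)) * ∫ x, ‖fderiv ℝ w x‖

def Sob (d : ℕ) : Prop := ∀ u : V (d+1) → ℝ, ContDiff ℝ 1 u → HasCompactSupport u → (∀ x, 0 ≤ u x) →
  ((d:ℝ)+1) * om (d+1) ^ (1/((d:ℝ)+1)) * (∫ x, u x ^ (1 + 1/(d:ℝ))) ^ ((d:ℝ)/(d+1)) ≤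
    ∫ x, ‖fderiv ℝ u x‖

structure Dat (d : ℕ) (A a N : ℝ → ℝ) (P : ℝ) : Prop where
  cA : Continuous A
  sA : HasCompactSupport A
  ca : Continuous a
  sa : HasCompactSupport a
  cN : Continuous N
  sN : HasCompactSupport N
  A0 : ∀ t, 0 ≤ A t
  a0 : ∀ t, 0 ≤ a t
  N0 : ∀ t, 0 ≤ N t
  hN : ∀ t, d * om d ^ (1/(d:ℝ)) * A t ≤ a t ^ (1/(d:ℝ)) * N t
  H1 : ∀ G : ℝ → ℝ, ContDiff ℝ 1 G → (∀ t, |G t| ≤ 1) →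
    ∫ t, (deriv G t * a t + √(1 - G t ^ 2) * N t) ≤ P

theorem pw' {d : ℕ} (hd : 1 ≤ d) {A a N K g : ℝ} (hA : 0 ≤ A) (ha : 0 ≤ a) (hN0 : 0 ≤ N) (hK : 0 < K)
    (hg : |g| < 1) (hN : d * om d ^ (1/(d:ℝ)) * A ≤ a ^ (1/(d:ℝ)) * N) :
    K ^ (-(1/((d:ℝ)+1))) * A * (d + 1 + (√(a / bb d g * K ^ (-((d:ℝ)/(d+1)))) - 1)^2) ≤
      A / (K * bb d g) * a + √(1 - g^2) * N := by
  rcases hA.eq_or_lt with h | h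
  · rw [← h]; simp; positivity
  · rcases ha.eq_or_lt with h' | h'
    · exfalso
      have hd' : (0:ℝ) < d := by exact_mod_cast hd
      rw [← h', Real.zero_rpow (by positivity), zero_mul] at hN
      have := om_pos d
      have : 0 < d * om d ^ (1/(d:ℝ)) * A := by positivity
      linarith
    · exact pw hd h h' hK hg hN

theorem Dat.sob {d : ℕ} (hd : 1 ≤ d) {A a N : ℝ → ℝ} {P : ℝ} (D : Dat d A a N P) :
    ((d:ℝ)+1) * om (d+1) ^ (1/((d:ℝ)+1)) * (∫ t, A t) ^ ((d:ℝ)/(d+1)) ≤ P := by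
  have hd' : (0:ℝ) < d := by exact_mod_cast hd
  have hiA := D.cA.integrable_of_hasCompactSupport D.sA (μ := volume)
  have hM0 : 0 ≤ ∫ t, A t := integral_nonneg D.A0
  rcases hM0.eq_or_lt with h | hM
  · rw [← h, Real.zero_rpow (by positivity), mul_zero]
    have := D.H1 (fun _ => 0) contDiff_const (by simp)
    refine le_trans (integral_nonneg ?_) this
    intro t
    simpa using D.N0 t
  set M := ∫ t, A t with hMdef
  have hom := om_pos (d+1)
  have key : ∀ δ ∈ Ioo (0:ℝ) 1, (M / ((1-δ) * om (d+1))) ^ (-(1/((d:ℝ)+1))) * (d+1) * M ≤ P := by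
    intro δ hδ
    obtain ⟨G, hG, hG1, -, -, hG'⟩ := exists_transport hd D.cA hiA D.A0 hM hδ
    rw [← hMdef] at hG'
    set K := M / ((1-δ) * om (d+1))
    have hK : 0 < K := div_pos hM (mul_pos (by have := hδ.2; linarith) hom)
    refine le_trans ?_ (D.H1 G hG fun t => (hG1 t).le)
    have : K ^ (-(1/((d:ℝ)+1))) * (d+1) * M = ∫ t, K ^ (-(1/((d:ℝ)+1))) * (d+1) * A t := by
      rw [integral_const_mul]
    rw [this]
    apply integral_mono (hiA.const_mul _)
    · have hGc := hG.continuous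
      have hG'c := hG.continuous_deriv (by norm_num)
      exact ((hG'c.mul D.ca).integrable_of_hasCompactSupport D.sa.mul_left).add
        (((by fun_prop : Continuous fun t => √(1 - G t ^ 2)).mul D.cN).integrable_of_hasCompactSupport
          D.sN.mul_left)
    · intro t
      have := pw' hd (D.A0 t) (D.a0 t) (D.N0 t) hK (hG1 t) (D.hN t)
      simp only [hG']
      refine le_trans ?_ this
      have h1 : 0 ≤ K ^ (-(1/((d:ℝ)+1))) * A t := mul_nonneg (by positivity) (D.A0 t)
      nlinarith [sq_nonneg (√(a t / bb d (G t) * K ^ (-((d:ℝ)/(d+1)))) - 1), mul_nonneg h1 (sq_nonneg (√(a t / bb d (G t) * K ^ (-((d:ℝ)/(d+1)))) - 1))]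
  have hlim : Tendsto (fun δ : ℝ => (M / ((1-δ) * om (d+1))) ^ (-(1/((d:ℝ)+1))) * (d+1) * M) (𝓝[>] 0)
      (𝓝 ((M / ((1-0) * om (d+1))) ^ (-(1/((d:ℝ)+1))) * (d+1) * M)) := by
    apply Tendsto.mono_left _ nhdsWithin_le_nhds
    have h1 : ContinuousAt (fun δ : ℝ => M / ((1-δ) * om (d+1))) 0 := by
      apply ContinuousAt.div continuousAt_const (by fun_prop)
      simpa using hom.ne'
    have h2 : ContinuousAt (fun δ : ℝ => (M / ((1-δ) * om (d+1))) ^ (-(1/((d:ℝ)+1)))) 0 := by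
      apply h1.rpow_const
      left
      simp only [sub_zero, one_mul]
      positivity
    exact (h2.mul continuousAt_const).mul continuousAt_const
  have := le_of_tendsto hlim (by
    filter_upwards [Ioo_mem_nhdsGT (zero_lt_one' ℝ)] with δ hδ using key δ hδ)
  refine le_trans (le_of_eq ?_) this
  rw [sub_zero, one_mul, Real.rpow_neg (by positivity), ← Real.inv_rpow (by positivity), inv_div,
    Real.div_rpow hom.le hM.le]
  have e : M ^ ((d:ℝ)/(d+1)) = M / M ^ (1/((d:ℝ)+1)) := by
    have : (d:ℝ)/(d+1) = 1 - 1/((d:ℝ)+1) := by field_simp; ring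
    rw [this, Real.rpow_sub hM, Real.rpow_one]
  rw [e]
  field_simp

theorem rpow_cont {X : Type*} [TopologicalSpace X] {u : X → ℝ} (hu : Continuous u) {q : ℝ} (hq : 0 ≤ q) :
    Continuous (fun x => u x ^ q) := hu.rpow_const fun _ => Or.inr hq
theorem rpow_supp {X : Type*} [TopologicalSpace X] {u : X → ℝ} (hu : HasCompactSupport u) {q : ℝ} (hq : 0 < q) :
    HasCompactSupport (fun x => u x ^ q) :=
  hu.comp_left (g := fun x : ℝ => x ^ q) (Real.zero_rpow hq.ne')

theorem mkDat {d : ℕ} (hd : 1 ≤ d) (hS : SobP d) {L : (ℝ × V d) ≃L[ℝ] V (d+1)}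
    (hn : ∀ t y, ‖L (t,y)‖^2 = t^2+‖y‖^2) (hmp : MeasurePreserving L volume volume)
    {u : V (d+1) → ℝ} (hu : ContDiff ℝ 1 u) (hc : HasCompactSupport u) (h0 : ∀ x, 0 ≤ u x) :
    Dat d (sA L (fun x => u x ^ (1+1/(d:ℝ)))) (sA L u) (sN L u) (∫ x, ‖fderiv ℝ u x‖) where
  cA := sA_cont (rpow_cont hu.continuous (by positivity)) (rpow_supp hc (by positivity))
  sA := sA_supp (rpow_supp hc (by positivity))
  ca := sA_cont hu.continuous hc
  sa := sA_supp hc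
  cN := sN_cont hu hc
  sN := sN_supp hu hc
  A0 t := integral_nonneg fun y => Real.rpow_nonneg (h0 _) _
  a0 t := integral_nonneg fun y => h0 _
  N0 t := integral_nonneg fun y => norm_nonneg _
  hN t := by
    have h1 : ContDiff ℝ 1 (fun y : V d => (L : ℝ × V d → V (d+1)) (t,y)) :=
      L.contDiff.comp (contDiff_const.prodMk contDiff_id)
    exact hS (fun y => u (L (t,y))) (hu.comp h1)
      (fib_supp (g := fun p => u (L p)) (supp_L (L := L) (u := u) hc) t) (fun y => h0 _)
  H1 G hG hG1 := slice_ineq hn hmp hu hc hG hG1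

theorem sob_of_sobP {d : ℕ} (hd : 1 ≤ d) (hS : SobP d) : Sob d := by
  intro u hu hc h0
  obtain ⟨θ, hθ⟩ := exists_unit d
  obtain ⟨L, hn, hmp, -, -⟩ := exists_split d θ hθ
  have := (mkDat hd hS hn hmp hu hc h0).sob hd
  rwa [sA_integral hmp (rpow_cont hu.continuous (by positivity)) (rpow_supp hc (by positivity))] at this

theorem sobP_of_sob {d : ℕ} (hd : 1 ≤ d) (hS : Sob d) : SobP (d+1) := by
  intro w hw hc h0
  have hd' : (0:ℝ) < d := by exact_mod_cast hd
  have h1 := hS w hw hc h0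
  set M := ∫ x, w x ^ (1+1/(d:ℝ))
  have hM0 : 0 ≤ M := integral_nonneg fun x => Real.rpow_nonneg (h0 x) _
  have hpq : ((d:ℝ)+1).HolderConjugate (((d:ℝ)+1)/d) := by
    rw [Real.holderConjugate_iff]
    constructor
    · linarith
    · field_simp
      ring
  have h2 := integral_mul_le_Lp_mul_Lq_of_nonneg (μ := (volume : Measure (V (d+1)))) hpq
    (f := fun x => w x ^ (1/((d:ℝ)+1))) (g := w)
    (Eventually.of_forall fun x => Real.rpow_nonneg (h0 x) _) (Eventually.of_forall h0)
    ((rpow_cont hw.continuous (by positivity)).memLp_of_hasCompactSupport (rpow_supp hc (by positivity)))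
    (hw.continuous.memLp_of_hasCompactSupport hc)
  have e1 : ∀ x, w x ^ (1/((d:ℝ)+1)) * w x = w x ^ (1 + 1/((d:ℝ)+1)) := by
    intro x
    rw [add_comm 1 (1/((d:ℝ)+1)), Real.rpow_add_one' (h0 x) (by positivity)]
  have e2 : ∀ x, (w x ^ (1/((d:ℝ)+1))) ^ ((d:ℝ)+1) = w x := by
    intro x
    rw [← Real.rpow_mul (h0 x)]
    have : 1/((d:ℝ)+1) * ((d:ℝ)+1) = 1 := by field_simp
    rw [this, Real.rpow_one]
  have e3 : ((d:ℝ)+1)/d = 1 + 1/(d:ℝ) := by field_simp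
  have e4 : 1 / (1 + 1/(d:ℝ)) = (d:ℝ)/(d+1) := by field_simp
  simp only [e1, e2, e3] at h2
  rw [e4] at h2
  push_cast
  have hom := om_pos (d+1)
  have hw0 : 0 ≤ ∫ x, w x := integral_nonneg h0
  calc _ ≤ ((d:ℝ)+1) * om (d+1) ^ (1/((d:ℝ)+1)) * ((∫ x, w x) ^ (1/((d:ℝ)+1)) * M ^ ((d:ℝ)/(d+1))) := by
        gcongr
    _ = (∫ x, w x) ^ (1/((d:ℝ)+1)) * (((d:ℝ)+1) * om (d+1) ^ (1/((d:ℝ)+1)) * M ^ ((d:ℝ)/(d+1))) := by ring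
    _ ≤ _ := by gcongr

theorem sobP_one : SobP 1 := by
  intro w hw hc h0
  have hfr : Module.finrank ℝ ℝ = 1 := by simp
  let e : ℝ ≃ₗᵢ[ℝ] V 1 := ((stdOrthonormalBasis ℝ ℝ).reindex (finCongr hfr)).repr
  have hmp : MeasurePreserving e volume volume := e.measurePreserving
  have hint : ∀ f : V 1 → ℝ, ∫ x, f x = ∫ t, f (e t) := fun f =>
    (hmp.integral_comp e.toHomeomorph.measurableEmbedding f).symm
  have hom : om 1 = 2 := by
    rw [om, ← hmp.measure_preimage measurableSet_ball.nullMeasurableSet]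
    have : e ⁻¹' ball 0 1 = ball 0 1 := by
      ext t; simp
    rw [this, Real.volume_ball]; simp
  have hfc := hw.continuous_fderiv (by norm_num)
  have hder : ∀ t, HasDerivAt (fun t => w (e t)) (fderiv ℝ w (e t) (e 1)) t := by
    intro t
    have h1 : HasFDerivAt w (fderiv ℝ w (e t)) (e t) :=
      (hw.differentiable (by norm_num) _).hasFDerivAt
    have h3 : HasDerivAt (fun t : ℝ => e t) (e 1) t :=
      (e : ℝ →L[ℝ] V 1).hasDerivAt
    exact h1.comp_hasDerivAt t h3
  have hle : ∀ t, |fderiv ℝ w (e t) (e 1)| ≤ ‖fderiv ℝ w (e t)‖ := by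
    intro t
    have := (fderiv ℝ w (e t)).le_opNorm (e 1)
    simpa using this
  have ci : Continuous fun t => fderiv ℝ w (e t) (e 1) := (hfc.comp e.continuous).clm_apply continuous_const
  have cs1 : HasCompactSupport (fun t => fderiv ℝ w (e t)) :=
    HasCompactSupport.comp_homeomorph (f := fderiv ℝ w) (hc.fderiv ℝ) e.toHomeomorph
  have cs0 : HasCompactSupport (fun t => w (e t)) :=
    HasCompactSupport.comp_homeomorph (f := w) hc e.toHomeomorph
  have cs2 : HasCompactSupport fun t => fderiv ℝ w (e t) (e 1) := by
    have := cs1.comp_left (g := fun l : V 1 →L[ℝ] ℝ => l (e 1)) rfl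
    exact this
  have ii := ci.integrable_of_hasCompactSupport cs2 (μ := volume)
  have in1 : Integrable (fun t => ‖fderiv ℝ w (e t)‖) volume :=
    ((hfc.comp e.continuous).norm).integrable_of_hasCompactSupport cs1.norm
  have cw : Continuous fun t => w (e t) := hw.continuous.comp e.continuous
  have hpt : ∀ t, 2 * w (e t) ≤ ∫ t, ‖fderiv ℝ w (e t)‖ := by
    intro t
    have hb := integral_Iic_of_hasDerivAt_of_tendsto (a := t) (f := fun t => w (e t)) (m := 0)
      cw.continuousWithinAt (fun x _ => hder x) ii.integrableOn
      (cs0.is_zero_at_infty.mono_left (by rw [cocompact_eq_atBot_atTop]; exact le_sup_left))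
    have ht := integral_Ioi_of_hasDerivAt_of_tendsto (a := t) (f := fun t => w (e t)) (m := 0)
      cw.continuousWithinAt (fun x _ => hder x) ii.integrableOn
      (cs0.is_zero_at_infty.mono_left (by rw [cocompact_eq_atBot_atTop]; exact le_sup_right))
    have b1 : ∫ x in Iic t, fderiv ℝ w (e x) (e 1) ≤ ∫ x in Iic t, ‖fderiv ℝ w (e x)‖ :=
      setIntegral_mono ii.integrableOn in1.integrableOn fun x => (le_abs_self _).trans (hle x)
    have b2 : ∫ x in Ioi t, -(fderiv ℝ w (e x) (e 1)) ≤ ∫ x in Ioi t, ‖fderiv ℝ w (e x)‖ :=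
      setIntegral_mono ii.neg.integrableOn in1.integrableOn fun x => (neg_le_abs _).trans (hle x)
    rw [integral_neg] at b2
    have b3 := intervalIntegral.integral_Iic_add_Ioi in1.integrableOn in1.integrableOn (b := t)
    linarith
  rw [hint, hint, hint, hom]
  simp only [Nat.cast_one, div_one, Real.rpow_one, one_mul]
  rw [← integral_const_mul, mul_comm, ← integral_const_mul]
  apply integral_mono
  · exact (continuous_const.mul (rpow_cont cw (by norm_num))).integrable_of_hasCompactSupport
      (rpow_supp cs0 (by norm_num)).mul_left
  · exact (continuous_const.mul cw).integrable_of_hasCompactSupport cs0.mul_left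
  · intro t
    have e2 : w (e t) ^ ((1:ℝ)+1) = w (e t) * w (e t) := by
      rw [Real.rpow_add_one' (h0 _) (by norm_num), Real.rpow_one]
    simp only [e2]
    have := mul_le_mul_of_nonneg_right (hpt t) (h0 (e t))
    linarith

theorem sobP_all {d : ℕ} (hd : 1 ≤ d) : SobP d := by
  induction d, hd using Nat.le_induction with
  | base => exact sobP_one
  | succ k hk ih => exact sobP_of_sob hk (sob_of_sobP hk ih)

theorem sob_all {d : ℕ} (hd : 1 ≤ d) : Sob d := sob_of_sobP hd (sobP_all hd)
end Iso

namespace Iso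
open MeasureTheory Filter Set Metric
open scoped ENNReal NNReal Topology

theorem ptwise {A a k κ ρ g η Z : ℝ} (hκ : 0 < κ) (ha : κ ≤ a) (hA : 0 ≤ A) (hAa : A ≤ a)
    (hk : 0 < k) (hk2 : k ≤ 2) (hη : 0 < η) (hρ : 0 ≤ ρ) (hg : g = ρ * k * (A / a))
    (hZ : k * A * (√ρ - 1)^2 ≤ Z) :
    |g - 1| ≤ κ⁻¹ * ((2 * η + |k - 1|) * a + 2 * (1 + 1/η) * k⁻¹ * Z + (a - A)) := by
  have ha0 : 0 < a := hκ.trans_le ha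
  set x := A / a with hx
  have hx0 : 0 ≤ x := by positivity
  have hx1 : x ≤ 1 := (div_le_one ha0).2 hAa
  have hAx : A = a * x := by rw [hx]; field_simp
  set y := √ρ - 1 with hy
  have hρy : |ρ - 1| ≤ (1 + 1/η) * y^2 + η := by
    have h1 : ρ - 1 = y^2 + 2 * y := by
      have := Real.sq_sqrt hρ
      rw [hy]; nlinarith
    have h2 : 2 * |y| ≤ η + 1/η * y^2 := by
      have : 0 ≤ 1/η * (|y| - η)^2 := by positivity
      have e : 1/η * (|y| - η)^2 = 1/η * y^2 - 2 * |y| + η := by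
        rw [sub_sq, sq_abs]; field_simp
      linarith
    rw [h1]
    calc _ ≤ |y^2| + |2 * y| := abs_add_le _ _
      _ = y^2 + 2 * |y| := by rw [abs_of_nonneg (sq_nonneg y), abs_mul]; norm_num
      _ ≤ _ := by linarith
  have h3 : |g - 1| ≤ 2 * (|ρ - 1| * x) + |k - 1| + (1 - x) := by
    have e : g - 1 = (ρ - 1) * (k * x) + ((k - 1) * x - (1 - x)) := by rw [hg]; ring
    rw [e]
    have b1 : |(ρ - 1) * (k * x)| ≤ 2 * (|ρ - 1| * x) := by
      rw [abs_mul, abs_of_nonneg (by positivity : 0 ≤ k * x)]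
      nlinarith [mul_nonneg (abs_nonneg (ρ - 1)) hx0]
    have b2 : |(k - 1) * x - (1 - x)| ≤ |k - 1| + (1 - x) := by
      refine (abs_sub _ _).trans ?_
      rw [abs_mul, abs_of_nonneg hx0, abs_of_nonneg (by linarith : 0 ≤ 1 - x)]
      nlinarith [abs_nonneg (k-1)]
    linarith [abs_add_le ((ρ - 1) * (k * x)) ((k - 1) * x - (1 - x))]
  have h4 : κ * |g - 1| ≤ (2 * η + |k - 1|) * a + 2 * (1 + 1/η) * k⁻¹ * Z + (a - A) := by
    have c1 : A * y^2 ≤ k⁻¹ * Z := by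
      rw [inv_mul_eq_div, le_div_iff₀ hk]; linarith
    have c2 : 2 * (1+1/η) * (A * y^2) ≤ 2 * (1+1/η) * (k⁻¹ * Z) := by gcongr
    have h5 : κ * |g - 1| ≤ a * |g - 1| := by gcongr
    have h6 : a * |g - 1| ≤ a * (2 * (((1 + 1/η) * y^2 + η) * x) + |k - 1| + (1 - x)) := by
      refine mul_le_mul_of_nonneg_left (h3.trans ?_) ha0.le
      gcongr
    have h7 : a * (2 * (((1 + 1/η) * y^2 + η) * x) + |k - 1| + (1 - x)) =
      2 * (1+1/η) * (A * y^2) + 2 * η * A + |k - 1| * a + (a - A) := by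
      rw [hAx]; ring
    nlinarith [mul_le_mul_of_nonneg_left hAa hη.le]
  rw [inv_mul_eq_div, le_div_iff₀ hκ]
  linarith

theorem core_step {d : ℕ} (hd : 1 ≤ d) {A a N : ℝ → ℝ} {P : ℝ} (D : Dat d A a N P)
    (hAa : ∀ t, A t ≤ a t) {K : ℝ} (hK : 0 < K) {G : ℝ → ℝ} (hG : ContDiff ℝ 1 G)
    (hG1 : ∀ t, |G t| < 1) (hG' : ∀ t, deriv G t = A t / (K * bb d (G t)))
    {κ η k : ℝ} (hκ : 0 < κ) (hη : 0 < η) (hk : k = K ^ (-(1/((d:ℝ)+1)))) (hk2 : k ≤ 2)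
    {t1 t2 : ℝ} (h12 : t1 ≤ t2) (hat : ∀ t ∈ Icc t1 t2, κ ≤ a t) :
    |G t2 - G t1 - (t2 - t1)| ≤ κ⁻¹ * ((2 * η + |k - 1|) * (∫ t, a t) +
      2 * (1 + 1/η) * k⁻¹ * (P - (d+1) * k * ∫ t, A t) + ∫ t, (a t - A t)) := by
  have hk0 : 0 < k := by rw [hk]; positivity
  have hGc := hG.continuous
  have hG'c := hG.continuous_deriv (by norm_num)
  let Z : ℝ → ℝ := fun t => (deriv G t * a t + √(1 - G t ^ 2) * N t) - (d+1) * k * A t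
  have iA := D.cA.integrable_of_hasCompactSupport D.sA (μ := volume)
  have ia := D.ca.integrable_of_hasCompactSupport D.sa (μ := volume)
  have i1 : Integrable (fun t => deriv G t * a t + √(1 - G t ^ 2) * N t) volume :=
    ((hG'c.mul D.ca).integrable_of_hasCompactSupport D.sa.mul_left).add
        (((by fun_prop : Continuous fun t => √(1 - G t ^ 2)).mul D.cN).integrable_of_hasCompactSupport
          D.sN.mul_left)
  have iZ : Integrable Z volume := i1.sub (iA.const_mul _)
  have hZ : ∀ t, k * A t * (√(a t / bb d (G t) * K ^ (-((d:ℝ)/(d+1)))) - 1)^2 ≤ Z t := by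
    intro t
    have := pw' hd (D.A0 t) (D.a0 t) (D.N0 t) hK (hG1 t) (D.hN t)
    simp only [Z, hG']
    rw [← hk] at this
    nlinarith
  have hZ0 : ∀ t, 0 ≤ Z t := fun t => le_trans (by have := D.A0 t; positivity) (hZ t)
  have hZi : ∫ t, Z t ≤ P - (d+1) * k * ∫ t, A t := by
    have : ∫ t, Z t = (∫ t, (deriv G t * a t + √(1 - G t ^ 2) * N t)) - (d+1) * k * ∫ t, A t := by
      rw [← integral_const_mul]
      exact integral_sub i1 (iA.const_mul _)
    rw [this]
    linarith [D.H1 G hG fun t => (hG1 t).le]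
  let R : ℝ → ℝ := fun t => κ⁻¹ * ((2 * η + |k - 1|) * a t + 2 * (1 + 1/η) * k⁻¹ * Z t + (a t - A t))
  have iR : Integrable R volume :=
    (((ia.const_mul _).add (iZ.const_mul _)).add (ia.sub iA)).const_mul _
  have hR0 : ∀ t, 0 ≤ R t := by
    intro t
    have h1 := D.a0 t
    have h2 := hZ0 t
    have h3 : 0 ≤ a t - A t := by linarith [hAa t]
    positivity
  have hpt : ∀ t ∈ Icc t1 t2, |deriv G t - 1| ≤ R t := by
    intro t ht
    have hb := bb_pos d (hG1 t)
    have ha := hat t ht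
    have ha0 : 0 < a t := hκ.trans_le ha
    refine ptwise hκ ha (D.A0 t) (hAa t) hk0 hk2 hη (by positivity) ?_ (hZ t)
    rw [hG', hk]
    have : K⁻¹ = K ^ (-((d:ℝ)/(d+1))) * K ^ (-(1/((d:ℝ)+1))) := by
      rw [← Real.rpow_add hK, ← Real.rpow_neg_one]
      congr 1
      field_simp
      ring
    calc A t / (K * bb d (G t)) = K⁻¹ * (A t / bb d (G t)) := by field_simp
      _ = _ := by rw [this]; field_simp
  have hFT : G t2 - G t1 - (t2 - t1) = ∫ t in t1..t2, (deriv G t - 1) := by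
    rw [intervalIntegral.integral_sub (hG'c.intervalIntegrable _ _) (by simp)]
    rw [intervalIntegral.integral_deriv_eq_sub (fun x _ => hG.differentiable (by norm_num) x)
      (hG'c.intervalIntegrable _ _)]
    simp
  have hfin : ∫ t, R t ≤ κ⁻¹ * ((2 * η + |k - 1|) * (∫ t, a t) +
      2 * (1 + 1/η) * k⁻¹ * (P - (d+1) * k * ∫ t, A t) + ∫ t, (a t - A t)) := by
    have e : ∫ t, R t = κ⁻¹ * ((2 * η + |k - 1|) * (∫ t, a t) +
      2 * (1 + 1/η) * k⁻¹ * (∫ t, Z t) + ∫ t, (a t - A t)) := by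
      have j1 : Integrable (fun t => (2 * η + |k - 1|) * a t) volume := ia.const_mul _
      have j2 : Integrable (fun t => 2 * (1 + 1/η) * k⁻¹ * Z t) volume := iZ.const_mul _
      have j3 : Integrable (fun t => a t - A t) volume := ia.sub iA
      have j4 : Integrable (fun t => (2 * η + |k - 1|) * a t + 2 * (1 + 1/η) * k⁻¹ * Z t) volume :=
        j1.add j2
      simp only [R]
      rw [integral_const_mul, integral_add j4 j3, integral_add j1 j2, integral_const_mul,
        integral_const_mul]
    rw [e]
    gcongr
  refine le_trans ?_ hfin
  rw [hFT]
  calc |∫ t in t1..t2, (deriv G t - 1)| ≤ ∫ t in t1..t2, |deriv G t - 1| :=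
        intervalIntegral.abs_integral_le_integral_abs h12
    _ ≤ ∫ t in t1..t2, R t := by
        apply intervalIntegral.integral_mono_on h12
        · exact ((hG'c.sub continuous_const).abs).intervalIntegrable _ _
        · exact iR.intervalIntegrable
        · exact hpt
    _ ≤ ∫ t, R t := by
        rw [intervalIntegral.integral_of_le h12]
        exact setIntegral_le_integral iR (Eventually.of_forall hR0)

theorem conc {p β : ℝ} (hp : p ∈ Ioo (0:ℝ) 1) (hβ : 0 < β) :
    ∃ γ > 0, ∀ x ∈ Icc β (1-β), 1 + γ ≤ x ^ p + (1-x) ^ p := by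
  rcases (Icc β (1-β)).eq_empty_or_nonempty with h | h
  · exact ⟨1, one_pos, by simp [h]⟩
  have hc : ContinuousOn (fun x : ℝ => x ^ p + (1-x) ^ p) (Icc β (1-β)) := by
    apply Continuous.continuousOn
    exact (continuous_id.rpow_const fun _ => Or.inr hp.1.le).add
      ((continuous_const.sub continuous_id).rpow_const fun _ => Or.inr hp.1.le)
  obtain ⟨x0, hx0, hmin⟩ := isCompact_Icc.exists_isMinOn h hc
  refine ⟨x0 ^ p + (1-x0) ^ p - 1, ?_, ?_⟩
  · have h1 : x0 < x0 ^ p := Real.self_lt_rpow_of_lt_one (by linarith [hx0.1]) (by linarith [hx0.2]) hp.2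
    have h2 : 1 - x0 < (1-x0) ^ p := Real.self_lt_rpow_of_lt_one (by linarith [hx0.2]) (by linarith [hx0.1]) hp.2
    linarith
  · intro x hx
    have := hmin hx
    have h3 : x0 ^ p + (1-x0) ^ p ≤ x ^ p + (1-x) ^ p := this
    linarith
end Iso

namespace Iso
open MeasureTheory Filter Set Metric
open scoped ENNReal NNReal Topology

theorem cdf_ends {A : ℝ → ℝ} (hs : HasCompactSupport A) :
    ∃ t1 t2, ∫ x in Iic t1, A x = 0 ∧ ∫ x in Iic t2, A x = ∫ x, A x := by
  obtain ⟨R, hR⟩ := hs.isCompact.isBounded.subset_closedBall 0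
  have hz : ∀ x, R < |x| → A x = 0 := by
    intro x hx
    apply image_eq_zero_of_notMem_tsupport
    intro h
    have := hR h
    rw [mem_closedBall_zero_iff, Real.norm_eq_abs] at this
    linarith
  refine ⟨-(|R|+1), |R|+1, ?_, ?_⟩
  · apply setIntegral_eq_zero_of_forall_eq_zero
    intro x hx
    apply hz
    rw [mem_Iic] at hx
    have := neg_le_abs x
    have := le_abs_self R
    linarith
  · apply setIntegral_eq_integral_of_forall_compl_eq_zero
    intro x hx
    apply hz
    rw [mem_Iic, not_le] at hx
    have := le_abs_self x
    have := le_abs_self R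
    linarith

theorem core {d : ℕ} (hd : 1 ≤ d) {A a N : ℕ → ℝ → ℝ} {P : ℕ → ℝ}
    (D : ∀ j, Dat d (A j) (a j) (N j) (P j)) (hAa : ∀ j t, A j t ≤ a j t)
    (hM0 : ∀ j, 0 < ∫ t, A j t)
    (hM : Tendsto (fun j => ∫ t, A j t) atTop (𝓝 (om (d+1))))
    (haA : Tendsto (fun j => ∫ t, (a j t - A j t)) atTop (𝓝 0))
    (hP : Tendsto P atTop (𝓝 (((d:ℝ)+1) * om (d+1))))
    (H2 : ∀ j t, ((d:ℝ)+1) * om (d+1) ^ (1/((d:ℝ)+1)) *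
      ((∫ x in Iic t, A j x) ^ ((d:ℝ)/(d+1)) + ((∫ x, A j x) - ∫ x in Iic t, A j x) ^ ((d:ℝ)/(d+1))) ≤
      P j + 2 * a j t) :
    ∃ c : ℕ → ℝ, ∀ s ∈ Ioo (-1:ℝ) 1,
      Tendsto (fun j => ∫ x in Iic (c j + s), A j x) atTop (𝓝 (BB d s)) := by
  have hd' : (0:ℝ) < d := by exact_mod_cast hd
  have hom := om_pos (d+1)
  set ω := om (d+1) with hω
  let δ : ℕ → ℝ := fun j => 1/((j:ℝ)+2)
  have hδ : ∀ j, δ j ∈ Ioo (0:ℝ) 1 := by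
    intro j
    constructor
    · positivity
    · rw [div_lt_one (by positivity)]
      have : (0:ℝ) ≤ j := by positivity
      linarith
  have hδ0 : Tendsto δ atTop (𝓝 0) := by
    have := (tendsto_one_div_add_atTop_nhds_zero_nat (𝕜 := ℝ)).comp (tendsto_add_atTop_nat 1)
    refine this.congr fun j => ?_
    simp only [δ, Function.comp]
    push_cast
    ring
  have iA := fun j => (D j).cA.integrable_of_hasCompactSupport (D j).sA (μ := volume)
  have ia := fun j => (D j).ca.integrable_of_hasCompactSupport (D j).sa (μ := volume)
  choose G hG hG1 hGm hGB hG' using fun j => exists_transport hd (D j).cA (iA j) (D j).A0 (hM0 j) (hδ j)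
  simp only [← hω] at hGB hG'
  let K : ℕ → ℝ := fun j => (∫ x, A j x) / ((1 - δ j) * ω)
  have hK : ∀ j, 0 < K j := fun j => div_pos (hM0 j) (mul_pos (by linarith [(hδ j).2]) hom)
  have hK1 : Tendsto K atTop (𝓝 1) := by
    have : Tendsto K atTop (𝓝 (ω / ((1-0) * ω))) :=
      hM.div ((tendsto_const_nhds (x := (1:ℝ)).sub hδ0).mul_const ω) (by simpa using hom.ne')
    rwa [sub_zero, one_mul, div_self hom.ne'] at this
  let k : ℕ → ℝ := fun j => K j ^ (-(1/((d:ℝ)+1)))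
  have hk1 : Tendsto k atTop (𝓝 1) := by
    have := hK1.rpow_const (p := -(1/((d:ℝ)+1))) (Or.inl one_ne_zero)
    rwa [Real.one_rpow] at this
  have hia : Tendsto (fun j => ∫ t, a j t) atTop (𝓝 ω) := by
    have := haA.add hM
    rw [zero_add] at this
    refine this.congr fun j => ?_
    rw [integral_sub (ia j) (iA j)]
    ring
  -- lower bound for a
  have lowa : ∀ s0 ∈ Ico (0:ℝ) 1, ∃ κ > 0, ∀ᶠ j in atTop, ∀ t, |G j t| ≤ s0 → κ ≤ a j t := by
    intro s0 hs0
    have hb1 := BB_mem hd (s := -s0) ⟨by linarith [hs0.2], by linarith [hs0.1]⟩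
    have hb2 := BB_mem hd (s := s0) ⟨by linarith [hs0.1], by linarith [hs0.2]⟩
    rw [← hω] at hb1 hb2
    set β := min (BB d (-s0) / ω) (1 - BB d s0 / ω) / 2 with hβ
    have hβ0 : 0 < β := by
      have h1 : 0 < BB d (-s0) / ω := div_pos hb1.1 hom
      have h2 : 0 < 1 - BB d s0 / ω := by
        have := (div_lt_one hom).2 hb2.2
        linarith
      have := lt_min h1 h2
      positivity
    have hβ1 : 2 * β ≤ BB d (-s0) / ω := by
      rw [hβ]; have := min_le_left (BB d (-s0) / ω) (1 - BB d s0 / ω); linarith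
    have hβ2 : 2 * β ≤ 1 - BB d s0 / ω := by
      rw [hβ]; have := min_le_right (BB d (-s0) / ω) (1 - BB d s0 / ω); linarith
    obtain ⟨γ, hγ, hconc⟩ := conc (p := (d:ℝ)/(d+1)) (β := β)
      ⟨by positivity, by rw [div_lt_one (by positivity)]; linarith⟩ hβ0
    have hX : Tendsto (fun j => ((d:ℝ)+1) * ω ^ (1/((d:ℝ)+1)) *
        ((∫ t, A j t) ^ ((d:ℝ)/(d+1)) * (1 + γ)) - P j) atTop (𝓝 (((d:ℝ)+1) * ω * γ)) := by
      have h1 := ((hM.rpow_const (p := (d:ℝ)/(d+1)) (Or.inl hom.ne')).mul_const (1+γ)).const_mul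
        (((d:ℝ)+1) * ω ^ (1/((d:ℝ)+1)))
      have h2 := h1.sub hP
      have e : ω ^ (1/((d:ℝ)+1)) * ω ^ ((d:ℝ)/(d+1)) = ω := by
        rw [← Real.rpow_add hom]
        have : 1/((d:ℝ)+1) + (d:ℝ)/(d+1) = 1 := by field_simp; ring
        rw [this, Real.rpow_one]
      convert h2 using 2
      calc ((d:ℝ)+1) * ω * γ = ((d:ℝ)+1) * (ω ^ (1/((d:ℝ)+1)) * ω ^ ((d:ℝ)/(d+1))) * (1+γ) - ((d:ℝ)+1)*ω := by
            rw [e]; ring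
        _ = _ := by ring
    refine ⟨((d:ℝ)+1) * ω * γ / 4, by positivity, ?_⟩
    have hpos : 0 < ((d:ℝ)+1) * ω * γ := by positivity
    filter_upwards [hX.eventually_const_lt (show ((d:ℝ)+1) * ω * γ / 2 < ((d:ℝ)+1) * ω * γ by linarith),
      hδ0.eventually_lt_const hβ0] with j hj1 hj2
    intro t ht
    have hMj := hM0 j
    set M := ∫ x, A j x
    have hbt := hGB j t
    set m := ∫ x in Iic t, A j x with hm
    have hF0 : 0 ≤ m / M := div_nonneg (integral_nonneg (D j).A0) hMj.le
    have hF1 : m / M ≤ 1 := (div_le_one hMj).2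
      (setIntegral_le_integral (iA j) (Eventually.of_forall (D j).A0))
    have hu : BB d (G j t) / ω = δ j / 2 + (1 - δ j) * (m / M) := by
      rw [hbt, mul_div_cancel_left₀ _ hom.ne']
    rw [abs_le] at ht
    have hl1 : BB d (-s0) / ω ≤ BB d (G j t) / ω := by
      have := BB_mono d ht.1
      gcongr
    have hl2 : BB d (G j t) / ω ≤ BB d s0 / ω := by
      have := BB_mono d ht.2
      gcongr
    have hd0 := (hδ j).1
    have hmem : m / M ∈ Icc β (1-β) := by
      constructor
      · nlinarith
      · nlinarith
    have hc := hconc _ hmem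
    have h2 := H2 j t
    have e1 : m ^ ((d:ℝ)/(d+1)) + (M - m) ^ ((d:ℝ)/(d+1)) =
        M ^ ((d:ℝ)/(d+1)) * ((m/M) ^ ((d:ℝ)/(d+1)) + (1 - m/M) ^ ((d:ℝ)/(d+1))) := by
      rw [mul_add, ← Real.mul_rpow hMj.le hF0, ← Real.mul_rpow hMj.le (by linarith)]
      congr 2
      · field_simp
      · field_simp
    change _ * (m ^ ((d:ℝ)/(d+1)) + (M - m) ^ ((d:ℝ)/(d+1))) ≤ _ at h2
    rw [e1] at h2
    have h3 : ((d:ℝ)+1) * ω ^ (1/((d:ℝ)+1)) * (M ^ ((d:ℝ)/(d+1)) * (1 + γ)) ≤ P j + 2 * a j t := by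
      refine le_trans ?_ h2
      gcongr
    linarith
  have err : ∀ s0 ∈ Ico (0:ℝ) 1, ∀ ε > 0, ∀ᶠ j in atTop, ∀ t1 t2, t1 ≤ t2 → -s0 ≤ G j t1 →
      G j t2 ≤ s0 → |G j t2 - G j t1 - (t2 - t1)| ≤ ε := by
    intro s0 hs0 ε hε
    obtain ⟨κ, hκ, hlow⟩ := lowa s0 hs0
    set η := κ * ε / (4 * ω) with hη
    have hη0 : 0 < η := by positivity
    have hlim : Tendsto (fun j => κ⁻¹ * ((2 * η + |k j - 1|) * (∫ t, a j t) +
      2 * (1 + 1/η) * (k j)⁻¹ * (P j - (d+1) * k j * ∫ t, A j t) + ∫ t, (a j t - A j t))) atTop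
      (𝓝 (κ⁻¹ * ((2 * η + |(1:ℝ) - 1|) * ω +
      2 * (1 + 1/η) * (1:ℝ)⁻¹ * (((d:ℝ)+1) * ω - (d+1) * 1 * ω) + 0))) := by
      apply Tendsto.const_mul
      refine Tendsto.add (Tendsto.add (Tendsto.mul ?_ hia) ?_) haA
      · exact ((hk1.sub_const 1).abs).const_add _
      · exact ((hk1.inv₀ one_ne_zero).const_mul _).mul (hP.sub ((hk1.const_mul _).mul hM))
    have hval : κ⁻¹ * ((2 * η + |(1:ℝ) - 1|) * ω +
      2 * (1 + 1/η) * (1:ℝ)⁻¹ * (((d:ℝ)+1) * ω - (d+1) * 1 * ω) + 0) < ε := by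
      have : κ⁻¹ * ((2 * η + |(1:ℝ) - 1|) * ω +
      2 * (1 + 1/η) * (1:ℝ)⁻¹ * (((d:ℝ)+1) * ω - (d+1) * 1 * ω) + 0) = ε / 2 := by
        simp only [sub_self, abs_zero, mul_one, mul_zero, add_zero, hη]
        field_simp
        ring
      rw [this]; linarith
    filter_upwards [hlow, hlim.eventually_lt_const hval, hk1.eventually_lt_const (by norm_num : (1:ℝ) < 2)]
      with j h1 h2 h3 t1 t2 h12 hG1' hG2'
    refine le_trans (core_step hd (D j) (hAa j) (hK j) (hG j) (hG1 j) (hG' j) hκ hη0 rfl h3.le h12 ?_) h2.le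
    intro t ht
    apply h1
    rw [abs_le]
    exact ⟨hG1'.trans (hGm j ht.1), (hGm j ht.2).trans hG2'⟩
  have hex : ∀ σ ∈ Ioo (-1:ℝ) 1, ∀ᶠ j in atTop, ∃ t, G j t = σ := by
    intro σ hσ
    have hb := BB_mem hd hσ
    rw [← hω] at hb
    have hδ1 : Tendsto (fun j => ω * (δ j / 2)) atTop (𝓝 0) := by
      simpa using (hδ0.div_const 2).const_mul ω
    filter_upwards [hδ1.eventually_lt_const hb.1, hδ1.eventually_lt_const (sub_pos.2 hb.2)] with j h1 h2
    obtain ⟨t1, t2, ht1, ht2⟩ := cdf_ends (D j).sA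
    have g1 := hGB j t1
    have g2 := hGB j t2
    rw [ht1, zero_div, mul_zero, add_zero] at g1
    rw [ht2, div_self (hM0 j).ne'] at g2
    have l1 : G j t1 ≤ σ := by
      by_contra h
      push Not at h
      have := BB_mono d h.le
      linarith
    have l2 : σ ≤ G j t2 := by
      by_contra h
      push Not at h
      have := BB_mono d h.le
      nlinarith
    exact mem_range_of_exists_le_of_exists_ge (hG j).continuous ⟨t1, l1⟩ ⟨t2, l2⟩
  have hT : ∀ σ : ℝ, ∀ j, ∃ t, (∃ t, G j t = σ) → G j t = σ := by
    intro σ j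
    by_cases h : ∃ t, G j t = σ
    · obtain ⟨t, ht⟩ := h
      exact ⟨t, fun _ => ht⟩
    · exact ⟨0, fun h' => absurd h' h⟩
  choose T hT using hT
  have hTl : ∀ σ ∈ Ioo (-1:ℝ) 1, Tendsto (fun j => T σ j - T 0 j) atTop (𝓝 σ) := by
    intro σ hσ
    rw [Metric.tendsto_nhds]
    intro ε hε
    filter_upwards [hex σ hσ, hex 0 ⟨by norm_num, by norm_num⟩,
      err |σ| ⟨abs_nonneg _, abs_lt.2 hσ⟩ (ε/2) (by positivity)] with j h1 h2 h3
    have e1 := hT σ j h1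
    have e2 := hT 0 j h2
    rw [Real.dist_eq]
    rcases le_total (T 0 j) (T σ j) with h | h
    · have := h3 _ _ h (by rw [e2]; simp) (by rw [e1]; exact le_abs_self _)
      rw [e1, e2, sub_zero, abs_sub_comm] at this
      linarith
    · have := h3 _ _ h (by rw [e1]; linarith [neg_abs_le σ]) (by rw [e2]; simp)
      rw [e1, e2] at this
      have e : T σ j - T 0 j - σ = 0 - σ - (T 0 j - T σ j) := by ring
      rw [e]
      linarith
  refine ⟨T 0, fun s hs => ?_⟩
  have hGl : Tendsto (fun j => G j (T 0 j + s)) atTop (𝓝 s) := by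
    rw [tendsto_order]
    constructor
    · intro x hx
      obtain ⟨σ, hσ1, hσ2⟩ := exists_between (max_lt hx hs.1)
      have hσ : σ ∈ Ioo (-1:ℝ) 1 := ⟨(le_max_right _ _).trans_lt hσ1, hσ2.trans hs.2⟩
      filter_upwards [hex σ hσ, (hTl σ hσ).eventually_lt_const hσ2] with j h1 h2
      have := hGm j (show T σ j ≤ T 0 j + s by linarith)
      rw [hT σ j h1] at this
      exact ((le_max_left _ _).trans_lt hσ1).trans_le this
    · intro x hx
      obtain ⟨σ, hσ1, hσ2⟩ := exists_between (lt_min hx hs.2)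
      have hσ : σ ∈ Ioo (-1:ℝ) 1 := ⟨hs.1.trans hσ1, hσ2.trans_le (min_le_right _ _)⟩
      filter_upwards [hex σ hσ, (hTl σ hσ).eventually_const_lt hσ1] with j h1 h2
      have := hGm j (show T 0 j + s ≤ T σ j by linarith)
      rw [hT σ j h1] at this
      exact this.trans_lt (hσ2.trans_le (min_le_left _ _))
  have hBl := ((BB_cont d).tendsto s).comp hGl
  have hfin : Tendsto (fun j => (∫ x, A j x) * ((BB d (G j (T 0 j + s)) / ω - δ j / 2) / (1 - δ j))) atTop
      (𝓝 (ω * ((BB d s / ω - 0 / 2) / (1 - 0)))) :=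
    hM.mul (((hBl.div_const ω).sub (hδ0.div_const 2)).div (hδ0.const_sub 1) (by norm_num))
  have e : ω * ((BB d s / ω - 0 / 2) / (1 - 0)) = BB d s := by field_simp; ring
  rw [e] at hfin
  refine hfin.congr fun j => ?_
  rw [hGB]
  have h1 : 1 - δ j ≠ 0 := by linarith [(hδ j).2]
  have h2 := (hM0 j).ne'
  field_simp
  ring
end Iso

namespace Iso
open MeasureTheory Filter Set Metric
open scoped ENNReal NNReal Topology

theorem exists_ramp (t0 : ℝ) {h : ℝ} (hh : 0 < h) : ∃ χ : ℝ → ℝ, ContDiff ℝ 1 χ ∧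
    (∀ t, 0 ≤ χ t) ∧ (∀ t, χ t ≤ 1) ∧ (∀ t ≤ t0, χ t = 0) ∧ (∀ t, t0 + h ≤ t → χ t = 1) ∧
    (∀ t, 0 ≤ deriv χ t) ∧ (∀ t ∉ Icc t0 (t0+h), deriv χ t = 0) ∧ HasCompactSupport (deriv χ) ∧
    ∫ t, deriv χ t = 1 := by
  let χ : ℝ → ℝ := fun t => Real.smoothTransition ((t - t0)/h)
  have hC : ContDiff ℝ 1 χ := Real.smoothTransition.contDiff.comp (by fun_prop)
  have hz : ∀ t ≤ t0, χ t = 0 := fun t ht =>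
    Real.smoothTransition.zero_of_nonpos (div_nonpos_of_nonpos_of_nonneg (by linarith) hh.le)
  have ho : ∀ t, t0 + h ≤ t → χ t = 1 := fun t ht =>
    Real.smoothTransition.one_of_one_le ((one_le_div hh).2 (by linarith))
  have hmono : Monotone χ := fun x y hxy => Real.smoothTransition.monotone (by gcongr)
  have hd0 : ∀ t ∉ Icc t0 (t0+h), deriv χ t = 0 := by
    intro t ht
    by_cases h1 : t < t0
    · have : χ =ᶠ[𝓝 t] fun _ => 0 := by
        filter_upwards [Iio_mem_nhds h1] with x hx using hz x (le_of_lt hx)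
      rw [this.deriv_eq]; simp
    · have h2 : t0 + h < t := by
        by_contra h3
        exact ht ⟨not_lt.1 h1, not_lt.1 h3⟩
      have : χ =ᶠ[𝓝 t] fun _ => 1 := by
        filter_upwards [Ioi_mem_nhds h2] with x hx using ho x (le_of_lt hx)
      rw [this.deriv_eq]; simp
  have hc := hC.continuous_deriv (by norm_num)
  have hs : HasCompactSupport (deriv χ) := HasCompactSupport.intro isCompact_Icc hd0
  refine ⟨χ, hC, fun t => Real.smoothTransition.nonneg _, fun t => Real.smoothTransition.le_one _,
    hz, ho, fun t => hmono.deriv_nonneg, hd0, hs, ?_⟩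
  have hl1 : Tendsto χ atBot (𝓝 0) := by
    apply tendsto_const_nhds.congr'
    filter_upwards [Iic_mem_atBot t0] with x hx using (hz x hx).symm
  have hl2 : Tendsto χ atTop (𝓝 1) := by
    apply tendsto_const_nhds.congr'
    filter_upwards [Ici_mem_atTop (t0+h)] with x hx using (ho x hx).symm
  rw [integral_of_hasDerivAt_of_tendsto (fun x => (hC.differentiable (by norm_num) x).hasDerivAt)
    (hc.integrable_of_hasCompactSupport hs) hl1 hl2, sub_zero]

section
variable {d : ℕ} {L : (ℝ × V d) ≃L[ℝ] V (d+1)}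

theorem sA_set_le (hd : 1 ≤ d) (hmp : MeasurePreserving L volume volume)
    {u v : V (d+1) → ℝ} (hv : Continuous v) (hcv : HasCompactSupport v)
    (v0 : ∀ x, 0 ≤ v x) {S : Set ℝ} (hS : MeasurableSet S) (h : ∀ t ∈ S, ∀ y, v (L (t,y)) = u (L (t,y))) :
    ∫ t in S, sA L (fun x => u x ^ (1+1/(d:ℝ))) t ≤ ∫ x, v x ^ (1+1/(d:ℝ)) := by
  have hc1 := rpow_cont hv (q := 1+1/(d:ℝ)) (by positivity)
  have hs1 := rpow_supp hcv (q := 1+1/(d:ℝ)) (by positivity)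
  rw [← sA_integral hmp hc1 hs1]
  have e : ∫ t in S, sA L (fun x => u x ^ (1+1/(d:ℝ))) t = ∫ t in S, sA L (fun x => v x ^ (1+1/(d:ℝ))) t := by
    apply setIntegral_congr_fun hS
    intro t ht
    simp only [sA]
    congr 1
    ext y
    rw [h t ht y]
  rw [e]
  apply setIntegral_le_integral
  · exact (sA_cont hc1 hs1).integrable_of_hasCompactSupport (sA_supp hs1)
  · exact Eventually.of_forall fun t => integral_nonneg fun y => Real.rpow_nonneg (v0 _) _

theorem H2_aux (hd : 1 ≤ d) {θ : V (d+1)} (hθ : ‖θ‖ = 1) (hmp : MeasurePreserving L volume volume)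
    (hin : ∀ t y, inner ℝ θ (L (t,y)) = t)
    {u : V (d+1) → ℝ} (hu : ContDiff ℝ 1 u) (hc : HasCompactSupport u) (h0 : ∀ x, 0 ≤ u x)
    (t0 : ℝ) {h C : ℝ} (hh : 0 < h) (hC : ∀ t ∈ Icc t0 (t0+h), sA L u t ≤ C) :
    ((d:ℝ)+1) * om (d+1) ^ (1/((d:ℝ)+1)) *
      ((∫ t in Iic t0, sA L (fun x => u x ^ (1+1/(d:ℝ))) t) ^ ((d:ℝ)/(d+1)) +
       (∫ t in Ioi (t0+h), sA L (fun x => u x ^ (1+1/(d:ℝ))) t) ^ ((d:ℝ)/(d+1))) ≤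
      (∫ x, ‖fderiv ℝ u x‖) + 2 * C := by
  obtain ⟨χ, hχ, χ0, χ1, χz, χo, χ', χs, χc, χi⟩ := exists_ramp t0 hh
  let φ : V (d+1) → ℝ := fun x => χ (inner ℝ θ x)
  have hφ : ContDiff ℝ 1 φ := hχ.comp (contDiff_const.inner ℝ contDiff_id)
  have hφL : ∀ t y, φ (L (t,y)) = χ t := fun t y => by simp only [φ, hin]
  have hφd : ∀ x, HasFDerivAt φ (deriv χ (inner ℝ θ x) • innerSL ℝ θ) x := by
    intro x
    have h1 : HasDerivAt χ (deriv χ (inner ℝ θ x)) (innerSL ℝ θ x) :=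
      (hχ.differentiable (by norm_num) _).hasDerivAt
    exact h1.comp_hasFDerivAt x (innerSL ℝ θ).hasFDerivAt
  have hud : ∀ x, HasFDerivAt u (fderiv ℝ u x) x := fun x =>
    (hu.differentiable (by norm_num) x).hasFDerivAt
  let u1 : V (d+1) → ℝ := fun x => u x * φ x
  let u2 : V (d+1) → ℝ := fun x => u x * (1 - φ x)
  have hu1 : ContDiff ℝ 1 u1 := hu.mul hφ
  have hu2 : ContDiff ℝ 1 u2 := hu.mul (contDiff_const.sub hφ)
  have hc1 : HasCompactSupport u1 := HasCompactSupport.mul_right hc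
  have hc2 : HasCompactSupport u2 := HasCompactSupport.mul_right hc
  have p1 : ∀ x, 0 ≤ u1 x := fun x => mul_nonneg (h0 x) (χ0 _)
  have p2 : ∀ x, 0 ≤ u2 x := fun x => mul_nonneg (h0 x) (by have := χ1 (inner ℝ θ x); simp only [φ]; linarith)
  have d1 : ∀ x, ‖fderiv ℝ u1 x‖ ≤ φ x * ‖fderiv ℝ u x‖ + deriv χ (inner ℝ θ x) * u x := by
    intro x
    have := ((hud x).mul (hφd x)).fderiv
    rw [show fderiv ℝ u1 x = _ from this]
    refine (norm_add_le _ _).trans ?_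
    rw [norm_smul, norm_smul, norm_smul, innerSL_apply_norm, hθ, Real.norm_of_nonneg (h0 x),
      Real.norm_of_nonneg (χ' _), Real.norm_of_nonneg (show 0 ≤ φ x from χ0 _)]
    linarith
  have d2 : ∀ x, ‖fderiv ℝ u2 x‖ ≤ (1 - φ x) * ‖fderiv ℝ u x‖ + deriv χ (inner ℝ θ x) * u x := by
    intro x
    have := ((hud x).mul ((hφd x).const_sub 1)).fderiv
    rw [show fderiv ℝ u2 x = _ from this]
    refine (norm_add_le _ _).trans ?_
    rw [norm_smul, norm_smul, norm_neg, norm_smul, innerSL_apply_norm, hθ, Real.norm_of_nonneg (h0 x),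
      Real.norm_of_nonneg (χ' _), Real.norm_of_nonneg (show 0 ≤ 1 - φ x from by have := χ1 (inner ℝ θ x); simp only [φ]; linarith)]
    linarith
  have i1 : Integrable (fun x => ‖fderiv ℝ u1 x‖) volume :=
    (hu1.continuous_fderiv (by norm_num)).norm.integrable_of_hasCompactSupport (hc1.fderiv ℝ).norm
  have i2 : Integrable (fun x => ‖fderiv ℝ u2 x‖) volume :=
    (hu2.continuous_fderiv (by norm_num)).norm.integrable_of_hasCompactSupport (hc2.fderiv ℝ).norm
  have i0 : Integrable (fun x => ‖fderiv ℝ u x‖) volume :=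
    (hu.continuous_fderiv (by norm_num)).norm.integrable_of_hasCompactSupport (hc.fderiv ℝ).norm
  have cχ' := hχ.continuous_deriv (by norm_num)
  have cχu : Continuous (fun x => deriv χ (inner ℝ θ x) * u x) :=
    (cχ'.comp (innerSL ℝ θ).continuous).mul hu.continuous
  have sχu : HasCompactSupport (fun x => deriv χ (inner ℝ θ x) * u x) := HasCompactSupport.mul_left hc
  have i3 : Integrable (fun x => deriv χ (inner ℝ θ x) * u x) volume := cχu.integrable_of_hasCompactSupport sχu
  have hsum : (∫ x, ‖fderiv ℝ u1 x‖) + (∫ x, ‖fderiv ℝ u2 x‖) ≤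
      (∫ x, ‖fderiv ℝ u x‖) + 2 * ∫ x, deriv χ (inner ℝ θ x) * u x := by
    rw [← integral_add i1 i2, ← integral_const_mul, ← integral_add i0 (i3.const_mul 2)]
    apply integral_mono (i1.add i2) (i0.add (i3.const_mul 2))
    intro x
    have := d1 x
    have := d2 x
    simp only [Pi.add_apply]
    linarith
  have hχC : ∫ x, deriv χ (inner ℝ θ x) * u x ≤ C := by
    rw [← sA_integral hmp cχu sχu]
    have : ∀ t, sA L (fun x => deriv χ (inner ℝ θ x) * u x) t = deriv χ t * sA L u t := by
      intro t
      simp only [sA, hin, integral_const_mul]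
    simp only [this]
    have ii := cχ'.integrable_of_hasCompactSupport χc (μ := volume)
    calc _ ≤ ∫ t, deriv χ t * C := by
          apply integral_mono
          · exact (cχ'.mul (sA_cont hu.continuous hc)).integrable_of_hasCompactSupport (χc.mul_right)
          · exact ii.mul_const _
          · intro t
            by_cases ht : t ∈ Icc t0 (t0+h)
            · exact mul_le_mul_of_nonneg_left (hC t ht) (χ' t)
            · simp [χs t ht]
      _ = C := by rw [integral_mul_const, χi, one_mul]
  have l1 := sA_set_le (L := L) hd hmp (u := u) hu1.continuous hc1 p1 (S := Ioi (t0+h)) measurableSet_Ioi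
    (by intro t ht y; simp only [u1, hφL, χo t (le_of_lt ht), mul_one])
  have l2 := sA_set_le (L := L) hd hmp (u := u) hu2.continuous hc2 p2 (S := Iic t0) measurableSet_Iic
    (by intro t ht y; simp only [u2, hφL, χz t ht, sub_zero, mul_one])
  have s1 := sob_all hd u1 hu1 hc1 p1
  have s2 := sob_all hd u2 hu2 hc2 p2
  have hom := om_pos (d+1)
  have A0 : ∀ t, 0 ≤ sA L (fun x => u x ^ (1+1/(d:ℝ))) t := fun t =>
    integral_nonneg fun y => Real.rpow_nonneg (h0 _) _
  have q1 : 0 ≤ ∫ t in Ioi (t0+h), sA L (fun x => u x ^ (1+1/(d:ℝ))) t := integral_nonneg A0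
  have q2 : 0 ≤ ∫ t in Iic t0, sA L (fun x => u x ^ (1+1/(d:ℝ))) t := integral_nonneg A0
  have r1 : ((d:ℝ)+1) * om (d+1) ^ (1/((d:ℝ)+1)) *
      (∫ t in Ioi (t0+h), sA L (fun x => u x ^ (1+1/(d:ℝ))) t) ^ ((d:ℝ)/(d+1)) ≤ ∫ x, ‖fderiv ℝ u1 x‖ := by
    refine le_trans ?_ s1
    gcongr
  have r2 : ((d:ℝ)+1) * om (d+1) ^ (1/((d:ℝ)+1)) *
      (∫ t in Iic t0, sA L (fun x => u x ^ (1+1/(d:ℝ))) t) ^ ((d:ℝ)/(d+1)) ≤ ∫ x, ‖fderiv ℝ u2 x‖ := by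
    refine le_trans ?_ s2
    gcongr
  rw [mul_add]
  linarith

theorem H2_all (hd : 1 ≤ d) {θ : V (d+1)} (hθ : ‖θ‖ = 1) (hmp : MeasurePreserving L volume volume)
    (hin : ∀ t y, inner ℝ θ (L (t,y)) = t)
    {u : V (d+1) → ℝ} (hu : ContDiff ℝ 1 u) (hc : HasCompactSupport u) (h0 : ∀ x, 0 ≤ u x) (t0 : ℝ) :
    ((d:ℝ)+1) * om (d+1) ^ (1/((d:ℝ)+1)) *
      ((∫ t in Iic t0, sA L (fun x => u x ^ (1+1/(d:ℝ))) t) ^ ((d:ℝ)/(d+1)) +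
       ((∫ t, sA L (fun x => u x ^ (1+1/(d:ℝ))) t) -
         ∫ t in Iic t0, sA L (fun x => u x ^ (1+1/(d:ℝ))) t) ^ ((d:ℝ)/(d+1))) ≤
      (∫ x, ‖fderiv ℝ u x‖) + 2 * sA L u t0 := by
  have cA : Continuous (sA L (fun x => u x ^ (1+1/(d:ℝ)))) :=
    sA_cont (rpow_cont hu.continuous (by positivity)) (rpow_supp hc (by positivity))
  have iA : Integrable (sA L (fun x => u x ^ (1+1/(d:ℝ)))) volume :=
    cA.integrable_of_hasCompactSupport (sA_supp (rpow_supp hc (by positivity)))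
  set A := sA L (fun x => u x ^ (1+1/(d:ℝ)))
  have ca : Continuous (sA L u) := sA_cont hu.continuous hc
  apply le_of_forall_pos_le_add
  intro ε hε
  have hev : ∀ᶠ h in 𝓝[>] (0:ℝ), ((d:ℝ)+1) * om (d+1) ^ (1/((d:ℝ)+1)) *
      ((∫ t in Iic t0, A t) ^ ((d:ℝ)/(d+1)) +
       ((∫ t, A t) - ∫ t in Iic (t0+h), A t) ^ ((d:ℝ)/(d+1))) ≤
      (∫ x, ‖fderiv ℝ u x‖) + 2 * (sA L u t0 + ε/2) := by
    have h1 := ca.continuousAt (x := t0) |>.eventually (Iio_mem_nhds (show sA L u t0 < sA L u t0 + ε/2 by linarith))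
    obtain ⟨r, hr, hball⟩ := Metric.eventually_nhds_iff.1 h1
    filter_upwards [Ioo_mem_nhdsGT hr] with h hh
    have := H2_aux hd hθ hmp hin hu hc h0 t0 (C := sA L u t0 + ε/2) hh.1 (by
      intro t ht
      refine le_of_lt (hball ?_)
      rw [Real.dist_eq, abs_lt]
      constructor <;> linarith [ht.1, ht.2, hh.1, hh.2])
    have e : (∫ t, A t) - ∫ t in Iic (t0+h), A t = ∫ t in Ioi (t0+h), A t := by
      rw [← intervalIntegral.integral_Iic_add_Ioi (b := t0+h) iA.integrableOn iA.integrableOn]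
      ring
    rw [e]
    exact this
  have hcc : Continuous (fun t => ∫ x in Iic t, A x) :=
    continuous_iff_continuousAt.2 fun t => (cdf_deriv cA iA t).continuousAt
  have hlim : Tendsto (fun h => ((d:ℝ)+1) * om (d+1) ^ (1/((d:ℝ)+1)) *
      ((∫ t in Iic t0, A t) ^ ((d:ℝ)/(d+1)) +
       ((∫ t, A t) - ∫ t in Iic (t0+h), A t) ^ ((d:ℝ)/(d+1)))) (𝓝[>] 0)
      (𝓝 (((d:ℝ)+1) * om (d+1) ^ (1/((d:ℝ)+1)) *
      ((∫ t in Iic t0, A t) ^ ((d:ℝ)/(d+1)) +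
       ((∫ t, A t) - ∫ t in Iic (t0+0), A t) ^ ((d:ℝ)/(d+1))))) := by
    apply Tendsto.mono_left _ nhdsWithin_le_nhds
    have h1 : Continuous (fun h : ℝ => (∫ t, A t) - ∫ t in Iic (t0+h), A t) :=
      continuous_const.sub (hcc.comp (continuous_const.add continuous_id))
    exact (continuous_const.mul (continuous_const.add
      (rpow_cont h1 (q := (d:ℝ)/(d+1)) (by positivity)))).tendsto 0
  have := le_of_tendsto hlim hev
  rw [add_zero] at this
  linarith
end
end Iso

namespace Iso
open MeasureTheory Filter Set Metric
open scoped ENNReal NNReal Topology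

theorem exists_kap (d : ℕ) : ∃ κ : ℝ≥0∞, κ ≠ 0 ∧ κ ≠ ⊤ ∧ ∀ s : Set (V d), μH[(d:ℝ)] s = κ * volume s := by
  have h : (μH[(Module.finrank ℝ (V d) : ℝ)] : Measure (V d)).IsAddHaarMeasure :=
    isAddHaarMeasure_hausdorffMeasure
  rw [finrank_euclideanSpace_fin] at h
  have e := Measure.isAddLeftInvariant_eq_smul (μH[(d:ℝ)] : Measure (V d)) volume
  generalize (μH[(d:ℝ)] : Measure (V d)).addHaarScalarFactor volume = c at e
  refine ⟨(c : ℝ≥0∞), ?_, ENNReal.coe_ne_top, fun s => ?_⟩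
  · intro h0
    have h0' : c = 0 := by exact_mod_cast h0
    have : (μH[(d:ℝ)] : Measure (V d)) univ = 0 := by rw [e, h0']; simp
    exact (Measure.measure_univ_ne_zero.2 (NeZero.ne (μH[(d:ℝ)] : Measure (V d)))) this
  · rw [e]; rfl

noncomputable def kap (d : ℕ) : ℝ≥0∞ := (exists_kap d).choose
theorem kap_ne (d : ℕ) : kap d ≠ 0 := (exists_kap d).choose_spec.1
theorem kap_top (d : ℕ) : kap d ≠ ⊤ := (exists_kap d).choose_spec.2.1
theorem kap_eq {d : ℕ} (s : Set (V d)) : μH[(d:ℝ)] s = kap d * volume s := (exists_kap d).choose_spec.2.2 s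
theorem vol_eq {d : ℕ} (s : Set (V d)) : volume s = (kap d)⁻¹ * μH[(d:ℝ)] s := by
  rw [kap_eq, ← mul_assoc, ENNReal.inv_mul_cancel (kap_ne d) (kap_top d), one_mul]

/-- sweep of `T` -/
def W {d : ℕ} (θ : V (d+1)) (h : ℝ) (T : Set (V (d+1))) : Set (V (d+1)) :=
  {y | ∃ s ∈ Icc 0 h, y + s • θ ∈ T}

theorem W_vol {d : ℕ} {θ : V (d+1)} (hθ : ‖θ‖ = 1) {h δ : ℝ} (T : Set (V (d+1)))
    (hT : ∀ x ∈ T, ∀ y ∈ T, dist x y ≤ δ) :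
    volume (W θ h T) ≤ ENNReal.ofReal (h + 2 * δ) * ((kap d)⁻¹ * μH[(d:ℝ)] T) := by
  obtain ⟨L, hn, hmp, hL1, hin⟩ := exists_split d θ hθ
  rcases T.eq_empty_or_nonempty with rfl | ⟨z, hz⟩
  · simp [W]
  have hemb : MeasurableEmbedding L := L.toHomeomorph.measurableEmbedding
  rw [← hmp.measure_preimage_emb hemb]
  set π : V (d+1) → V d := fun x => (L.symm x).2 with hπ
  have hnorm : ∀ x, ‖x‖^2 = (L.symm x).1^2 + ‖(L.symm x).2‖^2 := by
    intro x
    have := hn (L.symm x).1 (L.symm x).2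
    simpa using this
  have hlip : LipschitzWith 1 π := by
    refine LipschitzWith.of_dist_le_mul fun x y => ?_
    simp only [hπ, NNReal.coe_one, one_mul, dist_eq_norm]
    have := hnorm (x - y)
    rw [map_sub, Prod.snd_sub] at this
    exact abs_le_of_sq_le_sq' (by nlinarith [sq_nonneg ((L.symm x - L.symm y).1)]) (norm_nonneg _) |>.2
  have h1 : ∀ x, |(L.symm x).1| ≤ ‖x‖ := fun x => by
    apply abs_le_of_sq_le_sq _ (norm_nonneg _)
    rw [hnorm x]; nlinarith [sq_nonneg ‖(L.symm x).2‖]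
  have hsub : L ⁻¹' (W θ h T) ⊆ Icc ((L.symm z).1 - δ - h) ((L.symm z).1 + δ) ×ˢ (π '' T) := by
    rintro ⟨t, y⟩ ⟨s, hs, hm⟩
    have e : L (t, y) + s • θ = L (t + s, y) := by
      rw [← hL1, ← map_smul, ← map_add]; simp
    rw [e] at hm
    have h2 := h1 (L (t+s, y) - z)
    rw [← dist_eq_norm] at h2
    have h3 := h2.trans (hT _ hm _ hz)
    rw [map_sub, L.symm_apply_apply, Prod.fst_sub, abs_le] at h3
    simp only at h3
    refine ⟨⟨by linarith [hs.2], by linarith [hs.1]⟩, ⟨_, hm, by simp [hπ]⟩⟩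
  refine (measure_mono hsub).trans ?_
  rw [Measure.volume_eq_prod, Measure.prod_prod, Real.volume_Icc]
  refine mul_le_mul' (ENNReal.ofReal_le_ofReal (by linarith)) ?_
  rw [vol_eq]
  refine mul_le_mul_right ?_ _
  simpa using hlip.hausdorffMeasure_image_le (Nat.cast_nonneg d) T

theorem W_bound {d : ℕ} {θ : V (d+1)} (hθ : ‖θ‖ = 1) {h δ r : ℝ} (hδ : 0 < δ) (hr : h + δ ≤ r)
    {S : Set (V (d+1))} (hS : MeasurableSet S) {f : V (d+1) → ℝ≥0∞} {ε : ℝ≥0∞}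
    (hfe : ∀ x y, dist x y ≤ r → f x ≤ f y + ε) :
    ∫⁻ y in W θ h S, f y ≤
      ENNReal.ofReal (h + 2 * δ) * ((kap d)⁻¹ * ∫⁻ z in S, (f z + ε) ∂(μH[(d:ℝ)])) := by
  obtain ⟨As, hAm, hAb, hAd, hAu, hAp⟩ :=
    SeparableSpace.exists_measurable_partition_diam_le (V (d+1)) hδ
  set T : ℕ → Set (V (d+1)) := fun i => S ∩ As i
  have hTm : ∀ i, MeasurableSet (T i) := fun i => hS.inter (hAm i)
  have hSu : S = ⋃ i, T i := by rw [← inter_iUnion, hAu, inter_univ]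
  have hTd : ∀ i, ∀ x ∈ T i, ∀ y ∈ T i, dist x y ≤ δ := fun i x hx y hy =>
    (dist_le_diam_of_mem (hAb i) hx.2 hy.2).trans (hAd i)
  have hWu : W θ h S = ⋃ i, W θ h (T i) := by
    ext y
    simp only [W, mem_iUnion]
    constructor
    · rintro ⟨s, hs, hm⟩
      rw [hSu] at hm
      obtain ⟨i, hi⟩ := mem_iUnion.1 hm
      exact ⟨i, s, hs, hi⟩
    · rintro ⟨i, s, hs, hm⟩
      exact ⟨s, hs, hm.1⟩
  have hpiece : ∀ i, ∫⁻ y in W θ h (T i), f y ≤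
      ENNReal.ofReal (h + 2 * δ) * ((kap d)⁻¹ * ∫⁻ z in T i, (f z + ε) ∂(μH[(d:ℝ)])) := by
    intro i
    set c : ℝ≥0∞ := ⨅ z ∈ T i, (f z + ε)
    have h1 : ∫⁻ y in W θ h (T i), f y ≤ ∫⁻ y in W θ h (T i), c := by
      refine setLIntegral_mono measurable_const fun y hy => ?_
      refine le_iInf₂ fun z hz => hfe _ _ ?_
      obtain ⟨s, hs, hm⟩ := hy
      calc dist y z ≤ dist y (y + s • θ) + dist (y + s • θ) z := dist_triangle _ _ _
        _ ≤ h + δ := by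
          refine add_le_add ?_ (hTd i _ hm _ hz)
          rw [dist_self_add_right, norm_smul, hθ, mul_one, Real.norm_eq_abs, abs_of_nonneg hs.1]
          exact hs.2
        _ ≤ r := hr
    refine h1.trans ?_
    rw [setLIntegral_const]
    have h2 : c * μH[(d:ℝ)] (T i) ≤ ∫⁻ z in T i, (f z + ε) ∂(μH[(d:ℝ)]) := by
      rw [← setLIntegral_const]
      exact setLIntegral_mono' (hTm i) fun z hz => iInf₂_le z hz
    calc c * volume (W θ h (T i)) ≤ c * (ENNReal.ofReal (h + 2 * δ) * ((kap d)⁻¹ * μH[(d:ℝ)] (T i))) :=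
          mul_le_mul_right (W_vol hθ _ (hTd i)) _
      _ = ENNReal.ofReal (h + 2 * δ) * ((kap d)⁻¹ * (c * μH[(d:ℝ)] (T i))) := by ring
      _ ≤ _ := by gcongr
  rw [hWu]
  refine (lintegral_iUnion_le _ _).trans ((ENNReal.tsum_le_tsum hpiece).trans ?_)
  rw [ENNReal.tsum_mul_left, ENNReal.tsum_mul_left, ← lintegral_iUnion hTm, ← hSu]
  intro i j hij
  exact (hAp hij).mono inter_subset_right inter_subset_right

theorem seg_frontier {d : ℕ} {θ : V (d+1)} {h : ℝ} (hh : 0 ≤ h) (E : Set (V (d+1))) (y : V (d+1))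
    (hy : ¬ (y + h • θ ∈ E ↔ y ∈ E)) : y ∈ W θ h (frontier E) := by
  by_contra hW
  have hc : IsPreconnected ((fun s : ℝ => y + s • θ) '' Icc 0 h) :=
    isPreconnected_Icc.image _ (by fun_prop)
  have hsub : (fun s : ℝ => y + s • θ) '' Icc 0 h ⊆ interior E ∪ interior Eᶜ := by
    rintro _ ⟨s, hs, rfl⟩
    by_contra hn
    apply hW
    refine ⟨s, hs, ?_⟩
    simp only [mem_union, not_or, interior_compl, mem_compl_iff, not_not] at hn
    exact ⟨hn.2, hn.1⟩
  have h0 : y ∈ (fun s : ℝ => y + s • θ) '' Icc 0 h := ⟨0, ⟨le_rfl, hh⟩, by simp⟩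
  have h1 : y + h • θ ∈ (fun s : ℝ => y + s • θ) '' Icc 0 h := ⟨h, ⟨hh, le_rfl⟩, rfl⟩
  have hdis : Disjoint (interior E) (interior Eᶜ) :=
    Disjoint.mono interior_subset interior_subset (disjoint_compl_right (a := E))
  rcases hc.subset_or_subset isOpen_interior isOpen_interior hdis hsub with h2 | h2
  · exact hy ⟨fun _ => interior_subset (h2 h0), fun _ => interior_subset (h2 h1)⟩
  · exact hy ⟨fun k => absurd k (interior_subset (h2 h1)), fun k => absurd k (interior_subset (h2 h0))⟩

end Iso

namespace Iso
open MeasureTheory Filter Set Metric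
open scoped ENNReal NNReal Topology

/-- mollification of an indicator -/
noncomputable def mol {d : ℕ} (E : Set (V (d+1))) (ρ : V (d+1) → ℝ) : V (d+1) → ℝ :=
  convolution ρ (E.indicator (fun _ => (1:ℝ))) (ContinuousLinearMap.lsmul ℝ ℝ) volume

section
variable {d : ℕ} {E : Set (V (d+1))} {ρ : V (d+1) → ℝ}

theorem mol_eq (x : V (d+1)) : mol E ρ x = ∫ y, ρ (x - y) * E.indicator (fun _ => (1:ℝ)) y := by
  unfold mol; rw [convolution_lsmul_swap]; rfl

theorem ind_li (hE : MeasurableSet E) : LocallyIntegrable (E.indicator (fun _ => (1:ℝ))) (volume : Measure (V (d+1))) :=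
  (locallyIntegrable_const (1:ℝ)).indicator hE

theorem mol_contDiff (hE : MeasurableSet E) (hρ : ContDiff ℝ 1 ρ) (hc : HasCompactSupport ρ) :
    ContDiff ℝ 1 (mol E ρ) := by
  have h := HasCompactSupport.contDiff_convolution_left (n := 1) (ContinuousLinearMap.lsmul ℝ ℝ) hc
    (by exact_mod_cast hρ) (ind_li hE)
  exact_mod_cast h

theorem mol_int (hE : MeasurableSet E) (hρ : Continuous ρ) (hc : HasCompactSupport ρ) (x : V (d+1)) :
    Integrable (fun y => ρ (x - y) * E.indicator (fun _ => (1:ℝ)) y) := by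
  have h1 : Integrable (fun y => ρ (x - y)) := (hρ.integrable_of_hasCompactSupport hc).comp_sub_left x
  refine h1.mul_bdd (c := 1) ((measurable_const.indicator hE).aestronglyMeasurable) (ae_of_all _ fun y => ?_)
  by_cases hy : y ∈ E <;> simp [hy]

theorem mol_diff (hE : MeasurableSet E) (hρ : Continuous ρ) (hc : HasCompactSupport ρ) (h0 : ∀ x, 0 ≤ ρ x)
    {θ : V (d+1)} {h : ℝ} (hh : 0 ≤ h) (x : V (d+1)) :
    ‖mol E ρ (x + h • θ) - mol E ρ x‖ₑ ≤ ∫⁻ y in W θ h (frontier E), ENNReal.ofReal (ρ (x - y)) := by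
  have e1 : mol E ρ (x + h • θ) = ∫ y, ρ (x - y) * E.indicator (fun _ => (1:ℝ)) (y + h • θ) := by
    rw [mol_eq, ← integral_add_right_eq_self _ (h • θ)]
    congr 1; ext y; rw [add_sub_add_right_eq_sub]
  have i1 : Integrable (fun y => ρ (x - y) * E.indicator (fun _ => (1:ℝ)) (y + h • θ)) := by
    have := (mol_int hE hρ hc (x + h • θ)).comp_add_right (h • θ)
    simpa only [add_sub_add_right_eq_sub] using this
  rw [e1, mol_eq, ← integral_sub i1 (mol_int hE hρ hc x)]
  refine (enorm_integral_le_lintegral_enorm _).trans (le_trans ?_ (lintegral_indicator_le _ _))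
  refine lintegral_mono fun y => ?_
  by_cases hy : y ∈ W θ h (frontier E)
  · rw [indicator_of_mem hy]
    rw [← ofReal_norm]
    apply ENNReal.ofReal_le_ofReal
    rw [← mul_sub, norm_mul, Real.norm_of_nonneg (h0 _)]
    apply mul_le_of_le_one_right (h0 _)
    by_cases a : y + h • θ ∈ E <;> by_cases b : y ∈ E <;> simp [a, b]
  · have := (seg_frontier (θ := θ) hh E y).mt hy
    rw [not_not] at this
    by_cases b : y ∈ E
    · simp [b, this.2 b]
    · simp [b, mt this.1 b]

theorem mol_grad_pt (hE : MeasurableSet E) (hρ : ContDiff ℝ 1 ρ) (hc : HasCompactSupport ρ) (h0 : ∀ x, 0 ≤ ρ x)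
    (hS : μH[(d:ℝ)] (frontier E) ≠ ⊤) (x : V (d+1)) :
    ‖fderiv ℝ (mol E ρ) x‖ₑ ≤ (kap d)⁻¹ * ∫⁻ z in frontier E, ENNReal.ofReal (ρ (x - z)) ∂(μH[(d:ℝ)]) := by
  have hk : (kap d)⁻¹ ≠ ⊤ := ENNReal.inv_ne_top.2 (kap_ne d)
  obtain ⟨C, hC⟩ := hc.exists_bound_of_continuous hρ.continuous
  have hfin : ∫⁻ z in frontier E, ENNReal.ofReal (ρ (x - z)) ∂(μH[(d:ℝ)]) ≠ ⊤ := by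
    refine ne_top_of_le_ne_top (ENNReal.mul_ne_top (ENNReal.ofReal_ne_top (r := C)) hS) ?_
    rw [← setLIntegral_const]
    exact lintegral_mono fun z => ENNReal.ofReal_le_ofReal ((le_abs_self _).trans (hC _))
  set I := ∫⁻ z in frontier E, ENNReal.ofReal (ρ (x - z)) ∂(μH[(d:ℝ)]) with hI
  have key : ∀ ε : ℝ, 0 < ε → ‖fderiv ℝ (mol E ρ) x‖ₑ ≤
      (kap d)⁻¹ * (I + ENNReal.ofReal ε * μH[(d:ℝ)] (frontier E)) := by
    intro ε hε
    set X := (kap d)⁻¹ * (I + ENNReal.ofReal ε * μH[(d:ℝ)] (frontier E)) with hX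
    have hXt : X ≠ ⊤ := ENNReal.mul_ne_top hk (ENNReal.add_ne_top.2 ⟨hfin, ENNReal.mul_ne_top ENNReal.ofReal_ne_top hS⟩)
    obtain ⟨r, hr, hru⟩ := Metric.uniformContinuous_iff.1 (hc.uniformContinuous_of_continuous hρ.continuous) ε hε
    have hd1 : HasFDerivAt (mol E ρ) (fderiv ℝ (mol E ρ) x) x :=
      ((mol_contDiff hE hρ hc).differentiable one_ne_zero x).hasFDerivAt
    have hle : ‖fderiv ℝ (mol E ρ) x‖ ≤ X.toReal := by
      refine hd1.le_of_lip' ENNReal.toReal_nonneg ?_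
      filter_upwards [ball_mem_nhds x (half_pos hr)] with y hy
      rcases eq_or_ne y x with rfl | hyx
      · simp
      set h := ‖y - x‖ with hh
      have hpos : 0 < h := norm_pos_iff.2 (sub_ne_zero.2 hyx)
      have hlt : h < r / 2 := by rwa [mem_ball, dist_eq_norm] at hy
      set θ : V (d+1) := h⁻¹ • (y - x)
      have hθ : ‖θ‖ = 1 := by rw [norm_smul, norm_inv, Real.norm_of_nonneg hpos.le, ← hh, inv_mul_cancel₀ hpos.ne']
      have hy' : y = x + h • θ := by rw [smul_inv_smul₀ hpos.ne']; abel
      have hb : ∀ δ : ℝ, 0 < δ → δ < r/4 → ‖mol E ρ y - mol E ρ x‖ₑ ≤ ENNReal.ofReal (h + 2 * δ) * X := by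
        intro δ hδ hδ'
        rw [hy']
        refine (mol_diff hE hρ.continuous hc h0 hpos.le x).trans ?_
        refine (W_bound hθ hδ (r := 3*r/4) (by linarith) isClosed_frontier.measurableSet
          (ε := ENNReal.ofReal ε) ?_).trans_eq ?_
        · intro a b hab
          rw [← ENNReal.ofReal_add (h0 _) hε.le]
          apply ENNReal.ofReal_le_ofReal
          have := hru (a := x - a) (b := x - b) (by rw [dist_sub_left]; linarith)
          rw [Real.dist_eq, abs_lt] at this
          linarith [this.2]
        · rw [lintegral_add_right _ measurable_const, setLIntegral_const]
      have hlim : Tendsto (fun δ : ℝ => ENNReal.ofReal (h + 2 * δ) * X) (𝓝[>] 0)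
          (𝓝 (ENNReal.ofReal (h + 2 * 0) * X)) := by
        refine ENNReal.Tendsto.mul_const ?_ (Or.inr hXt)
        apply ENNReal.tendsto_ofReal
        exact tendsto_nhdsWithin_of_tendsto_nhds ((by fun_prop : Continuous fun δ : ℝ => h + 2 * δ).tendsto 0)
      have hfinal : ‖mol E ρ y - mol E ρ x‖ₑ ≤ ENNReal.ofReal (h + 2 * 0) * X := by
        refine ge_of_tendsto hlim ?_
        filter_upwards [Ioo_mem_nhdsGT (show (0:ℝ) < r/4 by linarith)] with δ hδ
        exact hb δ hδ.1 hδ.2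
      rw [mul_zero, add_zero, ← ofReal_norm] at hfinal
      have := ENNReal.toReal_mono (ENNReal.mul_ne_top ENNReal.ofReal_ne_top hXt) hfinal
      rw [ENNReal.toReal_ofReal (norm_nonneg _), ENNReal.toReal_mul, ENNReal.toReal_ofReal hpos.le] at this
      rw [mul_comm]; exact this
    rw [← ofReal_norm]
    exact ENNReal.ofReal_le_of_le_toReal hle
  have hlim : Tendsto (fun ε : ℝ => (kap d)⁻¹ * (I + ENNReal.ofReal ε * μH[(d:ℝ)] (frontier E))) (𝓝[>] 0)
      (𝓝 ((kap d)⁻¹ * (I + ENNReal.ofReal 0 * μH[(d:ℝ)] (frontier E)))) := by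
    refine ENNReal.Tendsto.const_mul ?_ (Or.inr hk)
    refine tendsto_const_nhds.add (ENNReal.Tendsto.mul_const ?_ (Or.inr hS))
    apply ENNReal.tendsto_ofReal
    exact tendsto_nhdsWithin_of_tendsto_nhds tendsto_id
  have := ge_of_tendsto hlim (eventually_mem_nhdsWithin.mono fun ε hε => key ε hε)
  simpa using this

theorem mol_grad (hE : MeasurableSet E) (hρ : ContDiff ℝ 1 ρ) (hc : HasCompactSupport ρ) (h0 : ∀ x, 0 ≤ ρ x)
    (h1 : ∫ x, ρ x = 1) (hS : μH[(d:ℝ)] (frontier E) ≠ ⊤) :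
    ∫⁻ x, ‖fderiv ℝ (mol E ρ) x‖ₑ ≤ (kap d)⁻¹ * μH[(d:ℝ)] (frontier E) := by
  refine (lintegral_mono fun x => mol_grad_pt hE hρ hc h0 hS x).trans ?_
  rw [lintegral_const_mul' _ _ (ENNReal.inv_ne_top.2 (kap_ne d))]
  refine mul_le_mul_right ?_ _
  have : IsFiniteMeasure ((μH[(d:ℝ)] : Measure (V (d+1))).restrict (frontier E)) :=
    isFiniteMeasure_restrict.2 hS
  have hcont := hρ.continuous
  rw [lintegral_lintegral_swap (by
    apply Measurable.aemeasurable
    apply ENNReal.measurable_ofReal.comp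
    exact (by fun_prop : Continuous fun p : V (d+1) × V (d+1) => ρ (p.1 - p.2)).measurable)]
  have : ∀ y : V (d+1), ∫⁻ x, ENNReal.ofReal (ρ (x - y)) = 1 := by
    intro y
    rw [lintegral_sub_right_eq_self (fun x => ENNReal.ofReal (ρ x)) y,
      ← ofReal_integral_eq_lintegral_ofReal (hcont.integrable_of_hasCompactSupport hc) (ae_of_all _ h0), h1]
    simp
  simp only [this]
  simp
end

end Iso

namespace Iso
open MeasureTheory Filter Set Metric
open scoped ENNReal NNReal Topology

section
variable {d : ℕ} {E : Set (V (d+1))} {ρ : V (d+1) → ℝ}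

theorem ind_int (hE : MeasurableSet E) (hEf : volume E ≠ ⊤) :
    Integrable (E.indicator (fun _ => (1:ℝ))) (volume : Measure (V (d+1))) :=
  (integrable_indicator_iff hE).2 (integrableOn_const hEf)

theorem mol_nonneg (h0 : ∀ x, 0 ≤ ρ x) (x : V (d+1)) : 0 ≤ mol E ρ x := by
  rw [mol_eq]
  exact integral_nonneg fun y => mul_nonneg (h0 _) (indicator_nonneg (fun _ _ => zero_le_one) _)

theorem mol_le (hE : MeasurableSet E) (hρ : Continuous ρ) (hc : HasCompactSupport ρ) (h0 : ∀ x, 0 ≤ ρ x)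
    (h1 : ∫ x, ρ x = 1) (x : V (d+1)) : mol E ρ x ≤ 1 := by
  have h1' := h1
  rw [← integral_sub_left_eq_self ρ volume x] at h1'
  rw [mol_eq]
  refine le_trans ?_ h1'.le
  refine integral_mono (mol_int hE hρ hc x) ((hρ.integrable_of_hasCompactSupport hc).comp_sub_left x) fun y => ?_
  apply mul_le_of_le_one_right (h0 _)
  by_cases hy : y ∈ E <;> simp [hy]

theorem mol_approx (hE : MeasurableSet E) (hEf : volume E ≠ ⊤) {η : ℝ} (hη : 0 < η) :
    ∃ ρ : V (d+1) → ℝ, ContDiff ℝ 1 ρ ∧ HasCompactSupport ρ ∧ (∀ x, 0 ≤ ρ x) ∧ ∫ x, ρ x = 1 ∧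
      Integrable (mol E ρ) ∧ ∫ x, |mol E ρ x - E.indicator (fun _ => (1:ℝ)) x| < η := by
  have hpos : ∀ k : ℕ, (0:ℝ) < 1/((k:ℝ)+1) := fun k => by positivity
  let φ : ℕ → ContDiffBump (0 : V (d+1)) := fun k =>
    { rIn := 1/((k:ℝ)+1), rOut := 2 * (1/((k:ℝ)+1)), rIn_pos := hpos k, rIn_lt_rOut := by linarith [hpos k] }
  set f : ℕ → V (d+1) → ℝ := fun k => (φ k).normed volume with hf
  have f1 : ∀ k, ContDiff ℝ 1 (f k) := fun k => by
    have := (φ k).contDiff_normed (μ := volume) (n := 1)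
    exact_mod_cast this
  have f2 : ∀ k, HasCompactSupport (f k) := fun k => (φ k).hasCompactSupport_normed
  have f3 : ∀ k x, 0 ≤ f k x := fun k x => (φ k).nonneg_normed x
  have f4 : ∀ k, ∫ x, f k x = 1 := fun k => (φ k).integral_normed
  have fi : ∀ k, Integrable (f k) := fun k => (f1 k).continuous.integrable_of_hasCompactSupport (f2 k)
  have gi := ind_int hE hEf
  have mi : ∀ k, Integrable (mol E (f k)) := fun k => Integrable.integrable_convolution _ (fi k) gi
  have mint : ∀ k, ∫ x, mol E (f k) x = ∫ x, E.indicator (fun _ => (1:ℝ)) x := by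
    intro k
    have := integral_convolution (μ := volume) (ContinuousLinearMap.lsmul ℝ ℝ) (fi k) gi
    rw [f4] at this
    refine Eq.trans this ?_
    simp
  have hae : ∀ᵐ x : V (d+1), Tendsto (fun k => mol E (f k) x) atTop (𝓝 (E.indicator (fun _ => (1:ℝ)) x)) := by
    refine ContDiffBump.ae_convolution_tendsto_right_of_locallyIntegrable (φ := φ) (K := 2) ?_ ?_ (ind_li hE)
    · have := (tendsto_one_div_add_atTop_nhds_zero_nat (𝕜 := ℝ)).const_mul 2
      rw [mul_zero] at this
      exact this
    · exact Eventually.of_forall fun k => le_rfl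
  have hlim : Tendsto (fun k => ∫ x, max (E.indicator (fun _ => (1:ℝ)) x - mol E (f k) x) 0) atTop
      (𝓝 (∫ x : V (d+1), (0:ℝ))) := by
    refine tendsto_integral_of_dominated_convergence (E.indicator (fun _ => (1:ℝ))) ?_ gi ?_ ?_
    · intro k
      exact (gi.sub (mi k)).aestronglyMeasurable.sup aestronglyMeasurable_const
    · intro k
      refine ae_of_all _ fun x => ?_
      rw [Real.norm_of_nonneg (le_max_right _ _)]
      exact max_le (by linarith [mol_nonneg (E := E) (f3 k) x]) (indicator_nonneg (fun _ _ => zero_le_one) _)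
    · filter_upwards [hae] with x hx
      have := (tendsto_const_nhds (x := E.indicator (fun _ => (1:ℝ)) x)).sub hx
      have := this.max (tendsto_const_nhds (x := (0:ℝ)))
      simpa using this
  rw [integral_zero] at hlim
  obtain ⟨k, hk⟩ := (hlim.eventually_lt_const (half_pos hη)).exists
  refine ⟨f k, f1 k, f2 k, f3 k, f4 k, mi k, ?_⟩
  have e : ∀ x, |mol E (f k) x - E.indicator (fun _ => (1:ℝ)) x| =
      (mol E (f k) x - E.indicator (fun _ => (1:ℝ)) x) + 2 * max (E.indicator (fun _ => (1:ℝ)) x - mol E (f k) x) 0 := by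
    intro x
    rcases le_total (mol E (f k) x) (E.indicator (fun _ => (1:ℝ)) x) with h | h
    · rw [abs_of_nonpos (by linarith), max_eq_left (by linarith)]; ring
    · rw [abs_of_nonneg (by linarith), max_eq_right (by linarith)]; ring
  simp only [e]
  have i1 : Integrable (fun x => mol E (f k) x - E.indicator (fun _ => (1:ℝ)) x) := (mi k).sub gi
  have i2 : Integrable (fun x => 2 * max (E.indicator (fun _ => (1:ℝ)) x - mol E (f k) x) 0) :=
    ((gi.sub (mi k)).pos_part).const_mul 2
  rw [integral_add i1 i2, integral_sub (mi k) gi, mint, integral_const_mul]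
  linarith

theorem exists_cutoff (d : ℕ) : ∃ C : ℝ, 0 ≤ C ∧ ∀ R : ℝ, 0 < R → ∃ χ : V (d+1) → ℝ, ContDiff ℝ 1 χ ∧
    HasCompactSupport χ ∧ (∀ x, 0 ≤ χ x) ∧ (∀ x, χ x ≤ 1) ∧ (∀ x, ‖x‖ ≤ R → χ x = 1) ∧
    ∀ x, ‖fderiv ℝ χ x‖ ≤ C / R := by
  let φ : ContDiffBump (0 : V (d+1)) := { rIn := 1, rOut := 2, rIn_pos := one_pos, rIn_lt_rOut := by norm_num }
  have hφ : ContDiff ℝ 1 φ := φ.contDiff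
  obtain ⟨C, hC⟩ := (φ.hasCompactSupport.fderiv (𝕜 := ℝ)).exists_bound_of_continuous (hφ.continuous_fderiv one_ne_zero)
  refine ⟨C, (norm_nonneg _).trans (hC 0), fun R hR => ⟨fun x => φ (R⁻¹ • x), ?_, ?_, fun x => φ.nonneg, fun x => φ.le_one, ?_, ?_⟩⟩
  · exact hφ.comp (contDiff_const_smul _)
  · exact φ.hasCompactSupport.comp_homeomorph (Homeomorph.smulOfNeZero R⁻¹ (inv_ne_zero hR.ne'))
  · intro x hx
    apply φ.one_of_mem_closedBall
    rw [mem_closedBall_zero_iff, norm_smul, norm_inv, Real.norm_of_nonneg hR.le]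
    show R⁻¹ * ‖x‖ ≤ 1
    rw [inv_mul_le_one₀ hR]; exact hx
  · intro x
    have := fderiv_comp_smul (f := (φ : V (d+1) → ℝ)) (𝕜 := ℝ) (c := R⁻¹) (x := x)
    rw [this, norm_smul, norm_inv, Real.norm_of_nonneg hR.le, div_eq_inv_mul]
    exact mul_le_mul_of_nonneg_left (hC _) (by positivity)

theorem lemmaA (hE : MeasurableSet E) (hEf : volume E ≠ ⊤) (hS : μH[(d:ℝ)] (frontier E) ≠ ⊤) {η : ℝ} (hη : 0 < η) :
    ∃ v : V (d+1) → ℝ, ContDiff ℝ 1 v ∧ HasCompactSupport v ∧ (∀ x, 0 ≤ v x) ∧ (∀ x, v x ≤ 1) ∧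
      ∫ x, |v x - E.indicator (fun _ => (1:ℝ)) x| ≤ η ∧
      ∫ x, ‖fderiv ℝ v x‖ ≤ ((kap d)⁻¹ * μH[(d:ℝ)] (frontier E)).toReal + η := by
  obtain ⟨ρ, r1, r2, r3, r4, ui, hu⟩ := mol_approx hE hEf (half_pos hη)
  set u := mol E ρ
  have u1 : ContDiff ℝ 1 u := mol_contDiff hE r1 r2
  have u0 : ∀ x, 0 ≤ u x := mol_nonneg r3
  have ul : ∀ x, u x ≤ 1 := mol_le hE r1.continuous r2 r3 r4
  have ug := mol_grad hE r1 r2 r3 r4 hS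
  have gi := ind_int hE hEf
  have hXt : (kap d)⁻¹ * μH[(d:ℝ)] (frontier E) ≠ ⊤ := ENNReal.mul_ne_top (ENNReal.inv_ne_top.2 (kap_ne d)) hS
  have dui : Integrable (fderiv ℝ u) :=
    ⟨(u1.continuous_fderiv one_ne_zero).aestronglyMeasurable, ug.trans_lt hXt.lt_top⟩
  have ug' : ∫ x, ‖fderiv ℝ u x‖ ≤ ((kap d)⁻¹ * μH[(d:ℝ)] (frontier E)).toReal := by
    rw [integral_norm_eq_lintegral_enorm dui.aestronglyMeasurable]
    exact ENNReal.toReal_mono hXt ug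
  obtain ⟨C, hC0, hC⟩ := exists_cutoff d
  have hpos : ∀ k : ℕ, (0:ℝ) < (k:ℝ)+1 := fun k => by positivity
  choose χ c1 c2 c3 c4 c5 c6 using fun k : ℕ => hC _ (hpos k)
  have hlim : Tendsto (fun k => ∫ x, (1 - χ k x) * u x) atTop (𝓝 (∫ x : V (d+1), (0:ℝ))) := by
    refine tendsto_integral_of_dominated_convergence u ?_ ui ?_ ?_
    · intro k
      exact ((continuous_const.sub (c1 k).continuous).mul u1.continuous).aestronglyMeasurable
    · intro k
      refine ae_of_all _ fun x => ?_
      rw [Real.norm_of_nonneg (mul_nonneg (by linarith [c4 k x]) (u0 x))]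
      exact mul_le_of_le_one_left (u0 x) (by linarith [c3 k x])
    · refine ae_of_all _ fun x => ?_
      refine tendsto_const_nhds.congr' ?_
      filter_upwards [eventually_ge_atTop ⌈‖x‖⌉₊] with k hk
      rw [c5 k x ((Nat.ceil_le.1 hk).trans (by linarith))]; simp
  rw [integral_zero] at hlim
  have hlim2 : Tendsto (fun k : ℕ => C / ((k:ℝ)+1) * ∫ x, u x) atTop (𝓝 0) := by
    have := ((tendsto_one_div_add_atTop_nhds_zero_nat (𝕜 := ℝ)).const_mul C).mul_const (∫ x, u x)
    simpa [div_eq_mul_inv] using this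
  obtain ⟨k, hk1, hk2⟩ := ((hlim.eventually_lt_const (half_pos hη)).and (hlim2.eventually_lt_const hη)).exists
  have v1 : ContDiff ℝ 1 (fun x => χ k x * u x) := (c1 k).mul u1
  have v2 : HasCompactSupport (fun x => χ k x * u x) := (c2 k).mul_right (f' := u)
  have i3 : Integrable (fun x => (1 - χ k x) * u x) := by
    refine ui.mono' ((continuous_const.sub (c1 k).continuous).mul u1.continuous).aestronglyMeasurable (ae_of_all _ fun x => ?_)
    rw [Real.norm_of_nonneg (mul_nonneg (by linarith [c4 k x]) (u0 x))]
    exact mul_le_of_le_one_left (u0 x) (by linarith [c3 k x])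
  refine ⟨fun x => χ k x * u x, v1, v2, fun x => mul_nonneg (c3 k x) (u0 x),
    fun x => mul_le_one₀ (c4 k x) (u0 x) (ul x), ?_, ?_⟩
  · have i1 : Integrable (fun x => |u x - E.indicator (fun _ => (1:ℝ)) x|) := (ui.sub gi).abs
    have : ∫ x, |χ k x * u x - E.indicator (fun _ => (1:ℝ)) x| ≤
        ∫ x, (|u x - E.indicator (fun _ => (1:ℝ)) x| + (1 - χ k x) * u x) := by
      refine integral_mono_of_nonneg (ae_of_all _ fun x => abs_nonneg _) (i1.add i3) (ae_of_all _ fun x => ?_)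
      have h1 := mul_nonneg (sub_nonneg.2 (c4 k x)) (u0 x)
      have h2 := abs_sub_abs_le_abs_sub (χ k x * u x - E.indicator (fun _ => (1:ℝ)) x) (u x - E.indicator (fun _ => (1:ℝ)) x)
      have h3 : |χ k x * u x - E.indicator (fun _ => (1:ℝ)) x - (u x - E.indicator (fun _ => (1:ℝ)) x)| = (1 - χ k x) * u x := by
        rw [← abs_of_nonneg h1, ← abs_neg]; congr 1; ring
      simp only; linarith
    rw [integral_add i1 i3] at this
    linarith
  · have vi : ∀ x, ‖fderiv ℝ (fun x => χ k x * u x) x‖ ≤ ‖fderiv ℝ u x‖ + C / ((k:ℝ)+1) * u x := by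
      intro x
      rw [fderiv_fun_mul ((c1 k).differentiable one_ne_zero x) (u1.differentiable one_ne_zero x)]
      refine (norm_add_le _ _).trans ?_
      rw [norm_smul, norm_smul, Real.norm_of_nonneg (c3 k x), Real.norm_of_nonneg (u0 x)]
      have := mul_le_of_le_one_left (norm_nonneg (fderiv ℝ u x)) (c4 k x)
      have := mul_le_mul_of_nonneg_left (c6 k x) (u0 x)
      linarith
    have : ∫ x, ‖fderiv ℝ (fun x => χ k x * u x) x‖ ≤ ∫ x, (‖fderiv ℝ u x‖ + C / ((k:ℝ)+1) * u x) :=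
      integral_mono_of_nonneg (ae_of_all _ fun x => norm_nonneg _) (dui.norm.add (ui.const_mul _)) (ae_of_all _ vi)
    rw [integral_add dui.norm (ui.const_mul _), integral_const_mul] at this
    linarith
end

end Iso

namespace Iso
open MeasureTheory Filter Set Metric
open scoped ENNReal NNReal Topology Pointwise

theorem normalize_lip {n : ℕ} {a b : V n} (ha : 1 ≤ ‖a‖) (hb : 1 ≤ ‖b‖) :
    ‖‖a‖⁻¹ • a - ‖b‖⁻¹ • b‖ ≤ ‖a - b‖ := by
  have ha0 : 0 < ‖a‖ := by linarith
  have hb0 : 0 < ‖b‖ := by linarith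
  refine (sq_le_sq₀ (norm_nonneg _) (norm_nonneg _)).1 ?_
  have e1 := norm_sub_sq_real (‖a‖⁻¹ • a) (‖b‖⁻¹ • b)
  have e2 := norm_sub_sq_real a b
  rw [norm_smul, norm_smul, norm_inv, norm_inv, norm_norm, norm_norm, inv_mul_cancel₀ ha0.ne',
    inv_mul_cancel₀ hb0.ne', real_inner_smul_left, real_inner_smul_right] at e1
  have e3 : ‖a‖ * ‖b‖ * ‖‖a‖⁻¹ • a - ‖b‖⁻¹ • b‖^2 = 2 * (‖a‖ * ‖b‖) - 2 * inner ℝ a b := by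
    rw [e1]; field_simp; ring
  have h1 : 1 ≤ ‖a‖ * ‖b‖ := by nlinarith
  nlinarith [sq_nonneg (‖a‖ - ‖b‖), sq_nonneg ‖‖a‖⁻¹ • a - ‖b‖⁻¹ • b‖]

/-- cone over `T` -/
def cone {d : ℕ} (T : Set (V (d+1))) : Set (V (d+1)) := closedBall 0 1 ∩ (fun y => ‖y‖⁻¹ • y) ⁻¹' T

theorem cone_meas {d : ℕ} {T : Set (V (d+1))} (hT : MeasurableSet T) : MeasurableSet (cone T) := by
  refine isClosed_closedBall.measurableSet.inter (measurableSet_preimage ?_ hT)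
  exact (measurable_norm.inv).smul measurable_id

theorem sph_piece {d : ℕ} (T : Set (V (d+1))) (hT : MeasurableSet T) (hTs : T ⊆ sphere 0 1) {δ : ℝ}
    (hTd : ∀ x ∈ T, ∀ y ∈ T, dist x y ≤ δ) (hc : 0 < 1 - δ^2/2) :
    ENNReal.ofReal ((1 - δ^2/2)^(d+1)) * μH[(d:ℝ)] T ≤ kap d * ENNReal.ofReal ((d:ℝ)+1) * volume (cone T) := by
  rcases T.eq_empty_or_nonempty with rfl | ⟨θ, hz⟩
  · simp
  have hθ : ‖θ‖ = 1 := by simpa using hTs hz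
  obtain ⟨L, hn, hmp, hL1, hin⟩ := exists_split d θ hθ
  set c := 1 - δ^2/2 with hcdef
  have hin' : ∀ x ∈ T, c ≤ inner ℝ θ x := by
    intro x hx
    have h1 := hTd θ hz x hx
    rw [dist_eq_norm] at h1
    have h2 := norm_sub_sq_real θ x
    have h3 : ‖x‖ = 1 := by simpa using hTs hx
    rw [hθ, h3] at h2
    have h4 : ‖θ - x‖^2 ≤ δ^2 := by gcongr
    linarith
  set g : V d → V (d+1) := fun w => ‖L (1,w)‖⁻¹ • L (1,w) with hg
  have hn1 : ∀ w, 1 ≤ ‖L (1,w)‖ := fun w => by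
    have := hn 1 w
    nlinarith [norm_nonneg (L (1,w)), sq_nonneg ‖w‖]
  have hglip : LipschitzWith 1 g := by
    refine LipschitzWith.of_dist_le_mul fun x y => ?_
    rw [NNReal.coe_one, one_mul, dist_eq_norm, dist_eq_norm]
    refine (normalize_lip (hn1 x) (hn1 y)).trans ?_
    rw [← map_sub]
    have := hn 0 (x - y)
    refine (sq_le_sq₀ (norm_nonneg _) (norm_nonneg _)).1 ?_
    simp only [Prod.mk_sub_mk, sub_self]
    linarith
  set T' := g ⁻¹' T with hT'
  have hsub : T ⊆ g '' T' := by
    intro x hx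
    obtain ⟨⟨t, y⟩, rfl⟩ := L.surjective x
    have ht := hin' _ hx
    rw [hin] at ht
    have ht0 : 0 < t := by linarith
    have h3 : ‖L (t, y)‖ = 1 := by simpa using hTs hx
    have e : L (1, t⁻¹ • y) = t⁻¹ • L (t, y) := by
      rw [← map_smul]; simp [ht0.ne']
    have e2 : g (t⁻¹ • y) = L (t, y) := by
      simp only [hg]
      rw [e, norm_smul, h3, norm_inv, Real.norm_of_nonneg ht0.le, mul_one, inv_inv, smul_inv_smul₀ ht0.ne']
    exact ⟨t⁻¹ • y, by rw [hT', mem_preimage, e2]; exact hx, e2⟩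
  have hμ : μH[(d:ℝ)] T ≤ kap d * volume T' := by
    rw [← kap_eq]
    refine (measure_mono hsub).trans ?_
    simpa using hglip.hausdorffMeasure_image_le (Nat.cast_nonneg d) T'
  have hvol : ENNReal.ofReal (c^(d+1)/((d:ℝ)+1)) * volume T' ≤ volume (cone T) := by
    have hemb : MeasurableEmbedding L := L.toHomeomorph.measurableEmbedding
    rw [← hmp.measure_preimage_emb hemb, Measure.volume_eq_prod,
      Measure.prod_apply (hemb.measurable (cone_meas hT))]
    have h1 : ∀ t ∈ Ioc 0 c, ENNReal.ofReal (t^d) * volume T' ≤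
        volume (Prod.mk t ⁻¹' (L ⁻¹' (cone T))) := by
      intro t ht
      have e : volume (t • T') = ENNReal.ofReal (t^d) * volume T' := by
        rw [Measure.addHaar_smul, finrank_euclideanSpace_fin, abs_of_nonneg (pow_nonneg ht.1.le _)]
      rw [← e]
      apply measure_mono
      rintro _ ⟨w, hw, rfl⟩
      have hw' : g w ∈ T := hw
      have e : L (t, t • w) = t • L (1, w) := by rw [← map_smul]; simp
      have hN : 0 < ‖L (1,w)‖ := by linarith [hn1 w]
      have h5 := hin' _ hw'
      simp only [hg] at h5
      rw [real_inner_smul_right, hin, mul_one] at h5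
      have h6 : c * ‖L (1,w)‖ ≤ 1 := by
        calc c * ‖L (1,w)‖ ≤ ‖L (1,w)‖⁻¹ * ‖L (1,w)‖ := by gcongr
          _ = 1 := inv_mul_cancel₀ hN.ne'
      refine ⟨?_, ?_⟩
      · show L (t, t • w) ∈ closedBall 0 1
        rw [mem_closedBall_zero_iff, e, norm_smul, Real.norm_of_nonneg ht.1.le]
        exact (mul_le_mul_of_nonneg_right ht.2 hN.le).trans h6
      · show ‖L (t, t • w)‖⁻¹ • L (t, t • w) ∈ T
        have : ‖L (t, t • w)‖⁻¹ • L (t, t • w) = g w := by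
          rw [e, norm_smul, Real.norm_of_nonneg ht.1.le, mul_inv, smul_smul, mul_right_comm,
            inv_mul_cancel₀ ht.1.ne', one_mul]
        rw [this]; exact hw'
    calc ENNReal.ofReal (c^(d+1)/((d:ℝ)+1)) * volume T'
        = ∫⁻ t in Ioc 0 c, ENNReal.ofReal (t^d) * volume T' := by
          rw [lintegral_mul_const _ (by fun_prop)]
          congr 1
          have hi : IntegrableOn (fun t : ℝ => t^d) (Ioc 0 c) := by
            rw [← intervalIntegrable_iff_integrableOn_Ioc_of_le hc.le]
            exact (continuous_pow d).intervalIntegrable _ _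
          rw [← ofReal_integral_eq_lintegral_ofReal hi, ← intervalIntegral.integral_of_le hc.le, integral_pow]
          · simp
          · filter_upwards [ae_restrict_mem measurableSet_Ioc] with t ht
            exact pow_nonneg ht.1.le _
      _ ≤ ∫⁻ t in Ioc 0 c, volume (Prod.mk t ⁻¹' (L ⁻¹' (cone T))) :=
          setLIntegral_mono' measurableSet_Ioc h1
      _ ≤ _ := setLIntegral_le_lintegral _ _
  have e : ENNReal.ofReal (c^(d+1)) = ENNReal.ofReal ((d:ℝ)+1) * ENNReal.ofReal (c^(d+1)/((d:ℝ)+1)) := by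
    rw [← ENNReal.ofReal_mul (by positivity)]; congr 1; field_simp
  calc ENNReal.ofReal (c^(d+1)) * μH[(d:ℝ)] T ≤ ENNReal.ofReal (c^(d+1)) * (kap d * volume T') := by gcongr
    _ = kap d * ENNReal.ofReal ((d:ℝ)+1) * (ENNReal.ofReal (c^(d+1)/((d:ℝ)+1)) * volume T') := by rw [e]; ring
    _ ≤ _ := by gcongr

theorem sphere_le (d : ℕ) : μH[(d:ℝ)] (sphere (0 : V (d+1)) 1) ≤
    kap d * ENNReal.ofReal (((d:ℝ)+1) * om (d+1)) := by
  have hom : volume (closedBall (0 : V (d+1)) 1) = ENNReal.ofReal (om (d+1)) := by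
    rw [Measure.addHaar_closedBall_eq_addHaar_ball, om, ENNReal.ofReal_toReal]
    exact measure_ball_lt_top.ne
  set X := kap d * ENNReal.ofReal (((d:ℝ)+1) * om (d+1)) with hX
  have hXt : X ≠ ⊤ := ENNReal.mul_ne_top (kap_top d) ENNReal.ofReal_ne_top
  have key : ∀ δ ∈ Ioo (0:ℝ) 1, ENNReal.ofReal ((1 - δ^2/2)^(d+1)) * μH[(d:ℝ)] (sphere (0 : V (d+1)) 1) ≤ X := by
    intro δ hδ
    obtain ⟨As, hAm, hAb, hAd, hAu, hAp⟩ :=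
      SeparableSpace.exists_measurable_partition_diam_le (V (d+1)) hδ.1
    set T : ℕ → Set (V (d+1)) := fun i => sphere 0 1 ∩ As i
    have hTm : ∀ i, MeasurableSet (T i) := fun i => isClosed_sphere.measurableSet.inter (hAm i)
    have hSu : sphere (0 : V (d+1)) 1 = ⋃ i, T i := by rw [← inter_iUnion, hAu, inter_univ]
    have hTd : ∀ i, ∀ x ∈ T i, ∀ y ∈ T i, dist x y ≤ δ := fun i x hx y hy =>
      (dist_le_diam_of_mem (hAb i) hx.2 hy.2).trans (hAd i)
    have hTp : Pairwise (Function.onFun Disjoint T) := fun i j hij =>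
      (hAp hij).mono inter_subset_right inter_subset_right
    rw [hSu, measure_iUnion hTp hTm, ← ENNReal.tsum_mul_left]
    refine (ENNReal.tsum_le_tsum fun i => sph_piece (T i) (hTm i) inter_subset_left (hTd i)
      (by nlinarith [hδ.1, hδ.2])).trans ?_
    rw [ENNReal.tsum_mul_left, ← measure_iUnion (fun i j hij => ?_) (fun i => cone_meas (hTm i)), hX,
      ENNReal.ofReal_mul (by positivity), ← mul_assoc, ← hom]
    · gcongr
      exact iUnion_subset fun i => inter_subset_left
    · exact ((hTp hij).preimage _).mono inter_subset_right inter_subset_right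
  have hfinS : μH[(d:ℝ)] (sphere (0 : V (d+1)) 1) ≠ ⊤ := by
    intro h
    have := key (1/2) ⟨by norm_num, by norm_num⟩
    rw [h, ENNReal.mul_top] at this
    · exact hXt (top_le_iff.1 this)
    · simp only [ne_eq, ENNReal.ofReal_eq_zero, not_le]
      norm_num
  have hlim : Tendsto (fun δ : ℝ => ENNReal.ofReal ((1 - δ^2/2)^(d+1)) * μH[(d:ℝ)] (sphere (0 : V (d+1)) 1)) (𝓝[>] 0)
      (𝓝 (ENNReal.ofReal ((1 - 0^2/2)^(d+1)) * μH[(d:ℝ)] (sphere (0 : V (d+1)) 1))) := by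
    refine ENNReal.Tendsto.mul_const ?_ (Or.inr hfinS)
    apply ENNReal.tendsto_ofReal
    exact tendsto_nhdsWithin_of_tendsto_nhds ((by fun_prop : Continuous fun δ : ℝ => (1 - δ^2/2)^(d+1)).tendsto 0)
  have := le_of_tendsto hlim (by
    filter_upwards [Ioo_mem_nhdsGT (zero_lt_one (α := ℝ))] with δ hδ using key δ hδ)
  simpa using this

end Iso

namespace Iso
open MeasureTheory Filter Set Metric
open scoped ENNReal NNReal Topology

/-- half space -/
def hs {n : ℕ} (θ : V n) (t : ℝ) : Set (V n) := {x | inner ℝ θ x ≤ t}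

theorem hs_meas {n : ℕ} (θ : V n) (t : ℝ) : MeasurableSet (hs θ t) :=
  (isClosed_le (by fun_prop : Continuous fun x : V n => inner ℝ θ x) continuous_const).measurableSet

theorem sA_hs {d : ℕ} {L : (ℝ × V d) ≃L[ℝ] V (d+1)} {θ : V (d+1)} (hmp : MeasurePreserving L volume volume)
    (hin : ∀ t y, inner ℝ θ (L (t,y)) = t) {f : V (d+1) → ℝ} (hf : Continuous f) (hc : HasCompactSupport f)
    (t : ℝ) : ∫ s in Iic t, sA L f s = ∫ x in hs θ t, f x := by
  rw [← integral_indicator (hs_meas θ t), mp_integral hmp, ← integral_indicator measurableSet_Iic,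
    Measure.volume_eq_prod, integral_prod]
  · congr 1
    ext s
    by_cases hst : s ≤ t
    · rw [indicator_of_mem (show s ∈ Iic t from hst)]
      simp only [sA]
      congr 1; ext y
      rw [indicator_of_mem (show L (s,y) ∈ hs θ t by show inner ℝ θ (L (s,y)) ≤ t; rw [hin]; exact hst)]
    · rw [indicator_of_notMem (show s ∉ Iic t from hst)]
      symm
      apply integral_eq_zero_of_ae
      refine ae_of_all _ fun y => ?_
      show (hs θ t).indicator f (L (s,y)) = 0
      rw [indicator_of_notMem (show L (s,y) ∉ hs θ t by
        intro h; apply hst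
        have h' : inner ℝ θ (L (s,y)) ≤ t := h
        rwa [hin] at h')]
  · have hi : Integrable ((hs θ t).indicator f) :=
      (hf.integrable_of_hasCompactSupport hc).indicator (hs_meas θ t)
    exact (hmp.integrable_comp_emb L.toHomeomorph.measurableEmbedding).2 hi

theorem pt_q {u i q : ℝ} (h0 : 0 ≤ u) (h1 : u ≤ 1) (hq1 : 1 ≤ q) (hq2 : q ≤ 2) (hi : i = 0 ∨ i = 1) :
    |u ^ q - i| ≤ 2 * |u - i| := by
  have a1 : u ^ q ≤ u := by
    conv_rhs => rw [← Real.rpow_one u]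
    exact Real.rpow_le_rpow_of_exponent_ge' h0 h1 zero_le_one hq1
  have a2 : u^2 ≤ u ^ q := by
    rw [← Real.rpow_natCast]
    exact Real.rpow_le_rpow_of_exponent_ge' h0 h1 (by linarith) (by simpa using hq2)
  have a0 : 0 ≤ u ^ q := Real.rpow_nonneg h0 q
  rcases hi with rfl | rfl
  · rw [sub_zero, sub_zero, abs_of_nonneg a0, abs_of_nonneg h0]; linarith
  · rw [abs_of_nonpos (by linarith), abs_of_nonpos (by linarith)]; nlinarith

theorem set_close {n : ℕ} {f g : V n → ℝ} {E H : Set (V n)} (hE : MeasurableSet E) (hEf : volume E ≠ ⊤)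
    (hf : Integrable f) (hg : Integrable (fun x => |g x - E.indicator (fun _ => (1:ℝ)) x|)) {C : ℝ}
    (h : ∀ x, |f x - E.indicator (fun _ => (1:ℝ)) x| ≤ C * |g x - E.indicator (fun _ => (1:ℝ)) x|) :
    |(∫ x in H, f x) - (volume (E ∩ H)).toReal| ≤ C * ∫ x, |g x - E.indicator (fun _ => (1:ℝ)) x| := by
  have gi : Integrable (E.indicator (fun _ => (1:ℝ))) (volume : Measure (V n)) :=
    (integrable_indicator_iff hE).2 (integrableOn_const hEf)
  have e : (volume (E ∩ H)).toReal = ∫ x in H, E.indicator (fun _ => (1:ℝ)) x := by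
    rw [integral_indicator hE, setIntegral_const, Measure.real, Measure.restrict_apply hE]
    simp
  have gi' : Integrable (fun x => C * |g x - E.indicator (fun _ => (1:ℝ)) x|) := hg.const_mul C
  rw [e, ← integral_sub hf.integrableOn gi.integrableOn, ← integral_const_mul]
  refine (abs_integral_le_integral_abs).trans ?_
  refine (setIntegral_mono (hf.sub gi).abs.integrableOn gi'.integrableOn fun x => h x).trans ?_
  exact setIntegral_le_integral gi' (ae_of_all _ fun x => (abs_nonneg _).trans (h x))

theorem dir {d : ℕ} (hd : 1 ≤ d) {E : ℕ → Set (V (d+1))} (hE : ∀ j, MeasurableSet (E j))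
    (hv : ∀ j, volume (E j) = ENNReal.ofReal (om (d+1))) (hS : ∀ j, μH[(d:ℝ)] (frontier (E j)) ≠ ⊤)
    {s0 : ℝ} (hs0 : s0 ≤ ((d:ℝ)+1) * om (d+1))
    (hlim : Tendsto (fun j => ((kap d)⁻¹ * μH[(d:ℝ)] (frontier (E j))).toReal) atTop (𝓝 s0))
    {θ : V (d+1)} (hθ : ‖θ‖ = 1) :
    ∃ c : ℕ → ℝ, ∀ s ∈ Ioo (-1:ℝ) 1,
      Tendsto (fun j => (volume (E j ∩ hs θ (c j + s))).toReal) atTop (𝓝 (BB d s)) := by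
  have hd' : (0:ℝ) < d := by exact_mod_cast hd
  have hd1 : (1:ℝ) ≤ d := by exact_mod_cast hd
  have hω := om_pos (d+1)
  obtain ⟨L, hn, hmp, hL1, hin⟩ := exists_split d θ hθ
  have hq1 : (1:ℝ) ≤ 1 + 1/(d:ℝ) := by have : 0 ≤ 1/(d:ℝ) := by positivity
                                       linarith
  have hq2 : 1 + 1/(d:ℝ) ≤ 2 := by have : 1/(d:ℝ) ≤ 1 := by rw [div_le_one hd']; exact hd1
                                   linarith
  have hEf : ∀ j, volume (E j) ≠ ⊤ := fun j => by rw [hv]; exact ENNReal.ofReal_ne_top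
  set η : ℕ → ℝ := fun j => om (d+1) / 4 * (1/((j:ℝ)+1)) with hη
  have ηpos : ∀ j, 0 < η j := fun j => by simp only [hη]; positivity
  have ηle : ∀ j, η j ≤ om (d+1)/4 := fun j => by
    simp only [hη]
    apply mul_le_of_le_one_right (by positivity)
    rw [div_le_one (by positivity)]
    linarith [Nat.cast_nonneg (α := ℝ) j]
  have ηlim : Tendsto η atTop (𝓝 0) := by
    have := (tendsto_one_div_add_atTop_nhds_zero_nat (𝕜 := ℝ)).const_mul (om (d+1)/4)
    rwa [mul_zero] at this
  choose u u1 u2 u3 u4 u5 u6 using fun j => lemmaA (hE j) (hEf j) (hS j) (ηpos j)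
  have uq1 : ∀ j, Continuous (fun x => u j x ^ (1+1/(d:ℝ))) := fun j => rpow_cont (u1 j).continuous (by positivity)
  have uq2 : ∀ j, HasCompactSupport (fun x => u j x ^ (1+1/(d:ℝ))) := fun j => rpow_supp (u2 j) (by positivity)
  have ui : ∀ j, Integrable (u j) := fun j => (u1 j).continuous.integrable_of_hasCompactSupport (u2 j)
  have uqi : ∀ j, Integrable (fun x => u j x ^ (1+1/(d:ℝ))) := fun j => (uq1 j).integrable_of_hasCompactSupport (uq2 j)
  have di : ∀ j, Integrable (fun x => |u j x - (E j).indicator (fun _ => (1:ℝ)) x|) := fun j =>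
    ((ui j).sub (ind_int (hE j) (hEf j))).abs
  have close_q : ∀ j H, |(∫ x in H, u j x ^ (1+1/(d:ℝ))) - (volume (E j ∩ H)).toReal| ≤ 2 * η j := by
    intro j H
    refine (set_close (hE j) (hEf j) (uqi j) (di j) (C := 2) fun x => ?_).trans ?_
    · apply pt_q (u3 j x) (u4 j x) hq1 hq2
      by_cases hx : x ∈ E j <;> simp [hx]
    · have := u5 j; linarith
  have close_1 : ∀ j H, |(∫ x in H, u j x) - (volume (E j ∩ H)).toReal| ≤ η j := by
    intro j H
    refine (set_close (hE j) (hEf j) (ui j) (di j) (C := 1) fun x => ?_).trans ?_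
    · rw [one_mul]
    · have := u5 j; linarith
  have hvr : ∀ j, (volume (E j ∩ univ)).toReal = om (d+1) := fun j => by
    rw [inter_univ, hv, ENNReal.toReal_ofReal hω.le]
  set A : ℕ → ℝ → ℝ := fun j => sA L (fun x => u j x ^ (1+1/(d:ℝ))) with hA
  set a : ℕ → ℝ → ℝ := fun j => sA L (u j) with ha
  set P : ℕ → ℝ := fun j => ((kap d)⁻¹ * μH[(d:ℝ)] (frontier (E j))).toReal + η j + (((d:ℝ)+1) * om (d+1) - s0) with hP
  have hPle : ∀ j, ∫ x, ‖fderiv ℝ (u j) x‖ ≤ P j := fun j => by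
    have := u6 j
    simp only [hP]; linarith
  have D0 := fun j => mkDat hd (sobP_all hd) hn hmp (u1 j) (u2 j) (u3 j)
  have D : ∀ j, Dat d (A j) (a j) (sN L (u j)) (P j) := fun j =>
    { cA := (D0 j).cA, sA := (D0 j).sA, ca := (D0 j).ca, sa := (D0 j).sa, cN := (D0 j).cN, sN := (D0 j).sN,
      A0 := (D0 j).A0, a0 := (D0 j).a0, N0 := (D0 j).N0, hN := (D0 j).hN,
      H1 := fun G hG hG1 => ((D0 j).H1 G hG hG1).trans (hPle j) }
  have iA : ∀ j, ∫ t, A j t = ∫ x, u j x ^ (1+1/(d:ℝ)) := fun j => sA_integral hmp (uq1 j) (uq2 j)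
  have ia : ∀ j, ∫ t, a j t = ∫ x, u j x := fun j => sA_integral hmp (u1 j).continuous (u2 j)
  have cq : ∀ j, |(∫ t, A j t) - om (d+1)| ≤ 2 * η j := fun j => by
    have := close_q j univ
    rw [hvr, setIntegral_univ] at this
    rw [iA]; exact this
  have c1 : ∀ j, |(∫ t, a j t) - om (d+1)| ≤ η j := fun j => by
    have := close_1 j univ
    rw [hvr, setIntegral_univ] at this
    rw [ia]; exact this
  have tz : ∀ {f : ℕ → ℝ} {l : ℝ}, (∀ j, |f j - l| ≤ 2 * η j) → Tendsto f atTop (𝓝 l) := by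
    intro f l h
    rw [tendsto_iff_dist_tendsto_zero]
    refine squeeze_zero (g := fun j => 2 * η j) (fun j => dist_nonneg) (fun j => h j) ?_
    simpa using ηlim.const_mul 2
  have hMl := tz cq
  have hal : Tendsto (fun j => ∫ t, a j t) atTop (𝓝 (om (d+1))) :=
    tz fun j => (c1 j).trans (by linarith [ηpos j])
  have hcore : _ := core hd D ?_ ?_ hMl ?_ ?_ ?_
  · obtain ⟨c, hc⟩ := hcore
    refine ⟨c, fun s hss => ?_⟩
    have h1 := hc s hss
    have h2 : Tendsto (fun j => (volume (E j ∩ hs θ (c j + s))).toReal - ∫ x in Iic (c j + s), A j x) atTop (𝓝 0) := by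
      apply tz
      intro j
      rw [sub_zero, abs_sub_comm]
      simp only [hA]
      rw [sA_hs hmp hin (uq1 j) (uq2 j)]
      exact close_q j _
    have := h1.add h2
    simpa using this
  · intro j t
    simp only [hA, ha, sA]
    have hcL : Continuous (fun y : V d => u j (L (t,y))) := (u1 j).continuous.comp (L.continuous.comp (by fun_prop))
    have hsL : HasCompactSupport (fun y : V d => u j (L (t,y))) :=
      fib_supp (g := fun p => u j (L p)) (supp_L (L := L) (u := u j) (u2 j)) t
    refine integral_mono_of_nonneg (ae_of_all _ fun y => Real.rpow_nonneg (u3 j _) _)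
      (hcL.integrable_of_hasCompactSupport hsL) (ae_of_all _ fun y => ?_)
    have := Real.rpow_le_rpow_of_exponent_ge' (u3 j (L (t,y))) (u4 j _) zero_le_one hq1
    rwa [Real.rpow_one] at this
  · intro j
    have := abs_le.1 (cq j)
    have := ηle j
    linarith
  · have : ∀ j, ∫ t, (a j t - A j t) = (∫ t, a j t) - ∫ t, A j t := fun j =>
      integral_sub ((D j).ca.integrable_of_hasCompactSupport (D j).sa) ((D j).cA.integrable_of_hasCompactSupport (D j).sA)
    simp only [this]
    simpa using hal.sub hMl
  · have := (hlim.add ηlim).add_const (((d:ℝ)+1) * om (d+1) - s0)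
    simpa [hP] using this
  · intro j t
    have := H2_all hd hθ hmp hin (u1 j) (u2 j) (u3 j) t
    have := hPle j
    simp only [hA, ha]
    linarith

end Iso

namespace Iso
open MeasureTheory Filter Set Metric
open scoped ENNReal NNReal Topology

theorem BB_symm {d : ℕ} (hd : 1 ≤ d) (s : ℝ) : BB d s + BB d (-s) = om (d+1) := by
  have i : ∀ a b : ℝ, IntervalIntegrable (bb d) volume a b := fun a b => (bb_cont d).intervalIntegrable _ _
  have e : BB d (-s) = ∫ x in s..1, bb d x := by
    unfold BB
    have := intervalIntegral.integral_comp_neg (f := bb d) (a := s) (b := 1)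
    rw [← this]; simp only [bb_even]
  rw [e, BB, intervalIntegral.integral_add_adjacent_intervals (i _ _) (i _ _), bb_integral hd]

theorem BB_int {d : ℕ} (hd : 1 ≤ d) : ∫ s in (-1:ℝ)..1, BB d s = om (d+1) := by
  have i : ∀ a b : ℝ, IntervalIntegrable (BB d) volume a b := fun a b => (BB_cont d).intervalIntegrable _ _
  have i' : ∀ a b : ℝ, IntervalIntegrable (fun s => BB d (-s)) volume a b := fun a b =>
    ((BB_cont d).comp continuous_neg).intervalIntegrable _ _
  have e := intervalIntegral.integral_comp_neg (f := BB d) (a := -1) (b := 1)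
  rw [neg_neg] at e
  have e2 := intervalIntegral.integral_add (i (-1) 1) (i' (-1) 1)
  simp only [BB_symm hd] at e2
  rw [intervalIntegral.integral_const, e, smul_eq_mul] at e2
  linarith

theorem clamp_eq (y : ℝ) : max (-1) (min 1 y) = 1 - ∫ s in Ioc (-1:ℝ) 1, (Ici y).indicator (fun _ => (1:ℝ)) s := by
  rw [integral_indicator measurableSet_Ici, setIntegral_const, Measure.real, Measure.restrict_apply measurableSet_Ici]
  rcases le_total y (-1) with h | h
  · have : Ici y ∩ Ioc (-1:ℝ) 1 = Ioc (-1) 1 := inter_eq_right.2 fun s hs => h.trans hs.1.le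
    rw [this, Real.volume_Ioc, min_eq_right (by linarith), max_eq_left h]
    norm_num
  · rcases h.eq_or_lt with rfl | h
    · have : Ici (-1:ℝ) ∩ Ioc (-1:ℝ) 1 = Ioc (-1) 1 := inter_eq_right.2 fun s hs => hs.1.le
      rw [this]; norm_num
    rcases le_total y 1 with h' | h'
    · have : Ici y ∩ Ioc (-1:ℝ) 1 = Icc y 1 := by
        ext s; simp only [mem_inter_iff, mem_Ici, mem_Ioc, mem_Icc]
        exact ⟨fun k => ⟨k.1, k.2.2⟩, fun k => ⟨k.1, by linarith [k.1], k.2⟩⟩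
      rw [this, Real.volume_Icc, min_eq_right h', max_eq_right h.le, ENNReal.toReal_ofReal (by linarith)]
      simp
    · have : Ici y ∩ Ioc (-1:ℝ) 1 ⊆ Icc y 1 := fun s hs => ⟨hs.1, hs.2.2⟩
      have h0 : volume (Ici y ∩ Ioc (-1:ℝ) 1) = 0 := by
        apply measure_mono_null this
        rw [Real.volume_Icc]; simpa using h'
      rw [h0, min_eq_left h', max_eq_right (by norm_num)]; simp

section
variable {d : ℕ} {E : ℕ → Set (V (d+1))} {θ : V (d+1)} {c : ℕ → ℝ}

/-- slab -/
def slab (θ : V (d+1)) (c : ℝ) : Set (V (d+1)) := {x | |inner ℝ θ x - c| ≤ 1}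
theorem slab_meas (θ : V (d+1)) (c : ℝ) : MeasurableSet (slab θ c) :=
  (isClosed_le (by fun_prop : Continuous fun x : V (d+1) => |inner ℝ θ x - c|) continuous_const).measurableSet

theorem clampInt (hd : 1 ≤ d)
    (hv : ∀ j, volume (E j) = ENNReal.ofReal (om (d+1)))
    (hc : ∀ s ∈ Ioo (-1:ℝ) 1, Tendsto (fun j => (volume (E j ∩ hs θ (c j + s))).toReal) atTop (𝓝 (BB d s))) :
    Tendsto (fun j => ∫ x in E j, max (-1) (min 1 (inner ℝ θ x - c j))) atTop (𝓝 0) := by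
  have hω := om_pos (d+1)
  have hEf : ∀ j, volume (E j) ≠ ⊤ := fun j => by rw [hv]; exact ENNReal.ofReal_ne_top
  have e : ∀ j, ∫ x in E j, max (-1) (min 1 (inner ℝ θ x - c j)) =
      om (d+1) - ∫ s in Ioc (-1:ℝ) 1, (volume (E j ∩ hs θ (c j + s))).toReal := by
    intro j
    have : IsFiniteMeasure (volume.restrict (E j)) := isFiniteMeasure_restrict.2 (hEf j)
    simp only [clamp_eq]
    have hmeas : MeasurableSet {p : V (d+1) × ℝ | inner ℝ θ p.1 - c j ≤ p.2} :=
      (isClosed_le (by fun_prop) (by fun_prop)).measurableSet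
    have hint : Integrable (Function.uncurry fun (x : V (d+1)) (s : ℝ) => (Ici (inner ℝ θ x - c j)).indicator (fun _ => (1:ℝ)) s)
        ((volume.restrict (E j)).prod (volume.restrict (Ioc (-1:ℝ) 1))) := by
      have : (Function.uncurry fun (x : V (d+1)) (s : ℝ) => (Ici (inner ℝ θ x - c j)).indicator (fun _ => (1:ℝ)) s) =
        {p : V (d+1) × ℝ | inner ℝ θ p.1 - c j ≤ p.2}.indicator (fun _ => (1:ℝ)) := by
        ext ⟨x, s⟩; rfl
      rw [this]
      exact (integrable_const _).indicator hmeas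
    have hint1 := hint.integral_prod_left
    simp only [Function.uncurry] at hint1
    rw [integral_sub (integrable_const _) hint1, integral_integral_swap hint]
    congr 1
    · rw [setIntegral_const, Measure.real, hv, ENNReal.toReal_ofReal hω.le]; simp
    · congr 1; ext s
      have : (fun x : V (d+1) => (Ici (inner ℝ θ x - c j)).indicator (fun _ => (1:ℝ)) s) =
          (hs θ (c j + s)).indicator (fun _ => (1:ℝ)) := by
        ext x
        have hiff : s ∈ Ici (inner ℝ θ x - c j) ↔ x ∈ hs θ (c j + s) := by
          show inner ℝ θ x - c j ≤ s ↔ inner ℝ θ x ≤ c j + s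
          constructor <;> intro h <;> linarith
        by_cases h : x ∈ hs θ (c j + s)
        · rw [indicator_of_mem h, indicator_of_mem (hiff.2 h)]
        · rw [indicator_of_notMem h, indicator_of_notMem (mt hiff.1 h)]
      rw [this, integral_indicator (hs_meas _ _), setIntegral_const, Measure.real,
        Measure.restrict_apply (hs_meas _ _), inter_comm]
      simp
  simp only [e]
  have hlim : Tendsto (fun j => ∫ s in Ioc (-1:ℝ) 1, (volume (E j ∩ hs θ (c j + s))).toReal) atTop
      (𝓝 (∫ s in Ioc (-1:ℝ) 1, BB d s)) := by
    refine tendsto_integral_of_dominated_convergence (fun _ => om (d+1)) ?_ (integrable_const _) ?_ ?_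
    · intro j
      have hmono : Monotone fun s => (volume (E j ∩ hs θ (c j + s))).toReal := by
        intro s t hst
        refine ENNReal.toReal_mono (measure_ne_top_of_subset inter_subset_left (hEf j)) (measure_mono ?_)
        refine inter_subset_inter_right _ fun x hx => ?_
        have hx' : inner ℝ θ x ≤ c j + s := hx
        show inner ℝ θ x ≤ c j + t
        linarith
      exact hmono.measurable.aestronglyMeasurable
    · intro j
      refine ae_of_all _ fun s => ?_
      rw [Real.norm_of_nonneg ENNReal.toReal_nonneg, ← ENNReal.toReal_ofReal hω.le, ← hv j]
      exact ENNReal.toReal_mono (hEf j) (measure_mono inter_subset_left)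
    · have h1 : ∀ᵐ s ∂(volume : Measure ℝ), s ≠ 1 := by
        rw [ae_iff]; simp
      filter_upwards [ae_restrict_mem measurableSet_Ioc, ae_restrict_of_ae h1] with s hs hs1
      exact hc s ⟨hs.1, lt_of_le_of_ne hs.2 hs1⟩
  rw [← intervalIntegral.integral_of_le (by norm_num), BB_int hd] at hlim
  simpa using (tendsto_const_nhds (x := om (d+1))).sub hlim

theorem slabOut (hd : 1 ≤ d)
    (hv : ∀ j, volume (E j) = ENNReal.ofReal (om (d+1)))
    (hc : ∀ s ∈ Ioo (-1:ℝ) 1, Tendsto (fun j => (volume (E j ∩ hs θ (c j + s))).toReal) atTop (𝓝 (BB d s))) :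
    Tendsto (fun j => volume.real (E j \ slab θ (c j))) atTop (𝓝 0) := by
  have hω := om_pos (d+1)
  have hEf : ∀ j, volume (E j) ≠ ⊤ := fun j => by rw [hv]; exact ENNReal.ofReal_ne_top
  have hle : ∀ s ∈ Ioo (0:ℝ) 1, ∀ j, volume.real (E j \ slab θ (c j)) ≤
      (volume (E j ∩ hs θ (c j + -s))).toReal + (om (d+1) - (volume (E j ∩ hs θ (c j + s))).toReal) := by
    intro s hs0 j
    have e1 : volume.real (E j) = om (d+1) := by rw [Measure.real, hv, ENNReal.toReal_ofReal hω.le]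
    have e2 : volume.real (E j ∩ hs θ (c j + s)) + volume.real (E j \ hs θ (c j + s)) = volume.real (E j) :=
      measureReal_inter_add_sdiff (hs_meas θ (c j + s)) (hEf j)
    have hsub : E j \ slab θ (c j) ⊆ (E j ∩ hs θ (c j + -s)) ∪ (E j \ hs θ (c j + s)) := by
      rintro x ⟨hx, hn⟩
      by_cases h : x ∈ hs θ (c j + s)
      · left
        refine ⟨hx, ?_⟩
        have h1 : inner ℝ θ x ≤ c j + s := h
        have h2 : ¬ |inner ℝ θ x - c j| ≤ 1 := hn
        show inner ℝ θ x ≤ c j + -s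
        by_contra h3
        apply h2
        rw [abs_le]
        constructor <;> linarith [hs0.2]
      · exact Or.inr ⟨hx, h⟩
    have h3 := measureReal_mono (μ := volume) hsub (measure_ne_top_of_subset
      (union_subset inter_subset_left sdiff_subset) (hEf j))
    have h4 := measureReal_union_le (μ := volume) (E j ∩ hs θ (c j + -s)) (E j \ hs θ (c j + s))
    simp only [Measure.real] at *
    linarith
  refine tendsto_order.2 ⟨fun a ha => Eventually.of_forall fun j => lt_of_lt_of_le ha measureReal_nonneg, fun ε hε => ?_⟩
  have hBB : Tendsto (fun s => BB d (-s) + (om (d+1) - BB d s)) (𝓝[<] 1) (𝓝 (BB d (-1) + (om (d+1) - BB d 1))) := by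
    have hb := BB_cont d
    exact tendsto_nhdsWithin_of_tendsto_nhds ((by fun_prop : Continuous fun s => BB d (-s) + (om (d+1) - BB d s)).tendsto 1)
  rw [BB_neg, BB_one hd, sub_self, add_zero] at hBB
  obtain ⟨s, hs1, hs2⟩ := ((hBB.eventually_lt_const hε).and (Ioo_mem_nhdsLT (zero_lt_one (α := ℝ)))).exists
  have hl := (hc (-s) ⟨by linarith [hs2.2], by linarith [hs2.1]⟩).add
    ((tendsto_const_nhds (x := om (d+1))).sub (hc s ⟨by linarith [hs2.1], hs2.2⟩))
  filter_upwards [hl.eventually_lt_const hs1] with j hj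
  exact (hle s hs2 j).trans_lt hj

theorem goodInt (hd : 1 ≤ d)
    (hv : ∀ j, volume (E j) = ENNReal.ofReal (om (d+1)))
    (hc : ∀ s ∈ Ioo (-1:ℝ) 1, Tendsto (fun j => (volume (E j ∩ hs θ (c j + s))).toReal) atTop (𝓝 (BB d s)))
    {G : ℕ → Set (V (d+1))} (hG : ∀ j, MeasurableSet (G j)) (hGE : ∀ j, G j ⊆ E j) (hGs : ∀ j, G j ⊆ slab θ (c j))
    (hGl : Tendsto (fun j => volume.real (E j \ G j)) atTop (𝓝 0)) :
    Tendsto (fun j => ∫ x in G j, (inner ℝ θ x - c j)) atTop (𝓝 0) := by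
  have hEf : ∀ j, volume (E j) ≠ ⊤ := fun j => by rw [hv]; exact ENNReal.ofReal_ne_top
  have h1 := clampInt hd hv hc
  have h2 : Tendsto (fun j => (∫ x in E j, max (-1) (min 1 (inner ℝ θ x - c j))) - ∫ x in G j, (inner ℝ θ x - c j))
      atTop (𝓝 0) := by
    refine squeeze_zero_norm (fun j => ?_) hGl
    have hb : ∀ x, ‖max (-1) (min 1 (inner ℝ θ x - c j))‖ ≤ 1 := fun x => by
      rw [Real.norm_eq_abs, abs_le]
      exact ⟨le_max_left _ _, max_le (by norm_num) (min_le_left _ _)⟩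
    have hi : IntegrableOn (fun x => max (-1) (min 1 (inner ℝ θ x - c j))) (E j) := by
      have : IsFiniteMeasure (volume.restrict (E j)) := isFiniteMeasure_restrict.2 (hEf j)
      refine Integrable.mono' (integrable_const (1:ℝ)) ?_ (ae_of_all _ hb)
      exact (by fun_prop : Continuous fun x : V (d+1) => max (-1) (min 1 (inner ℝ θ x - c j))).aestronglyMeasurable
    have e1 : ∫ x in G j, (inner ℝ θ x - c j) = ∫ x in G j, max (-1) (min 1 (inner ℝ θ x - c j)) := by
      apply setIntegral_congr_fun (hG j)
      intro x hx
      have hx' : |inner ℝ θ x - c j| ≤ 1 := hGs j hx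
      rw [abs_le] at hx'
      simp only
      rw [min_eq_right hx'.2, max_eq_right hx'.1]
    rw [e1, ← setIntegral_sdiff (hG j) hi (hGE j)]
    have := norm_setIntegral_le_of_norm_le_const (μ := volume) (s := E j \ G j) (C := 1)
      (measure_lt_top_of_subset sdiff_subset (hEf j)) (fun x _ => hb x)
    rwa [one_mul] at this
  have := h1.sub h2
  simpa using this
end

end Iso

namespace Iso
open MeasureTheory Filter Set Metric
open scoped ENNReal NNReal Topology

theorem to_center {d : ℕ} {E : ℕ → Set (V (d+1))} (hd : 1 ≤ d) (hE : ∀ j, MeasurableSet (E j))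
    (hv : ∀ j, volume (E j) = ENNReal.ofReal (om (d+1)))
    (hdir : ∀ θ : V (d+1), ‖θ‖ = 1 → ∃ c : ℕ → ℝ, ∀ s ∈ Ioo (-1:ℝ) 1,
      Tendsto (fun j => (volume (E j ∩ hs θ (c j + s))).toReal) atTop (𝓝 (BB d s))) :
    ∃ z : ℕ → V (d+1), ∀ θ : V (d+1), ‖θ‖ = 1 → ∀ η : ℝ, 0 < η →
      Tendsto (fun j => volume.real (E j ∩ {x | 1 + η < inner ℝ θ (x - z j)})) atTop (𝓝 0) := by
  have hω := om_pos (d+1)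
  have hEf : ∀ j, volume (E j) ≠ ⊤ := fun j => by rw [hv]; exact ENNReal.ofReal_ne_top
  have hEr : ∀ j, volume.real (E j) = om (d+1) := fun j => by rw [Measure.real, hv, ENNReal.toReal_ofReal hω.le]
  set e : Fin (d+1) → V (d+1) := fun i => EuclideanSpace.single i 1 with he
  have he1 : ∀ i, ‖e i‖ = 1 := fun i => by simp [he]
  have hei : ∀ i x, inner ℝ (e i) x = x i := fun i x => by simp [he, EuclideanSpace.inner_single_left]
  choose b hb using fun i => hdir (e i) (he1 i)
  set z : ℕ → V (d+1) := fun j => WithLp.toLp 2 (fun i => b i j) with hz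
  refine ⟨z, fun θ hθ η hη => ?_⟩
  obtain ⟨c, hc⟩ := hdir θ hθ
  have hid : ∀ j x, (inner ℝ θ x - c j) - ∑ i, θ i * (inner ℝ (e i) x - b i j) = inner ℝ θ (z j) - c j := by
    intro j x
    have h1 : inner ℝ θ x = ∑ i, θ i * x i := by
      rw [PiLp.inner_apply]; simp [mul_comm]
    have h2 : inner ℝ θ (z j) = ∑ i, θ i * b i j := by
      rw [PiLp.inner_apply]; simp [hz, mul_comm]
    simp only [hei, mul_sub, Finset.sum_sub_distrib]
    rw [h1, h2]; ring
  have hso := slabOut hd hv hc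
  have hsoi := fun i => slabOut hd hv (hb i)
  set G : ℕ → Set (V (d+1)) := fun j => E j ∩ (slab θ (c j) ∩ ⋂ i, slab (e i) (b i j)) with hG
  have hGm : ∀ j, MeasurableSet (G j) := fun j =>
    (hE j).inter ((slab_meas _ _).inter (MeasurableSet.iInter fun i => slab_meas _ _))
  have hGE : ∀ j, G j ⊆ E j := fun j => inter_subset_left
  have hG1 : ∀ j, G j ⊆ slab θ (c j) := fun j x hx => hx.2.1
  have hG2 : ∀ i j, G j ⊆ slab (e i) (b i j) := fun i j x hx => mem_iInter.1 hx.2.2 i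
  have hGf : ∀ j, volume (G j) ≠ ⊤ := fun j => measure_ne_top_of_subset (hGE j) (hEf j)
  have hGl : Tendsto (fun j => volume.real (E j \ G j)) atTop (𝓝 0) := by
    have hsum : Tendsto (fun j => volume.real (E j \ slab θ (c j)) + ∑ i, volume.real (E j \ slab (e i) (b i j)))
        atTop (𝓝 0) := by
      have := hso.add (tendsto_finsetSum Finset.univ fun i _ => hsoi i)
      simpa using this
    refine squeeze_zero (fun j => measureReal_nonneg) (fun j => ?_) hsum
    have hsub : E j \ G j ⊆ (E j \ slab θ (c j)) ∪ ⋃ i, (E j \ slab (e i) (b i j)) := by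
      rintro x ⟨hx, hn⟩
      by_contra h
      simp only [mem_union, mem_iUnion, Set.mem_sdiff, not_or, not_and, not_not, not_exists] at h
      exact hn ⟨hx, h.1 hx, mem_iInter.2 fun i => h.2 i hx⟩
    refine (measureReal_mono hsub (measure_ne_top_of_subset
      (union_subset sdiff_subset (iUnion_subset fun i => sdiff_subset)) (hEf j))).trans ?_
    refine (measureReal_union_le _ _).trans ?_
    gcongr
    exact measureReal_iUnion_fintype_le _
  have hint : ∀ (φ : V (d+1)) (t : ℝ) j, G j ⊆ slab φ t → IntegrableOn (fun x => inner ℝ φ x - t) (G j) := by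
    intro φ t j h
    refine Measure.integrableOn_of_bounded (M := 1) (hGf j)
      (by fun_prop : Continuous fun x : V (d+1) => inner ℝ φ x - t).aestronglyMeasurable ?_
    filter_upwards [ae_restrict_mem (hGm j)] with x hx
    exact h hx
  have hκ : Tendsto (fun j => (inner ℝ θ (z j) - c j) * volume.real (G j)) atTop (𝓝 0) := by
    have h1 := goodInt hd hv hc hGm hGE hG1 hGl
    have h2 := fun i => goodInt hd hv (hb i) hGm hGE (hG2 i) hGl
    have h3 := h1.sub (tendsto_finsetSum Finset.univ fun i _ => (h2 i).const_mul (θ i))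
    simp only [mul_zero, Finset.sum_const_zero, sub_zero] at h3
    refine h3.congr fun j => ?_
    have i1 := hint θ (c j) j (hG1 j)
    have i2 := fun i => hint (e i) (b i j) j (hG2 i j)
    have i3 : ∀ i, IntegrableOn (fun x => θ i * (inner ℝ (e i) x - b i j)) (G j) := fun i => (i2 i).const_mul _
    have : ∫ x in G j, ((inner ℝ θ x - c j) - ∑ i, θ i * (inner ℝ (e i) x - b i j)) =
        ∫ x in G j, (inner ℝ θ (z j) - c j) := by simp only [hid]
    rw [integral_sub i1 (integrable_finsetSum _ fun i _ => i3 i), integral_finsetSum _ fun i _ => i3 i,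
      setIntegral_const, smul_eq_mul, mul_comm (volume.real (G j))] at this
    rw [← this]
    simp only [integral_const_mul]
  have hGv : Tendsto (fun j => volume.real (G j)) atTop (𝓝 (om (d+1))) := by
    have := (tendsto_const_nhds (x := om (d+1))).sub hGl
    rw [sub_zero] at this
    refine this.congr fun j => ?_
    rw [measureReal_sdiff (hGE j) (hGm j) (hEf j), hEr]; ring
  have hκ' : Tendsto (fun j => inner ℝ θ (z j) - c j) atTop (𝓝 0) := by
    have := hκ.div hGv hω.ne'
    rw [zero_div] at this
    refine this.congr' ?_
    filter_upwards [hGv.eventually_const_lt hω] with j hj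
    exact mul_div_cancel_right₀ _ hj.ne'
  refine squeeze_zero' (Eventually.of_forall fun j => measureReal_nonneg) ?_ hso
  filter_upwards [hκ'.eventually_const_lt (show -η < 0 by linarith)] with j hj
  refine measureReal_mono ?_ (measure_ne_top_of_subset sdiff_subset (hEf j))
  rintro x ⟨hx, hn⟩
  refine ⟨hx, fun hs => ?_⟩
  have h1 : |inner ℝ θ x - c j| ≤ 1 := hs
  have h2 : 1 + η < inner ℝ θ (x - z j) := hn
  rw [inner_sub_right] at h2
  linarith [(abs_le.1 h1).2]

theorem to_ball {d : ℕ} {E : ℕ → Set (V (d+1))} (hE : ∀ j, MeasurableSet (E j))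
    (hv : ∀ j, volume (E j) = ENNReal.ofReal (om (d+1))) {z : ℕ → V (d+1)}
    (h : ∀ θ : V (d+1), ‖θ‖ = 1 → ∀ η : ℝ, 0 < η →
      Tendsto (fun j => volume.real (E j ∩ {x | 1 + η < inner ℝ θ (x - z j)})) atTop (𝓝 0)) :
    Tendsto (fun j => volume (symmDiff (E j) (closedBall (z j) 1))) atTop (𝓝 0) := by
  have hω := om_pos (d+1)
  have hEf : ∀ j, volume (E j) ≠ ⊤ := fun j => by rw [hv]; exact ENNReal.ofReal_ne_top
  have hEr : ∀ j, volume.real (E j) = om (d+1) := fun j => by rw [Measure.real, hv, ENNReal.toReal_ofReal hω.le]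
  have hBr : ∀ (x : V (d+1)) (r : ℝ), 0 ≤ r → volume.real (closedBall x r) = om (d+1) * r^(d+1) := by
    intro x r hr
    rw [Measure.real, Measure.addHaar_closedBall_eq_addHaar_ball, vol_ball (by omega) x hr,
      ENNReal.toReal_ofReal (by positivity)]
  have hBf : ∀ (x : V (d+1)) (r : ℝ), volume (closedBall x r) ≠ ⊤ := fun x r => measure_closedBall_lt_top.ne
  have step : ∀ η : ℝ, 0 < η → Tendsto (fun j => volume.real (E j \ closedBall (z j) (1+η))) atTop (𝓝 0) := by
    intro η hη
    set r := √(η/(1+η)) with hr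
    have hr0 : 0 < r := by positivity
    have hr2 : r^2 = η/(1+η) := Real.sq_sqrt (by positivity)
    obtain ⟨N, hNs, hNf, hN⟩ := (isCompact_sphere (0 : V (d+1)) 1).finite_cover_balls hr0
    have hl : Tendsto (fun j => ∑ θ ∈ hNf.toFinset, volume.real (E j ∩ {x | 1 + η/2 < inner ℝ θ (x - z j) + 0}))
        atTop (𝓝 0) := by
      have := tendsto_finsetSum hNf.toFinset (fun θ hθ => h θ (by
        simpa using hNs (hNf.mem_toFinset.1 hθ)) (η/4) (by linarith))
      rw [Finset.sum_const_zero] at this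
      refine squeeze_zero (fun j => Finset.sum_nonneg fun θ _ => measureReal_nonneg) (fun j => ?_) this
      refine Finset.sum_le_sum fun θ _ => measureReal_mono ?_ (measure_ne_top_of_subset inter_subset_left (hEf j))
      rintro x ⟨hx, hn⟩
      refine ⟨hx, ?_⟩
      have h2 : 1 + η/2 < inner ℝ θ (x - z j) + 0 := hn
      show 1 + η/4 < inner ℝ θ (x - z j)
      linarith
    simp only [add_zero] at hl
    have hl' : Tendsto (fun j => ∑ θ ∈ hNf.toFinset, volume.real (E j ∩ {x | 1 + η/4 < inner ℝ θ (x - z j)}))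
        atTop (𝓝 0) := by
      have := tendsto_finsetSum hNf.toFinset (fun θ hθ => h θ (by
        simpa using hNs (hNf.mem_toFinset.1 hθ)) (η/4) (by linarith))
      rwa [Finset.sum_const_zero] at this
    refine squeeze_zero (fun j => measureReal_nonneg) (fun j => ?_) hl'
    have hsub : E j \ closedBall (z j) (1+η) ⊆ ⋃ θ ∈ hNf.toFinset, (E j ∩ {x | 1 + η/4 < inner ℝ θ (x - z j)}) := by
      rintro x ⟨hx, hn⟩
      rw [mem_closedBall, dist_eq_norm, not_le] at hn
      set w := x - z j with hw
      have hw0 : 0 < ‖w‖ := by linarith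
      have hu : ‖w‖⁻¹ • w ∈ sphere (0 : V (d+1)) 1 := by
        rw [mem_sphere_zero_iff_norm, norm_smul, norm_inv, norm_norm, inv_mul_cancel₀ hw0.ne']
      obtain ⟨θ, hθN, hθ⟩ := mem_iUnion₂.1 (hN hu)
      refine mem_iUnion₂.2 ⟨θ, hNf.mem_toFinset.2 hθN, hx, ?_⟩
      show 1 + η/4 < inner ℝ θ w
      have hθ1 : ‖θ‖ = 1 := by simpa using hNs hθN
      rw [mem_ball, dist_comm, dist_eq_norm] at hθ
      have h1 := norm_sub_sq_real θ (‖w‖⁻¹ • w)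
      rw [hθ1, mem_sphere_zero_iff_norm.1 hu, real_inner_smul_right] at h1
      have h2 : ‖θ - ‖w‖⁻¹ • w‖^2 ≤ r^2 := by gcongr
      rw [hr2] at h2
      have h3 : 1 - η/(1+η)/2 ≤ ‖w‖⁻¹ * inner ℝ θ w := by linarith
      have h4 : ‖w‖ * (1 - η/(1+η)/2) ≤ inner ℝ θ w := by
        calc ‖w‖ * (1 - η/(1+η)/2) ≤ ‖w‖ * (‖w‖⁻¹ * inner ℝ θ w) := by gcongr
          _ = inner ℝ θ w := by field_simp
      have h5 : (1+η) * (1 - η/(1+η)/2) = 1 + η/2 := by field_simp; ring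
      have h6 : 0 ≤ 1 - η/(1+η)/2 := by
        have : η/(1+η) ≤ 1 := by rw [div_le_one (by linarith)]; linarith
        linarith
      have h7 : (1+η) * (1 - η/(1+η)/2) ≤ ‖w‖ * (1 - η/(1+η)/2) := by gcongr
      linarith
    refine (measureReal_mono hsub (measure_ne_top_of_subset (iUnion₂_subset fun θ _ => inter_subset_left) (hEf j))).trans ?_
    exact measureReal_biUnion_finset_le _ _
  have hone : Tendsto (fun j => volume.real (E j \ closedBall (z j) 1)) atTop (𝓝 0) := by
    refine tendsto_order.2 ⟨fun a ha => Eventually.of_forall fun j => lt_of_lt_of_le ha measureReal_nonneg, fun ε hε => ?_⟩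
    have hlim : Tendsto (fun η : ℝ => om (d+1) * (1+η)^(d+1) - om (d+1)) (𝓝[>] 0)
        (𝓝 (om (d+1) * (1+0)^(d+1) - om (d+1))) :=
      tendsto_nhdsWithin_of_tendsto_nhds
        ((by fun_prop : Continuous fun η : ℝ => om (d+1) * (1+η)^(d+1) - om (d+1)).tendsto 0)
    rw [add_zero, one_pow, mul_one, sub_self] at hlim
    obtain ⟨η, hη1, hη2⟩ := ((hlim.eventually_lt_const (half_pos hε)).and eventually_mem_nhdsWithin).exists
    have hη0 : 0 < η := hη2
    filter_upwards [(step η hη0).eventually_lt_const (half_pos hε)] with j hj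
    have hsub : E j \ closedBall (z j) 1 ⊆ (E j \ closedBall (z j) (1+η)) ∪ (closedBall (z j) (1+η) \ closedBall (z j) 1) := by
      rintro x ⟨hx, hn⟩
      by_cases hx2 : x ∈ closedBall (z j) (1+η)
      · exact Or.inr ⟨hx2, hn⟩
      · exact Or.inl ⟨hx, hx2⟩
    have h1 := measureReal_mono (μ := volume) hsub (measure_union_ne_top
      (measure_ne_top_of_subset sdiff_subset (hEf j)) (measure_ne_top_of_subset sdiff_subset (hBf _ _)))
    have h2 := measureReal_union_le (μ := volume) (E j \ closedBall (z j) (1+η)) (closedBall (z j) (1+η) \ closedBall (z j) 1)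
    rw [measureReal_sdiff (closedBall_subset_closedBall (by linarith)) measurableSet_closedBall (hBf _ _),
      hBr _ _ (by linarith), hBr _ _ zero_le_one, one_pow, mul_one] at h2
    linarith
  have hsd : ∀ j, volume (symmDiff (E j) (closedBall (z j) 1)) = ENNReal.ofReal (2 * volume.real (E j \ closedBall (z j) 1)) := by
    intro j
    have hB := measurableSet_closedBall (x := z j) (ε := (1:ℝ))
    have e1 := measureReal_inter_add_sdiff (μ := volume) (s := E j) hB (hEf j)
    have e2 := measureReal_inter_add_sdiff (μ := volume) (s := closedBall (z j) 1) (hE j) (hBf _ _)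
    rw [hEr] at e1
    rw [hBr _ _ zero_le_one, one_pow, mul_one, inter_comm] at e2
    have e3 : volume.real (closedBall (z j) 1 \ E j) = volume.real (E j \ closedBall (z j) 1) := by linarith
    rw [Set.symmDiff_def, measure_union (disjoint_sdiff_sdiff) (hB.diff (hE j)), two_mul,
      ENNReal.ofReal_add measureReal_nonneg measureReal_nonneg]
    congr 1
    · rw [Measure.real, ENNReal.ofReal_toReal (measure_ne_top_of_subset sdiff_subset (hEf j))]
    · rw [← e3, Measure.real, ENNReal.ofReal_toReal (measure_ne_top_of_subset sdiff_subset (hBf _ _))]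
  simp only [hsd]
  have := ENNReal.tendsto_ofReal (hone.const_mul 2)
  simpa using this

end Iso

namespace Iso
open MeasureTheory Filter Set Metric
open scoped ENNReal NNReal Topology Pointwise

lemma main_unit {d : ℕ} (hd : 1 ≤ d) {F : ℕ → Set (V (d+1))} (hF : ∀ j, MeasurableSet (F j))
    (hv : ∀ j, volume (F j) = ENNReal.ofReal (om (d+1)))
    (hl : Tendsto (fun j => μH[(d:ℝ)] (frontier (F j))) atTop
      (𝓝 (μH[(d:ℝ)] (sphere (0 : V (d+1)) 1)))) :
    ∃ z : ℕ → V (d+1), Tendsto (fun j => volume (symmDiff (F j) (closedBall (z j) 1)))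
      atTop (𝓝 0) := by
  have hfin : μH[(d:ℝ)] (sphere (0 : V (d+1)) 1) < ⊤ :=
    (sphere_le d).trans_lt (ENNReal.mul_lt_top (kap_top d).lt_top ENNReal.ofReal_lt_top)
  have hev := hl.eventually (gt_mem_nhds hfin)
  obtain ⟨N, hN⟩ := eventually_atTop.1 hev
  have hS : ∀ j, μH[(d:ℝ)] (frontier (F (j+N))) ≠ ⊤ := fun j => (hN (j+N) (by omega)).ne
  have hki : (kap d)⁻¹ ≠ ⊤ := ENNReal.inv_ne_top.2 (kap_ne d)
  have hlim : Tendsto (fun j => ((kap d)⁻¹ * μH[(d:ℝ)] (frontier (F (j+N)))).toReal) atTop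
      (𝓝 ((kap d)⁻¹ * μH[(d:ℝ)] (sphere (0 : V (d+1)) 1)).toReal) := by
    refine (ENNReal.tendsto_toReal (ENNReal.mul_ne_top hki hfin.ne)).comp ?_
    exact ENNReal.Tendsto.const_mul ((tendsto_add_atTop_iff_nat N).2 hl) (Or.inr hki)
  have hs0 : ((kap d)⁻¹ * μH[(d:ℝ)] (sphere (0 : V (d+1)) 1)).toReal ≤
      ((d:ℝ)+1) * om (d+1) := by
    refine ENNReal.toReal_le_of_le_ofReal (mul_nonneg (by positivity) (om_pos _).le) ?_
    calc (kap d)⁻¹ * μH[(d:ℝ)] (sphere (0 : V (d+1)) 1)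
        ≤ (kap d)⁻¹ * (kap d * ENNReal.ofReal (((d:ℝ)+1) * om (d+1))) := by
          gcongr; exact sphere_le d
      _ = _ := by rw [← mul_assoc, ENNReal.inv_mul_cancel (kap_ne d) (kap_top d), one_mul]
  obtain ⟨z, hz⟩ := to_center (E := fun j => F (j+N)) hd (fun j => hF _) (fun j => hv _)
    (fun θ hθ => dir (E := fun j => F (j+N)) hd (fun j => hF _) (fun j => hv _) hS hs0 hlim hθ)
  have hb := to_ball (E := fun j => F (j+N)) (fun j => hF _) (fun j => hv _) hz
  refine ⟨fun j => z (j - N), (tendsto_add_atTop_iff_nat N).1 ?_⟩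
  simpa using hb

lemma frontier_sm {m : ℕ} {r : ℝ} (hr : r ≠ 0) (s : Set (V m)) :
    frontier (r • s) = r • frontier s :=
  ((Homeomorph.smulOfNeZero r hr).image_frontier s).symm

lemma main_scale {d : ℕ} (hd : 1 ≤ d) {E : ℕ → Set (V (d+1))} (hE : ∀ j, MeasurableSet (E j))
    (hpos : ∀ j, 0 < volume (E j)) (hfin : ∀ j, volume (E j) < ⊤) {α : ℝ}
    (hα : α * ((d:ℝ)+1) = d)
    (hl : Tendsto (fun j => μH[(d:ℝ)] (frontier (E j)) / volume (E j) ^ α) atTop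
      (𝓝 (μH[(d:ℝ)] (sphere (0 : V (d+1)) 1) /
        volume (closedBall (0 : V (d+1)) 1) ^ α))) :
    ∃ (p : ℕ → V (d+1)) (R : ℕ → ℝ),
      Tendsto (fun j => volume (symmDiff (E j) (closedBall (p j) (R j))) / volume (E j))
        atTop (𝓝 0) := by
  have hω := om_pos (d+1)
  have hα0 : 0 ≤ α := by
    by_contra h
    push Not at h
    have : α * ((d:ℝ)+1) < 0 := mul_neg_of_neg_of_pos h (by positivity)
    rw [hα] at this
    exact absurd this (not_lt.2 (Nat.cast_nonneg d))
  have hex : ∀ j, ∃ r : ℝ, 0 < r ∧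
      volume (E j) = ENNReal.ofReal (r ^ (d+1)) * ENNReal.ofReal (om (d+1)) := by
    intro j
    have hp : 0 < (volume (E j)).toReal := ENNReal.toReal_pos (hpos j).ne' (hfin j).ne
    refine ⟨((volume (E j)).toReal / om (d+1)) ^ (((d+1:ℕ):ℝ)⁻¹), by positivity, ?_⟩
    rw [Real.rpow_inv_natCast_pow (by positivity) (by omega), ← ENNReal.ofReal_mul (by positivity),
      div_mul_cancel₀ _ hω.ne', ENNReal.ofReal_toReal (hfin j).ne]
  choose r hr hvr using hex
  have hsm : ∀ j (s : Set (V (d+1))), volume (r j • s) = ENNReal.ofReal (r j ^ (d+1)) * volume s := by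
    intro j s
    have := hr j
    rw [Measure.addHaar_smul, abs_of_pos (by positivity)]
    simp
  have hrp : ∀ j, ENNReal.ofReal (r j ^ (d+1)) ≠ 0 := fun j => by
    have := hr j
    rw [ne_eq, ENNReal.ofReal_eq_zero, not_le]; positivity
  set F : ℕ → Set (V (d+1)) := fun j => (r j)⁻¹ • E j with hFdef
  have hEF : ∀ j, E j = r j • F j := fun j => (smul_inv_smul₀ (hr j).ne' _).symm
  have hF : ∀ j, MeasurableSet (F j) := fun j => (hE j).const_smul₀ _
  have hv : ∀ j, volume (F j) = ENNReal.ofReal (om (d+1)) := by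
    intro j
    have h1 := hvr j
    rw [hEF j, hsm] at h1
    exact (ENNReal.mul_right_inj (hrp j) ENNReal.ofReal_ne_top).1 h1
  have hW : volume (closedBall (0 : V (d+1)) 1) = ENNReal.ofReal (om (d+1)) := by
    rw [Measure.addHaar_closedBall_eq_addHaar_ball, vol_ball (by omega) _ zero_le_one]
    simp
  set W := ENNReal.ofReal (om (d+1)) with hWdef
  have hW0 : W ≠ 0 := by simpa [hWdef] using hω
  have hWt : W ≠ ⊤ := ENNReal.ofReal_ne_top
  have hWa0 : W ^ α ≠ 0 := by
    simp [ENNReal.rpow_eq_zero_iff, hW0, hWt]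
  have hWat : W ^ α ≠ ⊤ := ENNReal.rpow_ne_top_of_nonneg hα0 hWt
  have hratio : ∀ j, μH[(d:ℝ)] (frontier (E j)) / volume (E j) ^ α
      = μH[(d:ℝ)] (frontier (F j)) / W ^ α := by
    intro j
    have hrj := hr j
    have h1 : μH[(d:ℝ)] (frontier (E j)) = ENNReal.ofReal (r j ^ d) * μH[(d:ℝ)] (frontier (F j)) := by
      rw [hEF j, frontier_sm hrj.ne', Measure.hausdorffMeasure_smul₀ (Nat.cast_nonneg d) hrj.ne',
        NNReal.rpow_natCast, ENNReal.smul_def, smul_eq_mul]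
      congr 1
      rw [ENNReal.coe_pow, ENNReal.ofReal_pow hrj.le, ← enorm_eq_nnnorm, Real.enorm_eq_ofReal hrj.le]
    have h2 : volume (E j) ^ α = ENNReal.ofReal (r j ^ d) * W ^ α := by
      rw [hvr j, ENNReal.mul_rpow_of_nonneg _ _ hα0]
      congr 1
      rw [ENNReal.ofReal_rpow_of_pos (by positivity), ← Real.rpow_natCast, ← Real.rpow_mul hrj.le,
        ← Real.rpow_natCast]
      congr 2
      push_cast
      linarith
    rw [h1, h2, ENNReal.mul_div_mul_left]
    · rw [ne_eq, ENNReal.ofReal_eq_zero, not_le]; positivity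
    · exact ENNReal.ofReal_ne_top
  have hl2 : Tendsto (fun j => μH[(d:ℝ)] (frontier (F j))) atTop
      (𝓝 (μH[(d:ℝ)] (sphere (0 : V (d+1)) 1))) := by
    simp only [hratio, hW] at hl
    have h3 := ENNReal.Tendsto.mul_const hl (b := W ^ α) (Or.inr hWat)
    simpa only [ENNReal.div_mul_cancel hWa0 hWat] using h3
  obtain ⟨z, hz⟩ := main_unit hd hF hv hl2
  refine ⟨fun j => r j • z j, r, ?_⟩
  have h4 : ∀ j, volume (symmDiff (E j) (closedBall (r j • z j) (r j))) / volume (E j)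
      = volume (symmDiff (F j) (closedBall (z j) 1)) / W := by
    intro j
    have hb : closedBall (r j • z j) (r j) = r j • closedBall (z j) 1 := by
      rw [_root_.smul_closedBall _ _ zero_le_one, Real.norm_of_nonneg (hr j).le, mul_one]
    have hs : symmDiff (E j) (closedBall (r j • z j) (r j))
        = r j • symmDiff (F j) (closedBall (z j) 1) := by
      rw [Set.smul_set_symmDiff₀ (hr j).ne', ← hEF j, hb]
    rw [hs, hsm, hvr j, ENNReal.mul_div_mul_left _ _ (hrp j) ENNReal.ofReal_ne_top]
  simp only [h4]
  have h5 := ENNReal.Tendsto.div_const hz (b := W) (Or.inr hW0)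
  simpa using h5

end Iso


open MeasureTheory Filter
open scoped ENNReal

/-- A sequence of measurable sets whose isoperimetric ratio tends to the
Euclidean isoperimetric constant `c_n` is close to balls in relative volume. -/
theorem stmt_9 (n : ℕ) (hn : 2 ≤ n) (E : ℕ → Set (EuclideanSpace ℝ (Fin n)))
    (hmeas : ∀ j, MeasurableSet (E j))
    (hpos : ∀ j, 0 < volume (E j)) (hfin : ∀ j, volume (E j) < ⊤)
    (hiso :
      Filter.Tendsto
        (fun j =>
          μH[(n : ℝ) - 1] (frontier (E j)) / (volume (E j)) ^ (((n : ℝ) - 1) / n))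
        Filter.atTop
        (nhds (μH[(n : ℝ) - 1] (Metric.sphere (0 : EuclideanSpace ℝ (Fin n)) 1) /
          (volume (Metric.closedBall (0 : EuclideanSpace ℝ (Fin n)) 1)) ^ (((n : ℝ) - 1) / n)))) :
    ∃ (p : ℕ → EuclideanSpace ℝ (Fin n)) (R : ℕ → ℝ),
      Filter.Tendsto
        (fun j => volume (symmDiff (E j) (Metric.closedBall (p j) (R j))) / volume (E j))
        Filter.atTop (nhds 0) := by
  obtain ⟨d, rfl⟩ : ∃ d, n = d + 1 := ⟨n - 1, by omega⟩
  have hc : (((d + 1 : ℕ) : ℝ) - 1) = d := by push_cast; ring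
  rw [hc] at hiso
  refine Iso.main_scale (d := d) (by omega) hmeas hpos hfin (α := (d:ℝ) / ((d + 1 : ℕ) : ℝ)) ?_ hiso
  push_cast
  field_simp
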